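/- Let J be a non-trivial subgroup of Γ_g and let Υ = J\~Σ_g be the corresponding covering space of Σ_g. Then: (1) every boundary cycle δ of Core(J) is an essential closed curve of Υ; (2) for every boundary cycle δ of Core(J), the cyclic word w(δ) it reads is cyclically shortest (i.e., of minimal length among cyclic words representing its conjugacy class in Γ_g); (3) Core(J) is strongly boundary reduced. -/

import Mathlib

/-!
Formalization preamble for "Core Surfaces" (Magee–Puder).

We work with a fixed combinatorial (CW) model.  The surface `Σ_g` has one vertex,
`2g` directed labeled edges (the label `2i` plays the role of `a_{i+1}` and `2i+1`
the role of `b_{i+1}`), and one `4g`-gon glued along `[a₁,b₁]⋯[a_g,b_g]`.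

* `Gamma g` is the surface group, presented by the single relator.
* A `Complex g` is a combinatorial 2-complex with directed, labeled edges and
  2-cells given by their boundary walks; coverings of `Σ_g` are the complexes in
  which every vertex has exactly one incoming/outgoing edge of each label, every
  walk reading the relator is closed, and every closed walk reading the relator
  bounds exactly one face (`IsCovering`).  A tiled surface is a complex that
  embeds into such a covering (`IsTiledSurface`).
* Blocks, chains, boundary cycles (via the ribbon structure coming from the fixed
  cyclic order of the `4g` half-edges around a vertex of `Σ_g`), boundary-reduced
  and strongly boundary-reduced surfaces are defined combinatorially.
* Homotopy of edge-walks is the edge-path-group homotopy: backtrack insertions and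
  insertions of boundaries of (present) faces.
* `cover g J` is the covering space `J\~Σ_g` of `Σ_g` associated to a subgroup
  `J ≤ Γ_g` (vertices = right cosets), and `coreSub g J` is the core surface of
  `J`, defined exactly as in the paper: the union of all shortest representative
  cycles of essential free-homotopy classes, together with all components of the
  complement containing finitely many `4g`-gons.
-/

noncomputable section

namespace CS

/-- Signed letters over the generators `a₁,b₁,…,a_g,b_g` of `Γ_g`
(`a_{i+1} ↦ 2i`, `b_{i+1} ↦ 2i+1`); `true` means a positive letter. -/
abbrev Letter (g : ℕ) := Fin (2 * g) × Bool

/-- The label of the `p`-th letter of the relator `[a₁,b₁][a₂,b₂]⋯[a_g,b_g]`. -/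
def relLabel (g : ℕ) (p : Fin (4 * g)) : Fin (2 * g) :=
  ⟨2 * ((p : ℕ) / 4) + ((p : ℕ) % 4) % 2, by have := p.2; omega⟩

/-- The sign of the `p`-th letter of the relator. -/
def relSign (g : ℕ) (p : Fin (4 * g)) : Bool := decide ((p : ℕ) % 4 < 2)

/-- The relator `[a₁,b₁][a₂,b₂]⋯[a_g,b_g]` as a word (list of signed letters). -/
def relatorWord (g : ℕ) : List (Letter g) :=
  (List.finRange (4 * g)).map fun p => (relLabel g p, relSign g p)

/-- The relator as an element of the free group on the `2g` generators. -/
def relatorF (g : ℕ) : FreeGroup (Fin (2 * g)) :=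
  ((relatorWord g).map fun l => if l.2 then FreeGroup.of l.1 else (FreeGroup.of l.1)⁻¹).prod

/-- The surface group `Γ_g = ⟨a₁,b₁,…,a_g,b_g ∣ [a₁,b₁]⋯[a_g,b_g]⟩`. -/
abbrev Gamma (g : ℕ) := PresentedGroup ({relatorF g} : Set (FreeGroup (Fin (2 * g))))

/-- The image of a signed letter in `Γ_g`. -/
def letterG {g : ℕ} (l : Letter g) : Gamma g :=
  if l.2 then PresentedGroup.of l.1 else (PresentedGroup.of l.1)⁻¹

/-- The image of a word in `Γ_g`. -/
def wordG {g : ℕ} (w : List (Letter g)) : Gamma g := (w.map letterG).prod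

/-- `ℓ(γ^{Γ_g})`: the minimal length of a word in the generators representing the
conjugacy class of `γ` in `Γ_g`. -/
def conjLen {g : ℕ} (γ : Gamma g) : ℕ :=
  sInf {n | ∃ w : List (Letter g), w.length = n ∧ ∃ x : Gamma g, x * wordG w * x⁻¹ = γ}

/-! ### Half-edge positions around a vertex of `Σ_g`

The `4g` half-edges around the vertex `o` of `Σ_g` come in the (clockwise) cyclic
order `a₁`-out, `b₁`-in, `a₁`-in, `b₁`-out, `a₂`-out, `b₂`-in, `a₂`-in, `b₂`-out, …
-/

/-- Position of the outgoing `ℓ`-labeled half-edge in the cyclic order. -/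
def posOut {g : ℕ} (ℓ : Fin (2 * g)) : ℕ :=
  if (ℓ : ℕ) % 2 = 0 then 2 * (ℓ : ℕ) else 2 * (ℓ : ℕ) + 1

/-- Position of the incoming `ℓ`-labeled half-edge in the cyclic order. -/
def posIn {g : ℕ} (ℓ : Fin (2 * g)) : ℕ :=
  if (ℓ : ℕ) % 2 = 0 then 2 * (ℓ : ℕ) + 2 else 2 * (ℓ : ℕ) - 1

/-- The position of the half-edge through which a traversal of a dart with signed
letter `s` *arrives* at its terminal vertex. -/
def posArr {g : ℕ} (s : Letter g) : ℕ := if s.2 then posIn s.1 else posOut s.1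

/-- The position of the half-edge through which a traversal of a dart with signed
letter `s` *leaves* its initial vertex. -/
def posLv {g : ℕ} (s : Letter g) : ℕ := if s.2 then posOut s.1 else posIn s.1

/-- The number of half-edges strictly between the arrival half-edge of `s` and the
departure half-edge of `t`, in the clockwise cyclic order of the `4g` half-edges
around a vertex. -/
def gapN {g : ℕ} (s t : Letter g) : ℕ := (posLv t + 4 * g - (posArr s + 1)) % (4 * g)

/-! ### Combinatorial complexes -/

/-- A combinatorial at-most-2-dimensional CW-complex with directed edges labeled by
the generators of `Γ_g`, and 2-cells recorded by their boundary walks (lists of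
darts, i.e. edges with a direction of traversal). -/
structure Complex (g : ℕ) where
  V : Type
  E : Type
  F : Type
  src : E → V
  dst : E → V
  lab : E → Fin (2 * g)
  bdry : F → List (E × Bool)

namespace Complex

variable {g : ℕ} (Y : Complex g)

/-- Darts: edges together with a direction of traversal (`true` = forward). -/
abbrev D := Y.E × Bool

/-- The initial vertex of a dart. -/
def dTail (d : Y.D) : Y.V := if d.2 then Y.src d.1 else Y.dst d.1

/-- The terminal vertex of a dart. -/
def dHead (d : Y.D) : Y.V := if d.2 then Y.dst d.1 else Y.src d.1

/-- The reversal of a dart. -/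
def dRev (d : Y.D) : Y.D := (d.1, !d.2)

/-- The signed letter read by a dart. -/
def dLet (d : Y.D) : Letter g := (Y.lab d.1, d.2)

/-- The word read along a list of darts. -/
def wordOf (l : List Y.D) : List (Letter g) := l.map Y.dLet

/-- The reversed walk. -/
def revW (l : List Y.D) : List Y.D := (l.map Y.dRev).reverse

/-- `WalkFrom u v l` : `l` is a walk (edge-path) from `u` to `v`. -/
inductive WalkFrom : Y.V → Y.V → List Y.D → Prop
  | nil (v : Y.V) : WalkFrom v v []
  | cons (d : Y.D) {v : Y.V} {l : List Y.D} :
      WalkFrom (Y.dHead d) v l → WalkFrom (Y.dTail d) v (d :: l)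

/-- All darts of `l` use edges from the set `sE`. -/
def InSet (sE : Set Y.E) (l : List Y.D) : Prop := ∀ d ∈ l, d.1 ∈ sE

/-- Two darts are adjacent (can be traversed consecutively). -/
def adj (d d' : Y.D) : Prop := Y.dHead d = Y.dTail d'

/-- A nonempty closed walk. -/
def IsCycle (c : List Y.D) : Prop := c ≠ [] ∧ ∃ v, Y.WalkFrom v v c

/-- **P1**: at most one incoming and at most one outgoing `ℓ`-labeled edge at every
vertex, for every label `ℓ`. -/
def P1 : Prop :=
  (∀ e e' : Y.E, Y.src e = Y.src e' → Y.lab e = Y.lab e' → e = e') ∧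
  (∀ e e' : Y.E, Y.dst e = Y.dst e' → Y.lab e = Y.lab e' → e = e')

/-- **P2**: every walk reading a word equal to `1` in `Γ_g` is closed. -/
def P2 : Prop :=
  ∀ (u v : Y.V) (l : List Y.D), Y.WalkFrom u v l → wordG (Y.wordOf l) = 1 → u = v

/-- **P3**: every 2-cell is glued along a closed walk reading the relator
`[a₁,b₁]⋯[a_g,b_g]`, and every such closed walk bounds at most one 2-cell. -/
def P3 : Prop :=
  (∀ f : Y.F, (∃ v, Y.WalkFrom v v (Y.bdry f)) ∧ Y.wordOf (Y.bdry f) = relatorWord g) ∧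
  Function.Injective Y.bdry

/-- A combinatorial covering space of `Σ_g`: every vertex has exactly one outgoing
and one incoming edge of each label, every walk reading the relator is closed, and
every closed walk reading the relator bounds exactly one `4g`-gon. -/
def IsCovering : Prop :=
  Y.P1 ∧ Y.P3 ∧
  (∀ (v : Y.V) (ℓ : Fin (2 * g)), ∃ e, Y.src e = v ∧ Y.lab e = ℓ) ∧
  (∀ (v : Y.V) (ℓ : Fin (2 * g)), ∃ e, Y.dst e = v ∧ Y.lab e = ℓ) ∧
  (∀ (u v : Y.V) (l : List Y.D), Y.WalkFrom u v l → Y.wordOf l = relatorWord g → u = v) ∧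
  (∀ (v : Y.V) (l : List Y.D), Y.WalkFrom v v l → Y.wordOf l = relatorWord g →
    ∃ f, Y.bdry f = l)

end Complex

/-- A morphism of labeled complexes: maps cells to cells of the same dimension and
respects sources, targets, labels and face boundaries (equivalently, commutes with
the immersions to `Σ_g`). -/
structure Hom {g : ℕ} (Y Z : Complex g) where
  mV : Y.V → Z.V
  mE : Y.E → Z.E
  mF : Y.F → Z.F
  hsrc : ∀ e, Z.src (mE e) = mV (Y.src e)
  hdst : ∀ e, Z.dst (mE e) = mV (Y.dst e)
  hlab : ∀ e, Z.lab (mE e) = Y.lab e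
  hbdry : ∀ f, Z.bdry (mF f) = (Y.bdry f).map fun d => (mE d.1, d.2)

namespace Hom

variable {g : ℕ} {Y Z : Complex g}

/-- The induced map on darts. -/
def mD (φ : Hom Y Z) (d : Y.D) : Z.D := (φ.mE d.1, d.2)

/-- Injectivity (an embedding of complexes). -/
def Inj (φ : Hom Y Z) : Prop :=
  Function.Injective φ.mV ∧ Function.Injective φ.mE ∧ Function.Injective φ.mF

end Hom

namespace Complex

variable {g : ℕ} (Y : Complex g)

/-- A tiled surface: a complex which embeds into a combinatorial covering space of
`Σ_g` (compatibly with directions and labels). -/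
def IsTiledSurface : Prop :=
  ∃ Z : Complex g, Z.IsCovering ∧ ∃ φ : Hom Y Z, φ.Inj

/-- Connectivity of a complex (any two vertices are joined by a walk). -/
def Connected : Prop := Nonempty Y.V ∧ ∀ v w : Y.V, ∃ l, Y.WalkFrom v w l

/-! ### Blocks and chains -/

/-- A block: a nonempty walk such that successive darts have no half-edges between
them (hence it reads a subword of the cyclic relator, of length at most `4g`). -/
def IsBlock (l : List Y.D) : Prop :=
  l ≠ [] ∧ l.length ≤ 4 * g ∧
  List.Chain' (fun d d' => Y.adj d d' ∧ gapN (Y.dLet d) (Y.dLet d') = 0) l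

/-- Two blocks are consecutive: concatenation is a walk and there is exactly one
half-edge between the last dart of the first and the first dart of the second. -/
def chainStep (b b' : List Y.D) : Prop :=
  ∃ d d', b.getLast? = some d ∧ b'.head? = some d' ∧ Y.adj d d' ∧
    gapN (Y.dLet d) (Y.dLet d') = 1

/-- A chain: a nonempty sequence of consecutive blocks. -/
def IsChain (bs : List (List Y.D)) : Prop :=
  bs ≠ [] ∧ (∀ b ∈ bs, Y.IsBlock b) ∧ List.Chain' Y.chainStep bs

/-- A cyclic chain: a chain whose blocks pave an entire cycle. -/
def IsCyclicChain (bs : List (List Y.D)) : Prop :=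
  Y.IsChain bs ∧ ∃ b b', bs.getLast? = some b ∧ bs.head? = some b' ∧ Y.chainStep b b'

/-- A long chain: a chain of consecutive blocks of lengths `2g, 2g−1, …, 2g−1, 2g`. -/
def IsLongChain (bs : List (List Y.D)) : Prop :=
  Y.IsChain bs ∧ ∃ k, bs.map List.length = 2 * g :: (List.replicate k (2 * g - 1) ++ [2 * g])

/-- A half-chain: a cyclic chain all of whose blocks have length `2g − 1`. -/
def IsHalfChain (bs : List (List Y.D)) : Prop :=
  Y.IsCyclicChain bs ∧ ∀ b ∈ bs, b.length = 2 * g - 1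

/-! ### Boundary cycles of the thick version (relative to sets of present edges and
faces), via the ribbon structure -/

/-- `nextD sE d d'`: among darts (with edge in `sE`) leaving the head of `d`, the
dart `d'` is the first one in clockwise order after the arrival half-edge of `d`.
This is the successor map whose orbits trace the boundary components of the thick
version of the ribbon graph. -/
def nextD (sE : Set Y.E) (d d' : Y.D) : Prop :=
  d'.1 ∈ sE ∧ Y.adj d d' ∧
  ∀ d'' : Y.D, d''.1 ∈ sE → Y.adj d d'' →
    gapN (Y.dLet d) (Y.dLet d') ≤ gapN (Y.dLet d) (Y.dLet d'')

/-- The corner between the consecutive darts `d, d'` is filled by a face from `sF`. -/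
def faceStep (sF : Set Y.F) (d d' : Y.D) : Prop :=
  ∃ f ∈ sF, [d, d'] <:+: (Y.bdry f ++ Y.bdry f)

/-- One step along the boundary of the thick version. -/
def bStep (sE : Set Y.E) (sF : Set Y.F) (d d' : Y.D) : Prop :=
  d.1 ∈ sE ∧ Y.nextD sE d d' ∧ ¬ Y.faceStep sF d d'

/-- A (finite segment of a) boundary cycle of the thick version. -/
def BPath (sE : Set Y.E) (sF : Set Y.F) (l : List Y.D) : Prop :=
  l ≠ [] ∧ Y.InSet sE l ∧ List.Chain' (Y.bStep sE sF) l

/-- A (finite) boundary cycle of the thick version. -/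
def BCycle (sE : Set Y.E) (sF : Set Y.F) (l : List Y.D) : Prop :=
  Y.BPath sE sF l ∧ ∃ d d', l.getLast? = some d ∧ l.head? = some d' ∧ Y.bStep sE sF d d'

/-- A dart lying on the boundary of the thick version. -/
def IsBDart (sE : Set Y.E) (sF : Set Y.F) (d : Y.D) : Prop :=
  d.1 ∈ sE ∧ ∃ d', Y.nextD sE d d' ∧ ¬ Y.faceStep sF d d'

/-- Boundary reduced: no boundary cycle contains a long block (length `≥ 2g+1`) or
a long chain. -/
def BoundaryReduced (sE : Set Y.E) (sF : Set Y.F) : Prop :=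
  (∀ l, Y.BPath sE sF l → ¬ (Y.IsBlock l ∧ 2 * g + 1 ≤ l.length)) ∧
  (∀ bs, Y.IsLongChain bs → ¬ Y.BPath sE sF bs.flatten)

/-- Strongly boundary reduced: no boundary cycle contains a half-block (length
exactly `2g`) or a half-chain. -/
def StronglyBoundaryReduced (sE : Set Y.E) (sF : Set Y.F) : Prop :=
  (∀ l, Y.BPath sE sF l → ¬ (Y.IsBlock l ∧ l.length = 2 * g)) ∧
  (∀ bs, Y.IsHalfChain bs → ¬ Y.BCycle sE sF bs.flatten)

/-! ### Combinatorial homotopy of walks -/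

/-- A closed walk traversing the boundary of a face from `sF` (in either direction,
starting anywhere). -/
def faceLoop (sF : Set Y.F) (b : List Y.D) : Prop :=
  ∃ f ∈ sF, ∃ n, b = (Y.bdry f).rotate n ∨ b = Y.revW ((Y.bdry f).rotate n)

/-- Elementary homotopy move: insertion of a backtrack or of a face boundary. -/
def elemMove (sE : Set Y.E) (sF : Set Y.F) (l l' : List Y.D) : Prop :=
  (∃ (l₁ l₂ : List Y.D) (d : Y.D), d.1 ∈ sE ∧ l = l₁ ++ l₂ ∧ l' = l₁ ++ d :: Y.dRev d :: l₂) ∨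
  (∃ l₁ l₂ b, Y.faceLoop sF b ∧ l = l₁ ++ l₂ ∧ l' = l₁ ++ b ++ l₂)

/-- Homotopy (rel endpoints) of walks from `u` to `v`, inside the subcomplex with
edge set `sE` and face set `sF`. -/
def Homotopic (sE : Set Y.E) (sF : Set Y.F) (u v : Y.V) (c c' : List Y.D) : Prop :=
  Relation.EqvGen
    (fun a b =>
      Y.WalkFrom u v a ∧ Y.WalkFrom u v b ∧ Y.InSet sE a ∧ Y.InSet sE b ∧
        (Y.elemMove sE sF a b ∨ Y.elemMove sE sF b a)) c c'

/-- A closed walk which is null-homotopic. -/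
def NullHomotopic (sE : Set Y.E) (sF : Set Y.F) (c : List Y.D) : Prop :=
  ∃ v, Y.WalkFrom v v c ∧ Y.Homotopic sE sF v v c []

/-- An essential cycle: a nonempty closed walk which is not null-homotopic. -/
def Essential (sE : Set Y.E) (sF : Set Y.F) (c : List Y.D) : Prop :=
  Y.IsCycle c ∧ Y.InSet sE c ∧ ¬ Y.NullHomotopic sE sF c

/-- Free homotopy of closed walks. -/
def FreelyHomotopic (sE : Set Y.E) (sF : Set Y.F) (c c' : List Y.D) : Prop :=
  ∃ u v q, Y.WalkFrom u u c ∧ Y.WalkFrom v v c' ∧ Y.WalkFrom u v q ∧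
    Y.InSet sE q ∧ Y.InSet sE c ∧ Y.InSet sE c' ∧
    Y.Homotopic sE sF u u c (q ++ c' ++ Y.revW q)

/-- `c` is a shortest representative of its free homotopy class. -/
def ShortestRep (sE : Set Y.E) (sF : Set Y.F) (c : List Y.D) : Prop :=
  ∀ c', Y.FreelyHomotopic sE sF c c' → c.length ≤ c'.length

end Complex

/-- `s` occurs as a contiguous subword of the cyclic word `c`. -/
def cycContains {α : Type*} (c s : List α) : Prop :=
  s ≠ [] ∧ s.length ≤ c.length ∧ s <:+: (c ++ c)

namespace Complex

variable {g : ℕ} (Y : Complex g)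

/-- The cycle `c` contains no long block and no long chain. -/
def NoLongBlockOrChainCyc (c : List Y.D) : Prop :=
  (∀ s, cycContains c s → ¬ (Y.IsBlock s ∧ 2 * g + 1 ≤ s.length)) ∧
  (∀ bs, Y.IsLongChain bs → ¬ cycContains c bs.flatten)

/-- A (cyclically) non-backtracking cycle. -/
def NonBacktrackingCyc (c : List Y.D) : Prop :=
  ¬ ∃ d : Y.D, cycContains c [d, Y.dRev d]

/-- A cycle which is essential and a shortest representative of its
free homotopy class. -/
def GoodCycle (c : List Y.D) : Prop :=
  Y.IsCycle c ∧ Y.Essential Set.univ Set.univ c ∧ Y.ShortestRep Set.univ Set.univ c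

/-! ### Cells and components of complements -/

/-- The cells of a complex. -/
def Cell := Y.V ⊕ Y.E ⊕ Y.F

def vCell (v : Y.V) : Y.Cell := Sum.inl v
def eCell (e : Y.E) : Y.Cell := Sum.inr (Sum.inl e)
def fCell (f : Y.F) : Y.Cell := Sum.inr (Sum.inr f)

/-- Basic incidence of (open) cells. -/
def inc0 : Y.Cell → Y.Cell → Prop := fun c c' =>
  match c, c' with
  | Sum.inl v, Sum.inr (Sum.inl e) => Y.src e = v ∨ Y.dst e = v
  | Sum.inl v, Sum.inr (Sum.inr f) => ∃ d ∈ Y.bdry f, Y.dTail d = v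
  | Sum.inr (Sum.inl e), Sum.inr (Sum.inr f) => ∃ b, (e, b) ∈ Y.bdry f
  | _, _ => False

/-- Symmetrized incidence of cells. -/
def incid (c c' : Y.Cell) : Prop := Y.inc0 c c' ∨ Y.inc0 c' c

end Complex

/-- A triple of subsets of the cells of a complex `Y` (a prospective subcomplex). -/
structure SubC {g : ℕ} (Y : Complex g) where
  sV : Set Y.V
  sE : Set Y.E
  sF : Set Y.F

namespace SubC

variable {g : ℕ} {Y : Complex g}

/-- `S` is an actual subcomplex: closed under taking boundaries of cells. -/
def IsSub (S : SubC Y) : Prop :=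
  (∀ e ∈ S.sE, Y.src e ∈ S.sV ∧ Y.dst e ∈ S.sV) ∧
  (∀ f ∈ S.sF, ∀ d ∈ Y.bdry f, d.1 ∈ S.sE)

/-- Containment of subcomplexes. -/
def le (S T : SubC Y) : Prop := S.sV ⊆ T.sV ∧ S.sE ⊆ T.sE ∧ S.sF ⊆ T.sF

/-- Compactness: finitely many cells. -/
def Compact (S : SubC Y) : Prop := S.sV.Finite ∧ S.sE.Finite ∧ S.sF.Finite

/-- Connectivity of the subcomplex. -/
def Connected (S : SubC Y) : Prop :=
  S.sV.Nonempty ∧ ∀ v ∈ S.sV, ∀ w ∈ S.sV, ∃ l, Y.WalkFrom v w l ∧ Y.InSet S.sE l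

/-- Image of a subcomplex under a morphism. -/
def image {Z : Complex g} (φ : Hom Y Z) (S : SubC Y) : SubC Z :=
  ⟨φ.mV '' S.sV, φ.mE '' S.sE, φ.mF '' S.sF⟩

end SubC

/-- The whole complex, as a subcomplex of itself. -/
def fullSub {g : ℕ} (Y : Complex g) : SubC Y := ⟨Set.univ, Set.univ, Set.univ⟩

namespace Complex

variable {g : ℕ} (Y : Complex g)

/-- Membership of a cell in a subcomplex. -/
def inSub (S : SubC Y) : Y.Cell → Prop := fun c =>
  match c with
  | Sum.inl v => v ∈ S.sV
  | Sum.inr (Sum.inl e) => e ∈ S.sE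
  | Sum.inr (Sum.inr f) => f ∈ S.sF

/-- Reachability of cells through the open complement of the subcomplex `S`
(= lying in the same connected component of the complement). -/
def reachS (S : SubC Y) (c c' : Y.Cell) : Prop :=
  Relation.ReflTransGen (fun a b => Y.incid a b ∧ ¬ Y.inSub S a ∧ ¬ Y.inSub S b) c c'

end Complex

/-- The closure (as a subcomplex) of the connected component of the cell `c₀` in the
complement of the subcomplex `S`. -/
def compCl {g : ℕ} (Y : Complex g) (S : SubC Y) (c₀ : Y.Cell) : SubC Y :=
  let cF : Set Y.F := {f | Y.reachS S c₀ (Y.fCell f)}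
  let cE : Set Y.E :=
    {e | Y.reachS S c₀ (Y.eCell e)} ∪ {e | ∃ f ∈ cF, ∃ b, (e, b) ∈ Y.bdry f}
  let cV : Set Y.V :=
    {v | Y.reachS S c₀ (Y.vCell v)} ∪ {v | ∃ e ∈ cE, Y.src e = v ∨ Y.dst e = v}
  ⟨cV, cE, cF⟩

/-- The subcomplex has exactly one boundary cycle (which covers all boundary darts). -/
def OneBdry {g : ℕ} (Y : Complex g) (S : SubC Y) : Prop :=
  ∃ δ, Y.BCycle S.sE S.sF δ ∧ ∀ d, Y.IsBDart S.sE S.sF d → d ∈ δ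

/-- The subcomplex has exactly two (disjoint) boundary cycles, covering all
boundary darts. -/
def TwoBdry {g : ℕ} (Y : Complex g) (S : SubC Y) : Prop :=
  ∃ δ₁ δ₂, Y.BCycle S.sE S.sF δ₁ ∧ Y.BCycle S.sE S.sF δ₂ ∧ δ₁.Disjoint δ₂ ∧
    ∀ d, Y.IsBDart S.sE S.sF d → d ∈ δ₁ ∨ d ∈ δ₂

/-- The boundary-reduced closure of `S` inside `Y`: the intersection of all
intermediate boundary reduced subcomplexes. -/
def BRcl {g : ℕ} (Y : Complex g) (S : SubC Y) : SubC Y where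
  sV := ⋂ T ∈ {T : SubC Y | T.IsSub ∧ S.le T ∧ Y.BoundaryReduced T.sE T.sF}, T.sV
  sE := ⋂ T ∈ {T : SubC Y | T.IsSub ∧ S.le T ∧ Y.BoundaryReduced T.sE T.sF}, T.sE
  sF := ⋂ T ∈ {T : SubC Y | T.IsSub ∧ S.le T ∧ Y.BoundaryReduced T.sE T.sF}, T.sF

/-- The strongly-boundary-reduced closure of `S` inside `Y`. -/
def SBRcl {g : ℕ} (Y : Complex g) (S : SubC Y) : SubC Y where
  sV := ⋂ T ∈ {T : SubC Y | T.IsSub ∧ S.le T ∧ Y.StronglyBoundaryReduced T.sE T.sF}, T.sV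
  sE := ⋂ T ∈ {T : SubC Y | T.IsSub ∧ S.le T ∧ Y.StronglyBoundaryReduced T.sE T.sF}, T.sE
  sF := ⋂ T ∈ {T : SubC Y | T.IsSub ∧ S.le T ∧ Y.StronglyBoundaryReduced T.sE T.sF}, T.sF

/-- An isomorphism between the subcomplex `S` of `Y` and the subcomplex `T` of `Z`. -/
structure SubEquiv {g : ℕ} (Y : Complex g) (S : SubC Y) (Z : Complex g) (T : SubC Z) where
  fV : Y.V → Z.V
  fE : Y.E → Z.E
  fF : Y.F → Z.F
  bijV : Set.BijOn fV S.sV T.sV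
  bijE : Set.BijOn fE S.sE T.sE
  bijF : Set.BijOn fF S.sF T.sF
  hsrc : ∀ e ∈ S.sE, Z.src (fE e) = fV (Y.src e)
  hdst : ∀ e ∈ S.sE, Z.dst (fE e) = fV (Y.dst e)
  hlab : ∀ e ∈ S.sE, Z.lab (fE e) = Y.lab e
  hbdry : ∀ f ∈ S.sF, Z.bdry (fF f) = (Y.bdry f).map fun d => (fE d.1, d.2)

/-- `FunnelComponent Y S c₀`: the connected component of the cell `c₀` in the
complement of the subcomplex `S` is a twice-punctured sphere with one funnel and
one fake-puncture.  Rendered combinatorially: the component contains infinitely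
many `4g`-gons (the funnel); there is a boundary cycle `δ` of `S` adjacent to the
component, it is unique (one fake-puncture), and every closed walk inside the
closure of the component is freely homotopic there to a power of `δ` or of its
inverse (so the closure is a half-open annulus bounded by `δ`). -/
def FunnelComponent {g : ℕ} (Y : Complex g) (S : SubC Y) (c₀ : Y.Cell) : Prop :=
  {f : Y.F | Y.reachS S c₀ (Y.fCell f)}.Infinite ∧
  ∃ δ : List Y.D, Y.BCycle S.sE S.sF δ ∧
    (∃ d ∈ δ, ∃ c', Y.incid (Y.eCell d.1) c' ∧ Y.reachS S c₀ c') ∧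
    (∀ δ', Y.BCycle S.sE S.sF δ' →
      (∃ d ∈ δ', ∃ c', Y.incid (Y.eCell d.1) c' ∧ Y.reachS S c₀ c') →
      ∃ n, δ' = δ.rotate n) ∧
    (∀ (v : Y.V) (l : List Y.D), Y.WalkFrom v v l →
      Y.InSet ({e | Y.reachS S c₀ (Y.eCell e)} ∪ {e | ∃ b, (e, b) ∈ δ}) l →
      ∃ n,
        Y.FreelyHomotopic ({e | Y.reachS S c₀ (Y.eCell e)} ∪ {e | ∃ b, (e, b) ∈ δ})
          {f | Y.reachS S c₀ (Y.fCell f)} l ((List.replicate n δ).flatten) ∨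
        Y.FreelyHomotopic ({e | Y.reachS S c₀ (Y.eCell e)} ∪ {e | ∃ b, (e, b) ∈ δ})
          {f | Y.reachS S c₀ (Y.fCell f)} l ((List.replicate n (Y.revW δ)).flatten))

/-- `Y` contains a funnel: an essential cycle `δ` of `Y` cutting off an infinite
region of `Y` which is attached to the rest of `Y` only along `δ`, contains no
boundary of `Y`, and is a half-open annulus (every loop inside is freely homotopic
to a power of `δ`); i.e. an end of `Y` which is a puncture of the ambient covering. -/
def HasFunnel {g : ℕ} (Y : Complex g) : Prop :=
  ∃ (δ : List Y.D) (sE : Set Y.E) (sF : Set Y.F),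
    Y.IsCycle δ ∧ Y.Essential Set.univ Set.univ δ ∧
    (∀ d ∈ δ, d.1 ∉ sE) ∧ sE.Nonempty ∧ sF.Infinite ∧
    (∀ f ∈ sF, ∀ d ∈ Y.bdry f, d.1 ∈ sE ∨ ∃ b, (d.1, b) ∈ δ) ∧
    (∀ f : Y.F, (∃ d ∈ Y.bdry f, d.1 ∈ sE) → f ∈ sF) ∧
    (∀ d : Y.D, d.1 ∈ sE → ¬ Y.IsBDart Set.univ Set.univ d) ∧
    (∀ v : Y.V, (∃ e ∈ sE, Y.src e = v ∨ Y.dst e = v) → (∀ d ∈ δ, Y.dTail d ≠ v) →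
      ∀ e' : Y.E, (Y.src e' = v ∨ Y.dst e' = v) → e' ∈ sE) ∧
    (∀ (v : Y.V) (l : List Y.D), Y.WalkFrom v v l →
      Y.InSet (sE ∪ {e | ∃ b, (e, b) ∈ δ}) l →
      ∃ n,
        Y.FreelyHomotopic (sE ∪ {e | ∃ b, (e, b) ∈ δ}) sF l
          ((List.replicate n δ).flatten) ∨
        Y.FreelyHomotopic (sE ∪ {e | ∃ b, (e, b) ∈ δ}) sF l
          ((List.replicate n (Y.revW δ)).flatten))

/-- The fundamental group of `Y` is cyclic: some closed walk `c` generates all free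
homotopy classes of loops.  (For a connected surface this is *equivalent to NOT
having genus ≥ 1 or at least 3 boundary components/punctures*.) -/
def CyclicPi1 {g : ℕ} (Y : Complex g) : Prop :=
  ∃ c : List Y.D, ∀ (v : Y.V) (l : List Y.D), Y.WalkFrom v v l →
    ∃ n,
      Y.FreelyHomotopic Set.univ Set.univ l ((List.replicate n c).flatten) ∨
      Y.FreelyHomotopic Set.univ Set.univ l ((List.replicate n (Y.revW c)).flatten)

/-! ### The covering space `J\~Σ_g` and the core surface of `J` -/

/-- Right cosets `Jx` of `J` in `Γ_g` — the vertices (and faces) of `J\~Σ_g`. -/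
abbrev Cos (g : ℕ) (J : Subgroup (Gamma g)) := Quotient (QuotientGroup.rightRel J)

/-- The coset `Jx`. -/
def mkCos (g : ℕ) (J : Subgroup (Gamma g)) (x : Gamma g) : Cos g J :=
  Quotient.mk _ x

/-- Right multiplication on right cosets. -/
def rmul (g : ℕ) (J : Subgroup (Gamma g)) (x : Gamma g) : Cos g J → Cos g J :=
  Quotient.map (· * x) (by
    intro a b hab
    have h1 : b * a⁻¹ ∈ J := QuotientGroup.rightRel_apply.mp hab
    refine QuotientGroup.rightRel_apply.mpr ?_
    have h2 : b * x * (a * x)⁻¹ = b * a⁻¹ := by group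
    rw [h2]; exact h1)

/-- The walk in `J\~Σ_g` starting at a vertex and reading a given word. -/
def relWalk (g : ℕ) (J : Subgroup (Gamma g)) :
    Cos g J → List (Letter g) → List ((Cos g J × Fin (2 * g)) × Bool)
  | _, [] => []
  | v, (ℓ, true) :: w =>
      ((v, ℓ), true) :: relWalk g J (rmul g J (PresentedGroup.of ℓ) v) w
  | v, (ℓ, false) :: w =>
      ((rmul g J (PresentedGroup.of ℓ)⁻¹ v, ℓ), false) ::
        relWalk g J (rmul g J (PresentedGroup.of ℓ)⁻¹ v) w

/-- The covering space `Υ = J\~Σ_g` of `Σ_g` corresponding to the subgroup `J`,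
with the CW-structure pulled back from `Σ_g`: vertices and `4g`-gons are the right
cosets of `J`, and each vertex carries one outgoing edge per label. -/
def cover (g : ℕ) (J : Subgroup (Gamma g)) : Complex g where
  V := Cos g J
  E := Cos g J × Fin (2 * g)
  F := Cos g J
  src e := e.1
  dst e := rmul g J (PresentedGroup.of e.2) e.1
  lab e := e.2
  bdry v := relWalk g J v (relatorWord g)

/-- The map `J₁\~Σ_g → J₂\~Σ_g` on vertices, for `J₁ ≤ J₂`. -/
def coverMapV {g : ℕ} {J₁ J₂ : Subgroup (Gamma g)} (h : J₁ ≤ J₂) :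
    Cos g J₁ → Cos g J₂ :=
  Quotient.map id (by
    intro a b hab
    have h1 : b * a⁻¹ ∈ J₁ := QuotientGroup.rightRel_apply.mp hab
    exact QuotientGroup.rightRel_apply.mpr (h h1))

/-- The natural covering morphism on edges. -/
def coverMapE {g : ℕ} {J₁ J₂ : Subgroup (Gamma g)} (h : J₁ ≤ J₂)
    (e : (cover g J₁).E) : (cover g J₂).E :=
  (coverMapV h e.1, e.2)

/-- The natural covering morphism on darts. -/
def coverMapD {g : ℕ} {J₁ J₂ : Subgroup (Gamma g)} (h : J₁ ≤ J₂)
    (d : (cover g J₁).D) : (cover g J₂).D :=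
  (coverMapE h d.1, d.2)

/-- The cycle `c` in `J\~Σ_g` represents the conjugacy class of `γ` in `J`
(conjugacy classes in `J` ↔ free homotopy classes of essential loops in `J\~Σ_g`). -/
def RepCls {g : ℕ} (J : Subgroup (Gamma g)) (c : List ((cover g J).D))
    (γ : Gamma g) : Prop :=
  ∃ x j : Gamma g, j ∈ J ∧
    (cover g J).WalkFrom (mkCos g J x) (mkCos g J x) c ∧
    x * wordG ((cover g J).wordOf c) * x⁻¹ = j * γ * j⁻¹

/-- Step (i) of the definition of the core surface: the edges lying on some
shortest representative cycle of an essential free homotopy class. -/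
def coreE1 (g : ℕ) (J : Subgroup (Gamma g)) : Set (cover g J).E :=
  {e | ∃ c, (cover g J).GoodCycle c ∧ ∃ b, (e, b) ∈ c}

/-- The vertices of step (i) of the definition of the core surface. -/
def coreV1 (g : ℕ) (J : Subgroup (Gamma g)) : Set (cover g J).V :=
  {v | ∃ e ∈ coreE1 g J, (cover g J).src e = v ∨ (cover g J).dst e = v}

/-- Step (i) of the definition of the core surface, as a subcomplex of `J\~Σ_g`. -/
def coreS1 (g : ℕ) (J : Subgroup (Gamma g)) : SubC (cover g J) :=
  ⟨coreV1 g J, coreE1 g J, ∅⟩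

/-- A cell of `J\~Σ_g` lying in a connected component of the complement of step (i)
which contains only finitely many `4g`-gons. -/
def coreFin (g : ℕ) (J : Subgroup (Gamma g)) (c : (cover g J).Cell) : Prop :=
  ¬ (cover g J).inSub (coreS1 g J) c ∧
  {f : (cover g J).F | (cover g J).reachS (coreS1 g J) c ((cover g J).fCell f)}.Finite

open Classical in
/-- The core surface `Core(J)` of a subgroup `J ≤ Γ_g`, as a subcomplex of
`Υ = J\~Σ_g`: (i) the union of all shortest representative cycles of essential
free homotopy classes in `Υ`, together with (ii) all connected components of the
complement containing finitely many `4g`-gons.  For the trivial subgroup it is a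
single vertex. -/
def coreSub (g : ℕ) (J : Subgroup (Gamma g)) : SubC (cover g J) :=
  if J = ⊥ then ⟨{mkCos g J 1}, ∅, ∅⟩
  else
    ⟨coreV1 g J ∪ {v | coreFin g J ((cover g J).vCell v)},
     coreE1 g J ∪ {e | coreFin g J ((cover g J).eCell e)},
     {f | coreFin g J ((cover g J).fCell f)}⟩

/-!
A boundary cycle `δ` of the core surface follows edges of shortest cycles, turns at each vertex as
far as possible towards its left, and has faces outside the core surface on its left. Lift it to
the annular cover of its free homotopy class. The line covering a shortest loop of the annulus is
locally `ℓ¹`-minimal in the universal cover, so by duality it carries a potential on the faces,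
which forces an optimal filling between a long multiple of the lift and a chain of minimal
`ℓ¹`-norm to be nonnegative to the right of the path. Hermite's identity cuts this filling into
fillings of the lift itself, one of which, `n`, joins the lift to a homologous chain as short as
the shortest loop. Minimal chains run along edges of shortest cycles only, so `n` is constant
across all other edges and vanishes on the lifts of faces outside the core surface. Thus `n` is
zero on the left of the path and nonnegative on its right, so that subtracting the boundary of `n`
does not shorten the path: `δ` is cyclically shortest, hence essential.

A half-chain on the boundary would be shortest by the above, and so would be its image when it is
pushed across its `4g`-gons. The region between them then lies in the core surface, although the
`4g`-gons next to the boundary do not. Similarly, a half-block extends to an extremal closed path,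
whose shortest homologous chain in the annulus contains the half-block. Exchanging the two halves
of the `4g`-gon gives another minimal chain, and the `4g`-gon between the two again lies in the
core surface.
-/

section

open scoped RightActions

/-! ### Signed letters and words -/

section Words

variable {g : ℕ}

/-- The formal inverse of a signed letter. -/
def invLetter (l : Letter g) : Letter g := (l.1, !l.2)

@[simp] lemma invLetter_invLetter (l : Letter g) : invLetter (invLetter l) = l := by
  simp [invLetter]

@[simp] lemma letterG_invLetter (l : Letter g) : letterG (invLetter l) = (letterG l)⁻¹ := by
  rcases l with ⟨_, _ | _⟩ <;> simp [invLetter, letterG]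

@[simp] lemma wordG_nil : wordG ([] : List (Letter g)) = 1 := rfl

@[simp] lemma wordG_cons (l : Letter g) (w : List (Letter g)) :
    wordG (l :: w) = letterG l * wordG w := by simp [wordG]

@[simp] lemma wordG_append (w w' : List (Letter g)) :
    wordG (w ++ w') = wordG w * wordG w' := by simp [wordG]

/-- The formal inverse of a word. -/
def invWord (w : List (Letter g)) : List (Letter g) := (w.map invLetter).reverse

lemma invWord_cons (l : Letter g) (w : List (Letter g)) :
    invWord (l :: w) = invWord w ++ [invLetter l] := by simp [invWord]

lemma invWord_append (w w' : List (Letter g)) :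
    invWord (w ++ w') = invWord w' ++ invWord w := by simp [invWord]

@[simp] lemma wordG_invWord (w : List (Letter g)) : wordG (invWord w) = (wordG w)⁻¹ := by
  induction w with
  | nil => simp [invWord]
  | cons l w ih => simp [invWord_cons, ih]

@[simp] lemma length_invWord (w : List (Letter g)) : (invWord w).length = w.length := by
  simp [invWord]

/-- The `k`-th power of a word. -/
def wordPow (w : List (Letter g)) (k : ℕ) : List (Letter g) := (List.replicate k w).flatten

@[simp] lemma wordPow_zero (w : List (Letter g)) : wordPow w 0 = [] := rfl

lemma wordPow_succ (w : List (Letter g)) (k : ℕ) : wordPow w (k + 1) = w ++ wordPow w k := by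
  simp [wordPow, List.replicate_succ]

@[simp] lemma wordG_wordPow (w : List (Letter g)) (k : ℕ) :
    wordG (wordPow w k) = wordG w ^ k := by
  induction k with
  | zero => simp
  | succ k ih => rw [wordPow_succ, wordG_append, ih, pow_succ']

@[simp] lemma length_wordPow (w : List (Letter g)) (k : ℕ) :
    (wordPow w k).length = k * w.length := by
  simp [wordPow]

lemma exists_wordG_eq (γ : Gamma g) : ∃ w : List (Letter g), wordG w = γ := by
  obtain ⟨f, rfl⟩ := QuotientGroup.mk_surjective γ
  induction f using FreeGroup.induction_on with
  | C1 => exact ⟨[], rfl⟩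
  | of i => exact ⟨[(i, true)], by simp [letterG]; rfl⟩
  | inv_of i _ => exact ⟨[(i, false)], by simp [letterG]; rfl⟩
  | mul a b ha hb =>
    obtain ⟨u, hu⟩ := ha
    obtain ⟨v, hv⟩ := hb
    exact ⟨u ++ v, by rw [wordG_append, hu, hv]; rfl⟩

/-! ### The universal property of the surface group -/

lemma map_relatorF {G : Type*} [Group G] (φ : FreeGroup (Fin (2 * g)) →* G) {f : Letter g → G}
    (hpos : ∀ i, φ (FreeGroup.of i) = f (i, true))
    (hinv : ∀ l, f (invLetter l) = (f l)⁻¹) :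
    φ (relatorF g) = ((relatorWord g).map f).prod := by
  rw [relatorF, map_list_prod, List.map_map]
  congr 1
  refine List.map_congr_left ?_
  rintro ⟨i, _ | _⟩ _
  · have hi : f (i, false) = (f (i, true))⁻¹ := hinv (i, true)
    simp [hpos, hi]
  · simp [hpos]

lemma wordG_relatorWord (g : ℕ) : wordG (relatorWord g) = 1 := by
  have hmk : PresentedGroup.mk ({relatorF g} : Set (FreeGroup (Fin (2 * g)))) (relatorF g) = 1 :=
    PresentedGroup.one_of_mem (Set.mem_singleton _)
  rw [← hmk, wordG]
  refine (map_relatorF _ (fun i => ?_) letterG_invLetter).symm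
  simp [letterG, PresentedGroup.of]

lemma prod_map_eq_of_wordG_eq {G : Type*} [Group G] {f : Letter g → G}
    (hinv : ∀ l, f (invLetter l) = (f l)⁻¹) (hrel : ((relatorWord g).map f).prod = 1)
    {w w' : List (Letter g)} (h : wordG w = wordG w') : (w.map f).prod = (w'.map f).prod := by
  have hlift : ∀ r ∈ ({relatorF g} : Set (FreeGroup (Fin (2 * g)))),
      FreeGroup.lift (fun i => f (i, true)) r = 1 := by
    rintro r rfl
    rw [map_relatorF _ (fun _ => FreeGroup.lift_apply_of) hinv, hrel]
  let φ : Gamma g →* G := PresentedGroup.toGroup hlift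
  have hφ : ∀ w, φ (wordG w) = (w.map f).prod := by
    intro w
    rw [wordG, map_list_prod, List.map_map]
    congr 1
    refine List.map_congr_left ?_
    rintro ⟨i, _ | _⟩ _
    · have hi : f (i, false) = (f (i, true))⁻¹ := hinv (i, true)
      simp [letterG, φ, hi]
    · simp [letterG, φ]
  rw [← hφ, ← hφ, h]

/-- The syntactic congruence of a function on words: two words are related when `F` does not
distinguish them in any context. -/
def contextCon {α β : Type*} (F : List α → β) : Con (FreeMonoid α) where
  r u v := ∀ a b : List α, F (a ++ u.toList ++ b) = F (a ++ v.toList ++ b)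
  iseqv := ⟨fun _ _ _ => rfl, fun h a b => (h a b).symm, fun h h' a b => (h a b).trans (h' a b)⟩
  mul' := by
    intro u v x y huv hxy a b
    have hu := huv a (x.toList ++ b)
    have hx := hxy (a ++ v.toList) b
    simp only [FreeMonoid.toList_mul, List.append_assoc] at *
    rw [hu, hx]

lemma contextCon_mk_eq {α β : Type*} {F : List α → β} {u v : List α} :
    ((FreeMonoid.ofList u : FreeMonoid α) : (contextCon F).Quotient) =
      ((FreeMonoid.ofList v : FreeMonoid α) : (contextCon F).Quotient) ↔
      ∀ a b, F (a ++ u ++ b) = F (a ++ v ++ b) :=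
  Con.eq _

lemma apply_eq_of_wordG_eq {α : Type*} (F : List (Letter g) → α)
    (hcancel : ∀ a b l, F (a ++ l :: invLetter l :: b) = F (a ++ b))
    (hrel : ∀ a b, F (a ++ relatorWord g ++ b) = F (a ++ b))
    {w w' : List (Letter g)} (h : wordG w = wordG w') : F w = F w' := by
  let q : Letter g → (contextCon F).Quotient := fun l => (FreeMonoid.of l : FreeMonoid (Letter g))
  have hq : ∀ l, q l * q (invLetter l) = 1 := fun l =>
    contextCon_mk_eq (u := [l, invLetter l]) (v := []).2 fun a b => by simpa using hcancel a b l
  let U : Letter g → (contextCon F).Quotientˣ := fun l =>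
    ⟨q l, q (invLetter l), hq l, by simpa using hq (invLetter l)⟩
  have hU : ∀ w : List (Letter g), (((w.map U).prod : (contextCon F).Quotientˣ) :
      (contextCon F).Quotient) = (FreeMonoid.ofList w : FreeMonoid (Letter g)) := by
    intro w
    induction w with
    | nil => rfl
    | cons l w ih => rw [List.map_cons, List.prod_cons, Units.val_mul, ih]; rfl
  have hUrel : ((relatorWord g).map U).prod = 1 := by
    ext
    rw [hU]
    exact contextCon_mk_eq (v := []).2 fun a b => by simpa using hrel a b
  have hUinv : ∀ l, U (invLetter l) = (U l)⁻¹ := fun l => Units.ext rfl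
  have hww' := congrArg Units.val (prod_map_eq_of_wordG_eq hUinv hUrel h)
  rw [hU, hU] at hww'
  simpa using contextCon_mk_eq.1 hww' [] []

end Words

/-! ### The relator and the cyclic order at a vertex -/

section CyclicOrder

variable {g : ℕ}

/-- The position of a signed letter in the relator, where each letter occurs exactly once. -/
def relIndex (l : Letter g) : ℕ := 4 * (l.1.1 / 2) + l.1.1 % 2 + (if l.2 then 0 else 2)

lemma relIndex_lt (l : Letter g) : relIndex l < 4 * g := by
  rcases l with ⟨⟨a, ha⟩, _ | _⟩ <;> simp only [relIndex] <;> grind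

lemma genus_pos (l : Letter g) : 0 < g := by
  have := relIndex_lt l
  omega

/-- The letter of the relator at position `p`. -/
def relLetter (p : ℕ) (h : p < 4 * g) : Letter g := (relLabel g ⟨p, h⟩, relSign g ⟨p, h⟩)

lemma relLetter_relIndex (l : Letter g) : relLetter (relIndex l) (relIndex_lt l) = l := by
  rcases l with ⟨⟨a, ha⟩, _ | _⟩ <;> simp [relLetter, relIndex, relLabel, relSign] <;> omega

lemma relIndex_relLetter (p : ℕ) (h : p < 4 * g) : relIndex (relLetter p h) = p := by
  simp only [relLetter, relIndex, relLabel, relSign, decide_eq_true_eq]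
  split_ifs <;> omega

lemma relIndex_injective : Function.Injective (relIndex (g := g)) := fun l m h => by
  rw [← relLetter_relIndex l, ← relLetter_relIndex m]
  congr 1

@[simp] lemma length_relatorWord (g : ℕ) : (relatorWord g).length = 4 * g := by simp [relatorWord]

lemma getElem_relatorWord (p : ℕ) (h : p < (relatorWord g).length) :
    (relatorWord g)[p] = relLetter p (by rwa [length_relatorWord] at h) := by
  simp [relatorWord, relLetter]

/-- The element of `Γ_g` represented by the prefix of length `i` of the relator. -/
def relPrefix (g i : ℕ) : Gamma g := wordG ((relatorWord g).take i)

lemma relPrefix_zero (g : ℕ) : relPrefix g 0 = 1 := by simp [relPrefix]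

lemma relPrefix_last (g : ℕ) : relPrefix g (4 * g) = 1 := by
  rw [relPrefix, List.take_of_length_le (by simp), wordG_relatorWord]

lemma take_succ_relatorWord (i : ℕ) (h : i < 4 * g) :
    (relatorWord g).take (i + 1) = (relatorWord g).take i ++ [relLetter i h] := by
  rw [List.take_add_one, List.getElem?_eq_getElem (by simpa), getElem_relatorWord]
  rfl

lemma relPrefix_succ (i : ℕ) (h : i < 4 * g) :
    relPrefix g (i + 1) = relPrefix g i * letterG (relLetter i h) := by
  simp [relPrefix, take_succ_relatorWord i h]

/-- The letter following `l` in the cyclic relator. -/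
def nextLetter (l : Letter g) : Letter g :=
  relLetter ((relIndex l + 1) % (4 * g)) (Nat.mod_lt _ (by have := genus_pos l; omega))

lemma relIndex_nextLetter (l : Letter g) :
    relIndex (nextLetter l) = (relIndex l + 1) % (4 * g) :=
  relIndex_relLetter _ _

lemma relPrefix_nextLetter (l : Letter g) :
    relPrefix g (relIndex (nextLetter l)) = relPrefix g (relIndex l) * letterG l := by
  have hsucc := relPrefix_succ (relIndex l) (relIndex_lt l)
  rw [relLetter_relIndex] at hsucc
  rw [← hsucc, relIndex_nextLetter]
  rcases (Nat.succ_le_of_lt (relIndex_lt l)).lt_or_eq with h | h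
  · rw [Nat.mod_eq_of_lt h]
  · rw [← Nat.succ_eq_add_one, h, Nat.mod_self, relPrefix_last, relPrefix_zero]

lemma posLv_lt (l : Letter g) : posLv l < 4 * g := by
  rcases l with ⟨⟨a, ha⟩, b⟩
  cases b <;> simp only [posLv, posIn, posOut] <;> grind

lemma posArr_eq_posLv_invLetter (l : Letter g) : posArr l = posLv (invLetter l) := by
  rcases l with ⟨a, _ | _⟩ <;> simp [posLv, posArr, invLetter]

lemma posArr_lt (l : Letter g) : posArr l < 4 * g :=
  posArr_eq_posLv_invLetter l ▸ posLv_lt _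

lemma posLv_injective : Function.Injective (posLv (g := g)) := fun l m h => by
  rcases l with ⟨⟨a, ha⟩, b⟩
  rcases m with ⟨⟨a', ha'⟩, b'⟩
  cases b <;> cases b' <;> simp [posLv, posIn, posOut] at h ⊢ <;> split_ifs at h <;> omega

/-- The letter read when leaving a vertex through the half-edge at position `p`, taken modulo
`4g`. -/
def letterAt (hg : 0 < g) (p : ℕ) : Letter g :=
  (⟨2 * (p % (4 * g) / 4) + p % 2, by
    have : p % (4 * g) < 4 * g := Nat.mod_lt _ (by omega)
    omega⟩, decide (p % 4 = 0 ∨ p % 4 = 3))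

lemma posLv_letterAt (hg : 0 < g) (p : ℕ) : posLv (letterAt hg p) = p % (4 * g) := by
  have hlt : p % (4 * g) < 4 * g := Nat.mod_lt _ (by omega)
  have hmod : p % (4 * g) % 4 = p % 4 := Nat.mod_mul_right_mod p 4 g
  obtain ⟨q, hq⟩ : ∃ q, p % (4 * g) = q := ⟨_, rfl⟩
  simp only [posLv, letterAt, posIn, posOut, decide_eq_true_eq, hq] at hlt hmod ⊢
  by_cases hout : p % 4 = 0 ∨ p % 4 = 3
  · rw [if_pos hout]; split_ifs <;> omega
  · rw [if_neg hout]; split_ifs <;> omega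

lemma letterAt_posLv (hg : 0 < g) (l : Letter g) : letterAt hg (posLv l) = l :=
  posLv_injective (by rw [posLv_letterAt, Nat.mod_eq_of_lt (posLv_lt l)])

lemma posLv_nextLetter (l : Letter g) : posLv (nextLetter l) = (posArr l + 1) % (4 * g) := by
  have hmod : ∀ x : ℕ, (x < 4 * g → x % (4 * g) = x) ∧ (x = 4 * g → x % (4 * g) = 0) :=
    fun x => ⟨Nat.mod_eq_of_lt, fun h => by rw [h, Nat.mod_self]⟩
  have hl := relIndex_lt l
  have hidx := relIndex_nextLetter l
  have hidx' := hmod (relIndex l + 1)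
  have hpos := hmod (posArr l + 1)
  generalize nextLetter l = m at *
  generalize (posArr l + 1) % (4 * g) = t at *
  rw [← hidx] at hidx'
  clear hidx
  rcases l with ⟨⟨a, ha⟩, b⟩
  rcases m with ⟨⟨a', ha'⟩, b'⟩
  cases b <;> cases b' <;> simp [posLv, posArr, posIn, posOut, relIndex] at hl hidx' hpos ⊢ <;>
    split_ifs at hpos ⊢ <;> omega

lemma nextLetter_eq_letterAt (hg : 0 < g) (l : Letter g) :
    nextLetter l = letterAt hg (posArr l + 1) :=
  posLv_injective (by rw [posLv_letterAt, posLv_nextLetter])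

lemma nextLetter_invLetter_letterAt (hg : 0 < g) (p : ℕ) :
    nextLetter (invLetter (letterAt hg p)) = letterAt hg (p + 1) := by
  apply posLv_injective
  rw [posLv_nextLetter, posArr_eq_posLv_invLetter, invLetter_invLetter, posLv_letterAt,
    posLv_letterAt, Nat.mod_add_mod]

lemma gapN_lt (s t : Letter g) : gapN s t < 4 * g :=
  Nat.mod_lt _ (by have := posLv_lt t; omega)

lemma posLv_eq_posArr_add_gapN (s t : Letter g) :
    posLv t = (posArr s + 1 + gapN s t) % (4 * g) := by
  have ht := posLv_lt t
  have hs := posArr_lt s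
  rw [gapN, Nat.add_mod_mod,
    show posArr s + 1 + (posLv t + 4 * g - (posArr s + 1)) = posLv t + 4 * g by omega,
    Nat.add_mod_right, Nat.mod_eq_of_lt ht]

lemma eq_letterAt_gapN (hg : 0 < g) (s t : Letter g) :
    t = letterAt hg (posArr s + 1 + gapN s t) :=
  posLv_injective (by rw [posLv_letterAt, ← posLv_eq_posArr_add_gapN])

lemma gapN_letterAt (hg : 0 < g) (s : Letter g) {k : ℕ} (hk : k < 4 * g) :
    gapN s (letterAt hg (posArr s + 1 + k)) = k := by
  have heq := posLv_eq_posArr_add_gapN s (letterAt hg (posArr s + 1 + k))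
  rw [posLv_letterAt] at heq
  have hmod : k ≡ gapN s (letterAt hg (posArr s + 1 + k)) [MOD 4 * g] :=
    Nat.ModEq.add_left_cancel' _ heq
  exact (hmod.eq_of_lt_of_lt hk (gapN_lt _ _)).symm

lemma gapN_nextLetter (l : Letter g) : gapN l (nextLetter l) = 0 := by
  have hg := genus_pos l
  simpa [nextLetter_eq_letterAt hg] using gapN_letterAt hg l (k := 0) (by omega)

lemma eq_nextLetter_of_gapN_eq_zero {s t : Letter g} (h : gapN s t = 0) : t = nextLetter s := by
  have hg := genus_pos s
  rw [eq_letterAt_gapN hg s t, h, nextLetter_eq_letterAt hg, Nat.add_zero]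

end CyclicOrder

/-! ### Right actions of the surface group -/

section RightActions

lemma op_smul_eq_iff {G X : Type*} [Group G] [MulAction Gᵐᵒᵖ X] {x y : X} {a : G} :
    x <• a = y ↔ x = y <• a⁻¹ := by
  rw [MulOpposite.op_inv]
  exact smul_eq_iff_eq_inv_smul _

variable {g : ℕ}

lemma op_smul_letterG_invLetter {X : Type*} [MulAction (Gamma g)ᵐᵒᵖ X] (x : X)
    (l : Letter g) : x <• letterG l <• letterG (invLetter l) = x := by simp

lemma mkCos_eq_mkCos {J : Subgroup (Gamma g)} {x y : Gamma g} :
    mkCos g J x = mkCos g J y ↔ y * x⁻¹ ∈ J :=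
  Quotient.eq.trans QuotientGroup.rightRel_apply

/-- Right multiplication as an action on the right cosets of `J`. -/
instance (J : Subgroup (Gamma g)) : MulAction (Gamma g)ᵐᵒᵖ (Cos g J) where
  smul a v := rmul g J a.unop v
  one_smul v := by
    induction v using Quotient.inductionOn with | _ x =>
    exact congrArg (mkCos g J) (mul_one x)
  mul_smul a b v := by
    induction v using Quotient.inductionOn with | _ x =>
    exact congrArg (mkCos g J) (mul_assoc x b.unop a.unop).symm

/-- The projection of `Γ_g` onto the right cosets of `J`, as an equivariant map. -/
def cosetHom (J : Subgroup (Gamma g)) : Gamma g →[(Gamma g)ᵐᵒᵖ] Cos g J where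
  toFun := mkCos g J
  map_smul' _ _ := rfl

/-- The covering map on vertices, as an equivariant map. -/
def coverHom {C J : Subgroup (Gamma g)} (h : C ≤ J) : Cos g C →[(Gamma g)ᵐᵒᵖ] Cos g J where
  toFun := coverMapV h
  map_smul' a v := by
    induction v using Quotient.inductionOn with | _ x => rfl

lemma op_smul_mkCos {J : Subgroup (Gamma g)} (x a : Gamma g) :
    mkCos g J x <• a = mkCos g J (x * a) := rfl

end RightActions

/-! ### The `ℓ¹`-norm of integral chains -/

section L1Norm

variable {α β : Type*}

/-- The `ℓ¹`-norm of a finitely supported integral chain. -/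
def l1Norm (z : α →₀ ℤ) : ℤ := z.sum fun _ a => |a|

lemma l1Norm_eq_sum {z : α →₀ ℤ} {S : Finset α} (h : z.support ⊆ S) :
    l1Norm z = ∑ e ∈ S, |z e| :=
  Finsupp.sum_of_support_subset _ h _ (by simp)

lemma l1Norm_nonneg (z : α →₀ ℤ) : 0 ≤ l1Norm z := Finset.sum_nonneg fun _ _ => abs_nonneg _

@[simp] lemma l1Norm_zero : l1Norm (0 : α →₀ ℤ) = 0 := by simp [l1Norm]

@[simp] lemma l1Norm_single (a : α) (c : ℤ) : l1Norm (Finsupp.single a c) = |c| := by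
  simp [l1Norm]

@[simp] lemma l1Norm_neg (z : α →₀ ℤ) : l1Norm (-z) = l1Norm z := by
  rw [l1Norm_eq_sum (Finsupp.support_neg z).le, l1Norm_eq_sum (z := z) subset_rfl]
  simp

lemma l1Norm_add_le (z z' : α →₀ ℤ) : l1Norm (z + z') ≤ l1Norm z + l1Norm z' := by
  classical
  rw [l1Norm_eq_sum Finsupp.support_add, l1Norm_eq_sum (z := z) Finset.subset_union_left,
    l1Norm_eq_sum (z := z') Finset.subset_union_right, ← Finset.sum_add_distrib]
  exact Finset.sum_le_sum fun e _ => abs_add_le _ _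

@[simp] lemma l1Norm_smul (c : ℤ) (z : α →₀ ℤ) : l1Norm (c • z) = |c| * l1Norm z := by
  rw [l1Norm_eq_sum Finsupp.support_smul, l1Norm_eq_sum (z := z) subset_rfl, Finset.mul_sum]
  simp [abs_mul]

lemma l1Norm_single_add {z : α →₀ ℤ} {e : α} (he : e ∉ z.support) (c : ℤ) :
    l1Norm (Finsupp.single e c + z) = |c| + l1Norm z := by
  classical
  rw [l1Norm, Finsupp.sum_add_index_of_disjoint, Finsupp.sum_single_index abs_zero]
  · rfl
  · exact Finset.disjoint_of_subset_left Finsupp.support_single_subset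
      (Finset.disjoint_singleton_left.2 he)

lemma l1Norm_add_single (z : α →₀ ℤ) (e : α) (c : ℤ) :
    l1Norm (z + Finsupp.single e c) = l1Norm z - |z e| + |z e + c| := by
  have hsplit : ∀ d, l1Norm (Finsupp.single e d + z.erase e) = |d| + l1Norm (z.erase e) :=
    l1Norm_single_add (by simp)
  have hz := hsplit (z e)
  rw [Finsupp.single_add_erase] at hz
  have hzc : z + Finsupp.single e c = Finsupp.single e (z e + c) + z.erase e := by
    rw [Finsupp.single_add, add_right_comm, Finsupp.single_add_erase]
  rw [hzc, hsplit, hz]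
  ring

lemma abs_apply_le_l1Norm (z : α →₀ ℤ) (e : α) : |z e| ≤ l1Norm z := by
  by_cases h : e ∈ z.support
  · exact Finset.single_le_sum (f := fun e => |z e|) (fun _ _ => abs_nonneg _) h
  · simpa [Finsupp.notMem_support_iff.1 h] using l1Norm_nonneg z

lemma l1Norm_mapDomain_le (f : α → β) (z : α →₀ ℤ) : l1Norm (z.mapDomain f) ≤ l1Norm z := by
  induction z using Finsupp.induction with
  | zero => simp
  | single_add e a z he _ ih =>
    rw [Finsupp.mapDomain_add, Finsupp.mapDomain_single, l1Norm_single_add he]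
    exact (l1Norm_add_le _ _).trans (add_le_add (l1Norm_single _ _).le ih)

/-- The change `∑ (|k + t| - |k|)` of the `ℓ¹`-norm when `t` is added to `k`. -/
def l1Variation (k : α → ℤ) (t : α →₀ ℤ) : ℤ := t.sum fun e c => |k e + c| - |k e|

lemma l1Variation_eq_sum (k : α → ℤ) {t : α →₀ ℤ} {S : Finset α} (h : t.support ⊆ S) :
    l1Variation k t = ∑ e ∈ S, (|k e + t e| - |k e|) :=
  Finsupp.sum_of_support_subset _ h _ (by simp)

lemma l1Variation_single_add (k : α → ℤ) {t : α →₀ ℤ} {e : α} (he : e ∉ t.support) (c : ℤ) :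
    l1Variation k (Finsupp.single e c + t) = l1Variation k t + (|k e + c| - |k e|) := by
  classical
  rw [l1Variation, Finsupp.sum_add_index_of_disjoint, Finsupp.sum_single_index (by simp), add_comm]
  · rfl
  · exact Finset.disjoint_of_subset_left Finsupp.support_single_subset
      (Finset.disjoint_singleton_left.2 he)

lemma abs_mul_add_add_le {N p q c : ℤ} (h : |p| + |c| ≤ N) :
    |N * q + p + c| ≤ |N * q + p| + (|q + c| - |q|) := by
  have hp := abs_le.1 (le_refl |p|)
  have hc := abs_le.1 (le_refl |c|)
  have hN : 0 ≤ N := (add_nonneg (abs_nonneg p) (abs_nonneg c)).trans h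
  rcases lt_trichotomy q 0 with hq | rfl | hq
  · have hNq : N * q ≤ -N := by nlinarith [hN]
    have hqc := neg_le_abs (q + c)
    rw [abs_of_nonpos (a := N * q + p + c) (by linarith),
      abs_of_nonpos (a := N * q + p) (by linarith), abs_of_neg hq]
    linarith
  · simpa using abs_add_le p c
  · have hNq : N ≤ N * q := by nlinarith [hN]
    have hqc := le_abs_self (q + c)
    rw [abs_of_nonneg (a := N * q + p + c) (by linarith),
      abs_of_nonneg (a := N * q + p) (by linarith), abs_of_pos hq]
    linarith

lemma l1Norm_smul_add_mapDomain_le (f : α → β) (z : β →₀ ℤ) (t : α →₀ ℤ) {N : ℕ}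
    (hN : l1Norm t ≤ N) :
    l1Norm ((N : ℤ) • z + t.mapDomain f) ≤ N * l1Norm z + l1Variation (z ∘ f) t := by
  induction t using Finsupp.induction with
  | zero =>
    rw [Finsupp.mapDomain_zero, add_zero, l1Norm_smul, Nat.abs_cast]
    simp [l1Variation]
  | single_add e c t he _ ih =>
    rw [l1Norm_single_add he] at hN
    have hp : |t.mapDomain f (f e)| ≤ l1Norm t :=
      (abs_apply_le_l1Norm _ _).trans (l1Norm_mapDomain_le f t)
    rw [l1Variation_single_add _ he, Finsupp.mapDomain_add, Finsupp.mapDomain_single,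
      add_comm (Finsupp.single _ _), ← add_assoc, l1Norm_add_single]
    have hstep := abs_mul_add_add_le (q := z (f e)) (show |t.mapDomain f (f e)| + |c| ≤ N by omega)
    have ih := ih (by have := abs_nonneg c; omega)
    simp only [Finsupp.coe_add, Finsupp.coe_smul, Pi.add_apply, Pi.smul_apply, smul_eq_mul,
      Function.comp_apply]
    linarith

end L1Norm

/-! ### Chains on a space with a right action -/

section Chains

variable {g : ℕ} {X Y : Type*} [MulAction (Gamma g)ᵐᵒᵖ X] [MulAction (Gamma g)ᵐᵒᵖ Y]

/-- Integral `1`-chains of the complex over `X`, whose vertices are the elements of `X` and whose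
edges are the pairs `(x, i)` joining `x` to `x <• aᵢ`. -/
abbrev Chain (g : ℕ) (X : Type*) := X × Fin (2 * g) →₀ ℤ

/-- The `1`-chain of the dart leaving `x` along the signed letter `l`. -/
def dartChain (x : X) (l : Letter g) : Chain g X :=
  if l.2 then Finsupp.single (x, l.1) 1 else -Finsupp.single (x <• letterG l, l.1) 1

/-- The `1`-chain of the walk that starts at `x` and reads `w`. -/
def wordChain : X → List (Letter g) → Chain g X
  | _, [] => 0
  | x, l :: w => dartChain x l + wordChain (x <• letterG l) w

@[simp] lemma wordChain_nil (x : X) : wordChain x ([] : List (Letter g)) = 0 := rfl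

lemma wordChain_cons (x : X) (l : Letter g) (w : List (Letter g)) :
    wordChain x (l :: w) = dartChain x l + wordChain (x <• letterG l) w := rfl

lemma wordChain_append (x : X) (w w' : List (Letter g)) :
    wordChain x (w ++ w') = wordChain x w + wordChain (x <• wordG w) w' := by
  induction w generalizing x with
  | nil => simp
  | cons l w ih =>
    rw [List.cons_append, wordChain_cons, ih, wordG_cons, ← op_smul_op_smul, wordChain_cons,
      add_assoc]

lemma dartChain_invLetter (x : X) (l : Letter g) :
    dartChain (x <• letterG l) (invLetter l) = -dartChain x l := by
  rcases l with ⟨i, _ | _⟩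
  · simp [dartChain, invLetter]
  · have hback := op_smul_letterG_invLetter x (i, true)
    simp only [dartChain, invLetter, Bool.not_true, Bool.false_eq_true, if_false, if_true] at *
    rw [hback]

lemma wordChain_invWord (x : X) (w : List (Letter g)) :
    wordChain (x <• wordG w) (invWord w) = -wordChain x w := by
  induction w generalizing x with
  | nil => simp [invWord]
  | cons l w ih =>
    have hback : x <• letterG l <• wordG w <• (wordG w)⁻¹ = x <• letterG l := by simp
    rw [invWord_cons, wordChain_append, wordG_cons, ← op_smul_op_smul, ih, wordG_invWord,
      hback, wordChain_cons, wordChain_cons, wordChain_nil, dartChain_invLetter]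
    abel

lemma wordChain_wordPow {x : X} {w : List (Letter g)} (h : x <• wordG w = x) (k : ℕ) :
    wordChain x (wordPow w k) = (k : ℤ) • wordChain x w := by
  induction k with
  | zero => simp
  | succ k ih =>
    rw [wordPow_succ, wordChain_append, h, ih]
    push_cast
    rw [add_smul, one_smul, add_comm]

/-- The value of a `1`-cochain on the dart leaving `x` along `l`, linear in the cochain. -/
def dartVal (x : X) (l : Letter g) : (X × Fin (2 * g) → ℤ) →ₗ[ℤ] ℤ :=
  if l.2 then LinearMap.proj (x, l.1) else -LinearMap.proj (x <• letterG l, l.1)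

lemma dartVal_true (k : X × Fin (2 * g) → ℤ) (x : X) (i : Fin (2 * g)) :
    dartVal x (i, true) k = k (x, i) := rfl

lemma dartVal_invLetter (k : X × Fin (2 * g) → ℤ) (x : X) (l : Letter g) :
    dartVal (x <• letterG l) (invLetter l) k = -dartVal x l k := by
  rcases l with ⟨i, _ | _⟩
  · simp [dartVal, invLetter]
  · have hback := op_smul_letterG_invLetter x (i, true)
    simp only [dartVal, invLetter, Bool.not_true, Bool.false_eq_true, if_false, if_true] at *
    rw [hback, LinearMap.neg_apply]

open Classical in
lemma dartVal_dartChain (x y : X) (l m : Letter g) : dartVal y m (dartChain x l) =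
    (if y = x ∧ m = l then 1 else 0) -
      (if y <• letterG m = x ∧ invLetter m = l then 1 else 0) := by
  have hflip : ∀ i : Fin (2 * g), letterG (i, false) = (letterG (i, true))⁻¹ := fun i => by
    simp [letterG]
  have hinj : ∀ a : (Gamma g)ᵐᵒᵖ, a • x = a • y ↔ x = y := fun a =>
    (MulAction.injective a).eq_iff
  rcases l with ⟨i, _ | _⟩ <;> rcases m with ⟨j, _ | _⟩ <;>
    simp [dartVal, dartChain, invLetter, Finsupp.single_apply, op_smul_eq_iff, hflip] <;>
    grind

/-- The face on the left of the dart leaving `x` along `l`. -/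
def leftFace (x : X) (l : Letter g) : X := x <• (relPrefix g (relIndex l))⁻¹

/-- The face on the right of the dart leaving `x` along `l`. -/
def rightFace (x : X) (l : Letter g) : X := leftFace (x <• letterG l) (invLetter l)

lemma leftFace_nextLetter (x : X) (l : Letter g) :
    leftFace (x <• letterG l) (nextLetter l) = leftFace x l := by
  rw [leftFace, relPrefix_nextLetter, op_smul_op_smul]
  simp [leftFace]

lemma rightFace_letterAt (hg : 0 < g) (x : X) (p : ℕ) :
    rightFace x (letterAt hg p) = leftFace x (letterAt hg (p + 1)) := by
  rw [rightFace, ← leftFace_nextLetter (x <• _), op_smul_letterG_invLetter,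
    nextLetter_invLetter_letterAt]

/-- The boundary of an integral `2`-chain; the face `f` is glued along the relator read from
`f`. -/
def boundary (g : ℕ) {X : Type*} [MulAction (Gamma g)ᵐᵒᵖ X] : (X →₀ ℤ) →ₗ[ℤ] Chain g X :=
  Finsupp.linearCombination ℤ (fun f => wordChain f (relatorWord g))

lemma boundary_single (f : X) (a : ℤ) :
    boundary g (Finsupp.single f a) = a • wordChain f (relatorWord g) := by
  simp [boundary]

open Classical in
lemma dartVal_wordChain_take (f x : X) (l : Letter g) {k : ℕ} (hk : k ≤ 4 * g) :
    dartVal x l (wordChain f ((relatorWord g).take k)) =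
      (if relIndex l < k ∧ f = leftFace x l then 1 else 0) -
        (if relIndex (invLetter l) < k ∧ f = rightFace x l then 1 else 0) := by
  induction k with
  | zero => simp
  | succ k ih =>
    have hm : ∀ m : Letter g, m = relLetter k hk ↔ relIndex m = k := fun m =>
      ⟨fun h => by rw [h, relIndex_relLetter],
        fun h => relIndex_injective (by rw [h, relIndex_relLetter])⟩
    have hsplit : ∀ (y : X) (m : Letter g),
        (if relIndex m < k + 1 ∧ f = leftFace y m then (1 : ℤ) else 0) =
          (if relIndex m < k ∧ f = leftFace y m then 1 else 0) +
            (if y = f <• relPrefix g k ∧ m = relLetter k hk then 1 else 0) := by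
      intro y m
      by_cases h : relIndex m = k
      · have hf : y = f <• relPrefix g k ↔ f = leftFace y m := by
          rw [leftFace, h, eq_comm, op_smul_eq_iff]
        simp [hm, h, hf]
      · have hlt : relIndex m < k + 1 ↔ relIndex m < k := by omega
        simp [hm, h, hlt]
    rw [take_succ_relatorWord k hk, wordChain_append, wordChain_cons, wordChain_nil, add_zero,
      Finsupp.coe_add, map_add, ih (by omega), dartVal_dartChain, ← relPrefix, rightFace, hsplit,
      hsplit]
    exact sub_add_sub_comm _ _ _ _

lemma dartVal_boundary (n : X →₀ ℤ) (x : X) (l : Letter g) :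
    dartVal x l (boundary g n) = n (leftFace x l) - n (rightFace x l) := by
  classical
  induction n using Finsupp.induction_linear with
  | zero => simp
  | add a b ha hb =>
    rw [map_add, Finsupp.coe_add, map_add, ha, hb]
    simp only [Finsupp.coe_add, Pi.add_apply]
    ring
  | single f a =>
    have hrel := dartVal_wordChain_take f x l le_rfl
    rw [List.take_of_length_le (length_relatorWord g).le] at hrel
    rw [boundary_single, Finsupp.coe_smul, map_smul, hrel]
    simp only [relIndex_lt, true_and, Finsupp.single_apply, smul_eq_mul]
    split_ifs <;> simp

/-- The divergence of a `1`-cochain at the vertex `a`: the net flow out of `a`. -/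
def divergence (a : X) : (X × Fin (2 * g) → ℤ) →ₗ[ℤ] ℤ := ∑ l : Letter g, dartVal a l

lemma divergence_apply (a : X) (k : X × Fin (2 * g) → ℤ) :
    divergence a k = ∑ l : Letter g, dartVal a l k := by
  simp [divergence]

open Classical in
lemma divergence_dartChain (x : X) (l : Letter g) (a : X) :
    divergence a (dartChain x l) =
      (if a = x then 1 else 0) - (if a = x <• letterG l then 1 else 0) := by
  simp only [divergence_apply, dartVal_dartChain, Finset.sum_sub_distrib]
  congr 1
  · by_cases h : a = x <;> simp [h]
  · rw [Finset.sum_eq_single (invLetter l)]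
    · rw [invLetter_invLetter, op_smul_eq_iff, letterG_invLetter, inv_inv]
      simp only [and_true]
    · rintro m - hm
      exact if_neg fun h => hm (by rw [← h.2, invLetter_invLetter])
    · simp

open Classical in
lemma divergence_wordChain (x : X) (w : List (Letter g)) (a : X) :
    divergence a (wordChain x w) =
      (if a = x then 1 else 0) - (if a = x <• wordG w then 1 else 0) := by
  induction w generalizing x with
  | nil => simp
  | cons l w ih =>
    rw [wordChain_cons, Finsupp.coe_add, map_add, divergence_dartChain, ih, wordG_cons,
      op_smul_op_smul]
    ring

lemma divergence_wordChain_eq_zero {x : X} {w : List (Letter g)} (h : x <• wordG w = x) (a : X) :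
    divergence a (wordChain x w) = 0 := by
  classical
  rw [divergence_wordChain, h, sub_self]

lemma divergence_boundary (n : X →₀ ℤ) (a : X) : divergence a (boundary g n) = 0 := by
  induction n using Finsupp.induction_linear with
  | zero => simp
  | add a b ha hb => rw [map_add, Finsupp.coe_add, map_add, ha, hb, add_zero]
  | single f c =>
    rw [boundary_single, Finsupp.coe_smul, map_smul,
      divergence_wordChain_eq_zero (by simp [wordG_relatorWord]), smul_zero]

/-- The push-forward of `1`-chains along a map of vertices. -/
def pushChain (g : ℕ) {X Y : Type*} (φ : X → Y) : Chain g X →ₗ[ℤ] Chain g Y :=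
  Finsupp.lmapDomain ℤ ℤ (Prod.map φ id)

lemma pushChain_dartChain (φ : X →[(Gamma g)ᵐᵒᵖ] Y) (x : X) (l : Letter g) :
    pushChain g φ (dartChain x l) = dartChain (φ x) l := by
  unfold dartChain
  split_ifs
  · simp [pushChain]
  · rw [map_neg]
    simp [pushChain]

lemma pushChain_wordChain (φ : X →[(Gamma g)ᵐᵒᵖ] Y) (x : X) (w : List (Letter g)) :
    pushChain g φ (wordChain x w) = wordChain (φ x) w := by
  induction w generalizing x with
  | nil => simp
  | cons l w ih =>
    rw [wordChain_cons, map_add, ih, pushChain_dartChain, map_smul, wordChain_cons]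

lemma pushChain_boundary (φ : X →[(Gamma g)ᵐᵒᵖ] Y) (n : X →₀ ℤ) :
    pushChain g φ (boundary g n) = boundary g (n.mapDomain φ) := by
  induction n using Finsupp.induction_linear with
  | zero => simp
  | add a b ha hb => rw [map_add, map_add, ha, hb, Finsupp.mapDomain_add, map_add]
  | single f a =>
    rw [Finsupp.mapDomain_single, boundary_single, boundary_single, map_smul, pushChain_wordChain]

lemma dartVal_comp (φ : X →[(Gamma g)ᵐᵒᵖ] Y) (k : Y × Fin (2 * g) → ℤ) (x : X) (l : Letter g) :
    dartVal x l (k ∘ Prod.map φ id) = dartVal (φ x) l k := by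
  unfold dartVal
  split_ifs <;> simp

lemma map_leftFace (φ : X →[(Gamma g)ᵐᵒᵖ] Y) (x : X) (l : Letter g) :
    φ (leftFace x l) = leftFace (φ x) l := map_smul _ _ _

lemma map_rightFace (φ : X →[(Gamma g)ᵐᵒᵖ] Y) (x : X) (l : Letter g) :
    φ (rightFace x l) = rightFace (φ x) l := by
  rw [rightFace, map_leftFace, map_smul, rightFace]

@[simp] lemma l1Norm_dartChain (x : X) (l : Letter g) : l1Norm (dartChain x l) = 1 := by
  unfold dartChain
  split_ifs <;> simp

lemma l1Norm_wordChain_le (x : X) (w : List (Letter g)) :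
    l1Norm (wordChain x w) ≤ w.length := by
  induction w generalizing x with
  | nil => simp
  | cons l w ih =>
    have hadd := l1Norm_add_le (dartChain x l) (wordChain (x <• letterG l) w)
    rw [l1Norm_dartChain] at hadd
    rw [wordChain_cons, List.length_cons]
    push_cast
    linarith [ih (x <• letterG l)]

lemma l1Norm_sub_dartChain (z : Chain g X) (x : X) (l : Letter g) :
    l1Norm (z - dartChain x l) = l1Norm z - |dartVal x l z| + |dartVal x l z - 1| := by
  unfold dartChain dartVal
  split_ifs
  · rw [sub_eq_add_neg, ← Finsupp.single_neg, l1Norm_add_single]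
    rfl
  · rw [sub_neg_eq_add, l1Norm_add_single, LinearMap.neg_apply, LinearMap.proj_apply, abs_neg,
      ← abs_neg (_ - 1)]
    congr 2
    ring

lemma l1Norm_sub_dartChain_of_pos {z : Chain g X} {x : X} {l : Letter g}
    (h : 0 < dartVal x l z) : l1Norm (z - dartChain x l) = l1Norm z - 1 := by
  rw [l1Norm_sub_dartChain, abs_of_pos h, abs_of_nonneg (by omega)]
  ring

lemma l1Norm_sub_dartChain_of_nonpos {z : Chain g X} {x : X} {l : Letter g}
    (h : dartVal x l z ≤ 0) : l1Norm (z - dartChain x l) = l1Norm z + 1 := by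
  rw [l1Norm_sub_dartChain, abs_of_nonpos h, abs_of_neg (by omega)]
  ring

end Chains

/-! ### Cyclically shortest words -/

section CyclicallyShortest

variable {g : ℕ}

/-- The word `w` represents a nontrivial element and is shortest among the words representing
its conjugacy class. -/
def IsCyclicallyShortest (w : List (Letter g)) : Prop :=
  wordG w ≠ 1 ∧ ∀ (w' : List (Letter g)) (y : Gamma g), y * wordG w' * y⁻¹ = wordG w →
    w.length ≤ w'.length

namespace IsCyclicallyShortest

lemma of_conj {w v : List (Letter g)} (h : IsCyclicallyShortest w) (y : Gamma g)
    (hy : y * wordG v * y⁻¹ = wordG w) (hl : v.length ≤ w.length) : IsCyclicallyShortest v := by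
  refine ⟨fun h1 => h.1 (by rw [← hy, h1]; simp), fun w' y' h' => hl.trans (h.2 w' (y * y') ?_)⟩
  rw [← hy, ← h']
  group

lemma append_comm {a b : List (Letter g)} (h : IsCyclicallyShortest (a ++ b)) :
    IsCyclicallyShortest (b ++ a) :=
  h.of_conj (wordG a) (by simp [mul_assoc]) (by simp [add_comm])

lemma invWord {w : List (Letter g)} (h : IsCyclicallyShortest w) :
    IsCyclicallyShortest (invWord w) := by
  refine ⟨fun h1 => h.1 (by rwa [wordG_invWord, inv_eq_one] at h1), fun w' y hy => ?_⟩
  rw [wordG_invWord] at hy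
  have hle := h.2 (CS.invWord w') y (by rw [wordG_invWord, ← inv_inj, ← hy]; group)
  simpa using hle

lemma ne_nil {w : List (Letter g)} (h : IsCyclicallyShortest w) : w ≠ [] := by
  rintro rfl
  exact h.1 rfl

end IsCyclicallyShortest

variable {X Y : Type*} [MulAction (Gamma g)ᵐᵒᵖ X] [MulAction (Gamma g)ᵐᵒᵖ Y]

/-- The dart leaving `x` along `l` lies on a closed walk reading a cyclically shortest word. -/
def IsCoreDart (x : X) (l : Letter g) : Prop :=
  ∃ w, IsCyclicallyShortest (l :: w) ∧ x <• wordG (l :: w) = x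

lemma IsCyclicallyShortest.isCoreDart {x : X} {a b : List (Letter g)} {l : Letter g}
    (h : IsCyclicallyShortest (a ++ l :: b)) (hx : x <• wordG (a ++ l :: b) = x) :
    IsCoreDart (x <• wordG a) l := by
  refine ⟨b ++ a, h.append_comm, ?_⟩
  have hconj : wordG a * wordG (l :: (b ++ a)) = wordG (a ++ l :: b) * wordG a := by
    simp [mul_assoc]
  rw [op_smul_op_smul, hconj, ← op_smul_op_smul, hx]

lemma IsCoreDart.inv {x : X} {l : Letter g} (h : IsCoreDart x l) :
    IsCoreDart (x <• letterG l) (invLetter l) := by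
  obtain ⟨w, hw, hx⟩ := h
  have hinv := hw.invWord
  rw [invWord_cons] at hinv
  refine ⟨invWord w, hinv.append_comm, ?_⟩
  have hconj : letterG l * wordG (invLetter l :: invWord w) = (wordG (l :: w))⁻¹ * letterG l := by
    simp
  rw [op_smul_op_smul, hconj, ← op_smul_op_smul, ← op_smul_eq_iff.1 hx]

lemma IsCoreDart.map (φ : X →[(Gamma g)ᵐᵒᵖ] Y) {x : X} {l : Letter g} (h : IsCoreDart x l) :
    IsCoreDart (φ x) l := by
  obtain ⟨w, hw, hx⟩ := h
  exact ⟨w, hw, by rw [← map_smul, hx]⟩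

end CyclicallyShortest

/-! ### Homology and minimal chains -/

section Minimal

variable {g : ℕ} {X : Type*} [MulAction (Gamma g)ᵐᵒᵖ X]

lemma exists_boundary_eq_sub (x : X) {w w' : List (Letter g)} (h : wordG w = wordG w') :
    ∃ n, wordChain x w - wordChain x w' = boundary g n := by
  have hquot := apply_eq_of_wordG_eq (fun w => (Submodule.Quotient.mk (wordChain x w) :
    Chain g X ⧸ LinearMap.range (boundary g (X := X)))) ?_ ?_ h
  · obtain ⟨n, hn⟩ := (Submodule.Quotient.eq _).1 hquot
    exact ⟨n, hn.symm⟩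
  · intro a b l
    have hcancel : wordChain x (a ++ l :: invLetter l :: b) = wordChain x (a ++ b) := by
      rw [wordChain_append, wordChain_append, wordChain_cons, wordChain_cons, dartChain_invLetter,
        op_smul_letterG_invLetter]
      abel
    simp only [hcancel]
  · intro a b
    refine (Submodule.Quotient.eq _).2 ⟨Finsupp.single (x <• wordG a) 1, ?_⟩
    simp [boundary_single, wordChain_append, wordG_relatorWord]

lemma exists_boundary_eq_sub_of_conj {x : X} {w w' : List (Letter g)} {y : Gamma g}
    (hx : x <• wordG w = x) (h : y * wordG w' * y⁻¹ = wordG w) :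
    ∃ n, wordChain x w - wordChain (x <• y) w' = boundary g n := by
  obtain ⟨v, rfl⟩ := exists_wordG_eq y
  obtain ⟨n, hn⟩ := exists_boundary_eq_sub x (w := w) (w' := v ++ w' ++ invWord v)
    (by simp [← h, mul_assoc])
  have hv : x <• (wordG v * wordG w') = x <• wordG v := by
    have hcomm : wordG v * wordG w' = wordG w * wordG v := by rw [← h]; group
    rw [hcomm, ← op_smul_op_smul, hx]
  refine ⟨n, ?_⟩
  rw [← hn, wordChain_append, wordChain_append, wordG_append, hv, wordChain_invWord]
  abel

lemma l1Norm_eq_zero {α : Type*} {z : α →₀ ℤ} : l1Norm z = 0 ↔ z = 0 := by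
  refine ⟨fun h => ?_, fun h => by rw [h, l1Norm_zero]⟩
  ext e
  exact abs_nonpos_iff.1 ((abs_apply_le_l1Norm z e).trans h.le)

open Classical in
lemma exists_word_of_divergence {z : Chain g X} {a b : X}
    (hz : ∀ v, divergence v z = (if v = a then 1 else 0) - (if v = b then 1 else 0)) :
    ∃ w : List (Letter g), a <• wordG w = b ∧ l1Norm (z - wordChain a w) + w.length = l1Norm z := by
  obtain ⟨N, hN⟩ := Int.eq_ofNat_of_zero_le (l1Norm_nonneg z)
  induction N generalizing z a with
  | zero =>
    have ha := hz a
    rw [l1Norm_eq_zero.1 hN] at ha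
    have hab : a = b := by
      by_contra hab
      simp [hab] at ha
    exact ⟨[], by simp [hab], by simp⟩
  | succ N ih =>
    by_cases hab : a = b
    · exact ⟨[], by simp [hab], by simp⟩
    obtain ⟨l, hl⟩ : ∃ l : Letter g, 0 < dartVal a l z := by
      by_contra! hle
      have ha := hz a
      rw [divergence_apply, if_pos rfl, if_neg hab] at ha
      have hsum := Finset.sum_nonpos fun l (_ : l ∈ Finset.univ) => hle l
      omega
    have hnorm := l1Norm_sub_dartChain_of_pos hl
    obtain ⟨w, hw, hlen⟩ := ih (z := z - dartChain a l) (a := a <• letterG l) (fun v => by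
      rw [Finsupp.coe_sub, map_sub, hz, divergence_dartChain]
      ring) (by push_cast at hN; omega)
    refine ⟨l :: w, by rw [wordG_cons, ← op_smul_op_smul, hw], ?_⟩
    rw [wordChain_cons, ← sub_sub, List.length_cons]
    push_cast
    omega

lemma exists_closed_word {z : Chain g X} (hz : ∀ v, divergence v z = 0) {x : X} {l : Letter g}
    (h : 0 < dartVal x l z) :
    ∃ w, x <• wordG (l :: w) = x ∧
      l1Norm (z - wordChain x (l :: w)) + (l :: w).length = l1Norm z := by
  classical
  obtain ⟨w, hw, hlen⟩ := exists_word_of_divergence (z := z - dartChain x l)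
    (a := x <• letterG l) (b := x) (fun v => by
      rw [Finsupp.coe_sub, map_sub, hz, divergence_dartChain]
      ring)
  refine ⟨w, by rw [wordG_cons, ← op_smul_op_smul, hw], ?_⟩
  rw [l1Norm_sub_dartChain_of_pos h] at hlen
  rw [wordChain_cons, ← sub_sub, List.length_cons]
  push_cast
  omega

lemma exists_closed_decomposition {z : Chain g X} (hz : ∀ v, divergence v z = 0) :
    ∃ ps : List (X × List (Letter g)), (∀ p ∈ ps, p.1 <• wordG p.2 = p.1) ∧
      z = (ps.map fun p => wordChain p.1 p.2).sum ∧
      ((ps.map fun p => p.2.length).sum : ℤ) = l1Norm z := by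
  obtain ⟨N, hN⟩ := Int.eq_ofNat_of_zero_le (l1Norm_nonneg z)
  induction N using Nat.strong_induction_on generalizing z with | _ N ih =>
  by_cases h0 : z = 0
  · exact ⟨[], by simp, by simp [h0], by simp [h0]⟩
  obtain ⟨y, l, hy⟩ : ∃ y l, 0 < dartVal y l z := by
    obtain ⟨⟨x, i⟩, he⟩ := Finsupp.ne_iff.1 h0
    rcases lt_or_gt_of_ne he with h | h
    · refine ⟨x <• letterG (i, true), invLetter (i, true), ?_⟩
      rw [dartVal_invLetter, dartVal_true]
      exact neg_pos.2 h
    · exact ⟨x, (i, true), h⟩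
  obtain ⟨w, hw, hlen⟩ := exists_closed_word hz hy
  have hnn := l1Norm_nonneg (z - wordChain y (l :: w))
  rw [List.length_cons] at hlen
  obtain ⟨ps, hclosed, hsum, hlength⟩ := ih (l1Norm (z - wordChain y (l :: w))).toNat
    (by push_cast at hlen; omega) (z := z - wordChain y (l :: w)) (fun v => by
      rw [Finsupp.coe_sub, map_sub, hz, divergence_wordChain_eq_zero hw, sub_zero])
    (Int.toNat_of_nonneg hnn).symm
  refine ⟨(y, l :: w) :: ps, List.forall_mem_cons.2 ⟨hw, hclosed⟩, ?_, ?_⟩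
  · rw [List.map_cons, List.sum_cons, ← hsum]
    abel
  · rw [List.map_cons, List.sum_cons, List.length_cons]
    push_cast at *
    omega

/-- The chain `z` has the smallest `ℓ¹`-norm in its homology class. -/
def IsMinimalChain (z : Chain g X) : Prop := ∀ n, l1Norm z ≤ l1Norm (z - boundary g n)

lemma exists_isMinimalChain (z : Chain g X) : ∃ n, IsMinimalChain (z - boundary g n) := by
  let norm : (X →₀ ℤ) → ℕ := fun n => (l1Norm (z - boundary g n)).toNat
  refine ⟨Function.argmin norm, fun m => ?_⟩
  have hle : (l1Norm (z - boundary g (Function.argmin norm))).toNat ≤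
      (l1Norm (z - boundary g (Function.argmin norm + m))).toNat := Function.argmin_le norm _
  have hnn := l1Norm_nonneg (z - boundary g (Function.argmin norm + m))
  rw [sub_sub, ← map_add]
  omega

lemma IsMinimalChain.isCoreDart_of_pos {z : Chain g X} (hm : IsMinimalChain z)
    (hz : ∀ v, divergence v z = 0) {x : X} {l : Letter g} (h : 0 < dartVal x l z) :
    IsCoreDart x l := by
  obtain ⟨w, hw, hlen⟩ := exists_closed_word hz h
  refine ⟨w, ⟨fun h1 => ?_, fun w' y hy => ?_⟩, hw⟩
  · obtain ⟨n, hn⟩ := exists_boundary_eq_sub x (w := l :: w) (w' := []) h1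
    have hmin := hm n
    rw [wordChain_nil, sub_zero] at hn
    rw [← hn] at hmin
    rw [List.length_cons] at hlen
    push_cast at hlen
    omega
  · obtain ⟨n, hn⟩ := exists_boundary_eq_sub_of_conj hw hy
    have hmin := hm n
    have hsub : z - boundary g n = (z - wordChain x (l :: w)) + wordChain (x <• y) w' := by
      rw [← hn]
      abel
    rw [hsub] at hmin
    have hadd := l1Norm_add_le (z - wordChain x (l :: w)) (wordChain (x <• y) w')
    have hw' := l1Norm_wordChain_le (x <• y) w'
    omega

lemma IsMinimalChain.isCoreDart {z : Chain g X} (hm : IsMinimalChain z)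
    (hz : ∀ v, divergence v z = 0) {x : X} {l : Letter g} (h : dartVal x l z ≠ 0) :
    IsCoreDart x l := by
  rcases lt_or_gt_of_ne h with h | h
  · have hrev : 0 < dartVal (x <• letterG l) (invLetter l) z := by
      rw [dartVal_invLetter]
      exact neg_pos.2 h
    simpa using (hm.isCoreDart_of_pos hz hrev).inv
  · exact hm.isCoreDart_of_pos hz h

lemma one_le_dartVal_wordChain {x : X} {a b : List (Letter g)} {l : Letter g}
    (h : l1Norm (wordChain x (a ++ l :: b)) = (a ++ l :: b).length) :
    1 ≤ dartVal (x <• wordG a) l (wordChain x (a ++ l :: b)) := by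
  by_contra! hc
  have hnorm := l1Norm_sub_dartChain_of_nonpos (Int.lt_add_one_iff.1 hc)
  have hrest : wordChain x (a ++ l :: b) - dartChain (x <• wordG a) l =
      wordChain x a + wordChain (x <• wordG a <• letterG l) b := by
    rw [wordChain_append, wordChain_cons]
    abel
  rw [hrest, h] at hnorm
  have hadd := l1Norm_add_le (wordChain x a) (wordChain (x <• wordG a <• letterG l) b)
  have ha := l1Norm_wordChain_le x a
  have hb := l1Norm_wordChain_le (x <• wordG a <• letterG l) b
  rw [List.length_append, List.length_cons] at hnorm
  push_cast at hnorm
  omega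

end Minimal

/-! ### Hermite's identity and multiples of chains -/

section Hermite

lemma sum_add_ediv_add_one {k : ℕ} (hk : k ≠ 0) (a : ℤ) :
    ∑ i : Fin k, (a + 1 + (i : ℕ)) / (k : ℤ) = ∑ i : Fin k, (a + (i : ℕ)) / (k : ℤ) + 1 := by
  rw [Fin.sum_univ_eq_sum_range (fun i => (a + 1 + (i : ℕ)) / (k : ℤ)),
    Fin.sum_univ_eq_sum_range (fun i => (a + (i : ℕ)) / (k : ℤ))]
  have hshift : ∀ i : ℕ, (a + 1 + (i : ℕ)) / (k : ℤ) = (a + ((i + 1 : ℕ) : ℤ)) / (k : ℤ) :=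
    fun i => by congr 1; push_cast; ring
  have htelescope := (Finset.sum_range_succ' (fun i : ℕ => (a + (i : ℕ)) / (k : ℤ)) k).symm.trans
    (Finset.sum_range_succ _ k)
  rw [Int.add_ediv_of_dvd_right dvd_rfl, Int.ediv_self (Nat.cast_ne_zero.2 hk), Nat.cast_zero,
    add_zero] at htelescope
  simp only [hshift]
  omega

lemma sum_add_ediv {k : ℕ} (hk : k ≠ 0) (a : ℤ) : ∑ i : Fin k, (a + (i : ℕ)) / (k : ℤ) = a := by
  induction a using Int.induction_on with
  | zero =>
    refine Finset.sum_eq_zero fun i _ => ?_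
    rw [zero_add]
    exact Int.ediv_eq_zero_of_lt (by positivity) (by exact_mod_cast i.2)
  | succ a ih => rw [sum_add_ediv_add_one hk, ih]
  | pred a ih =>
    have hstep := sum_add_ediv_add_one hk (-(a : ℤ) - 1)
    rw [sub_add_cancel, ih] at hstep
    omega

lemma sum_abs_sub_ediv_sub_ediv {k : ℕ} (hk : k ≠ 0) (z a b : ℤ) :
    ∑ i : Fin k, |z - ((a + (i : ℕ)) / (k : ℤ) - (b + (i : ℕ)) / (k : ℤ))| =
      |k * z - (a - b)| := by
  have hkpos : (0 : ℤ) < k := by exact_mod_cast hk.bot_lt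
  have hsum : ∑ i : Fin k, (z - ((a + (i : ℕ)) / (k : ℤ) - (b + (i : ℕ)) / (k : ℤ))) =
      k * z - (a - b) := by
    rw [Finset.sum_sub_distrib, Finset.sum_sub_distrib, sum_add_ediv hk, sum_add_ediv hk]
    simp
  have hdiv : ∀ i : Fin k, (b + (i : ℕ) + k * z) / (k : ℤ) = (b + (i : ℕ)) / (k : ℤ) + z :=
    fun i => Int.add_mul_ediv_left _ _ (ne_of_gt hkpos)
  -- All the summands have the sign of `k * z - (a - b)`.
  rcases le_total (a - b) (k * z) with h | h
  · rw [abs_of_nonneg (by omega), ← hsum]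
    refine Finset.sum_congr rfl fun i _ => abs_of_nonneg ?_
    have hle : (a + (i : ℕ)) / (k : ℤ) ≤ (b + (i : ℕ) + k * z) / (k : ℤ) :=
      Int.ediv_le_ediv hkpos (by omega)
    rw [hdiv] at hle
    omega
  · rw [abs_of_nonpos (by omega), ← hsum, ← Finset.sum_neg_distrib]
    refine Finset.sum_congr rfl fun i _ => abs_of_nonpos ?_
    have hle : (b + (i : ℕ) + k * z) / (k : ℤ) ≤ (a + (i : ℕ)) / (k : ℤ) :=
      Int.ediv_le_ediv hkpos (by omega)
    rw [hdiv] at hle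
    omega

variable {g : ℕ} {X : Type*} [MulAction (Gamma g)ᵐᵒᵖ X]

/-- The `i`-th of the `k` integral parts into which Hermite's identity splits a chain `n`. -/
def hermitePart {α : Type*} (n : α →₀ ℤ) (k : ℕ) (i : Fin k) : α →₀ ℤ :=
  n.mapRange (fun a => (a + (i : ℕ)) / (k : ℤ)) (by
    rw [zero_add]
    exact Int.ediv_eq_zero_of_lt (by positivity) (by exact_mod_cast i.2))

lemma sum_l1Norm_sub_boundary_hermitePart {k : ℕ} (hk : k ≠ 0) (z : Chain g X) (n : X →₀ ℤ) :
    ∑ i : Fin k, l1Norm (z - boundary g (hermitePart n k i)) =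
      l1Norm ((k : ℤ) • z - boundary g n) := by
  classical
  let S : Finset (X × Fin (2 * g)) := ((k : ℤ) • z - boundary g n).support ∪
    Finset.univ.biUnion fun i : Fin k => (z - boundary g (hermitePart n k i)).support
  have hS : ∀ i : Fin k, (z - boundary g (hermitePart n k i)).support ⊆ S := fun i =>
    (Finset.subset_biUnion_of_mem (fun i : Fin k => (z - boundary g (hermitePart n k i)).support)
      (Finset.mem_univ i)).trans Finset.subset_union_right
  rw [l1Norm_eq_sum (S := S) Finset.subset_union_left]
  simp only [fun i => l1Norm_eq_sum (hS i)]
  rw [Finset.sum_comm]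
  refine Finset.sum_congr rfl ?_
  rintro ⟨x, j⟩ -
  have hval : ∀ m : X →₀ ℤ, boundary g m (x, j) =
      m (leftFace x (j, true)) - m (rightFace x (j, true)) := fun m => by
    rw [← dartVal_boundary, dartVal_true]
  simp only [Finsupp.coe_sub, Pi.sub_apply, hval, Finsupp.coe_smul, Pi.smul_apply, smul_eq_mul]
  exact sum_abs_sub_ediv_sub_ediv hk _ _ _

lemma mul_le_l1Norm_smul_sub_boundary {k : ℕ} (hk : k ≠ 0) {z : Chain g X} {c : ℤ}
    (h : ∀ n, c ≤ l1Norm (z - boundary g n)) (n : X →₀ ℤ) :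
    k * c ≤ l1Norm ((k : ℤ) • z - boundary g n) := by
  rw [← sum_l1Norm_sub_boundary_hermitePart hk]
  calc (k : ℤ) * c = ∑ _i : Fin k, c := by simp
    _ ≤ _ := Finset.sum_le_sum fun i _ => h _

end Hermite

/-! ### Stable norms in the annular cover -/

section Stable

variable {g : ℕ}

/-- A chosen representative of a coset. -/
def cosetRep {C : Subgroup (Gamma g)} (x : Cos g C) : Gamma g := Quotient.out x

lemma mkCos_cosetRep {C : Subgroup (Gamma g)} (x : Cos g C) : mkCos g C (cosetRep x) = x :=
  Quotient.out_eq x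

/-- The Schreier cocycle `Cos g C × Γ_g → C` of the chosen coset representatives. -/
def schreierCocycle {C : Subgroup (Gamma g)} (x : Cos g C) (a : Gamma g) : C :=
  ⟨cosetRep x * a * (cosetRep (x <• a))⁻¹, by
    rw [← mkCos_eq_mkCos, mkCos_cosetRep, ← op_smul_mkCos, mkCos_cosetRep]⟩

lemma schreierCocycle_mul {C : Subgroup (Gamma g)} (x : Cos g C) (a b : Gamma g) :
    schreierCocycle x (a * b) = schreierCocycle x a * schreierCocycle (x <• a) b := by
  ext
  simp only [schreierCocycle, Subgroup.coe_mul, op_smul_op_smul]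
  group

lemma schreierCocycle_one {C : Subgroup (Gamma g)} (x : Cos g C) : schreierCocycle x 1 = 1 := by
  ext
  simp [schreierCocycle]

lemma coe_schreierCocycle_of_op_smul_eq {C : Subgroup (Gamma g)} {x : Cos g C} {a : Gamma g}
    (h : x <• a = x) :
    (schreierCocycle x a : Gamma g) = cosetRep x * a * (cosetRep x)⁻¹ := by
  simp only [schreierCocycle, h]

lemma schreierCocycle_eq_one_iff {C : Subgroup (Gamma g)} {x : Cos g C} {a : Gamma g}
    (h : x <• a = x) : schreierCocycle x a = 1 ↔ a = 1 := by
  rw [← OneMemClass.coe_eq_one, coe_schreierCocycle_of_op_smul_eq h, conj_eq_one_iff]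

section Period

variable {C : Subgroup (Gamma g)} {M : Type*} [CommGroup M] (ψ : C →* M)

/-- The integral over a chain of the Schreier cocycle, with coefficients in an abelian image of the
subgroup: it computes the class of a cycle in the homology of the cover. -/
def period : Chain g (Cos g C) →+ Additive M :=
  Finsupp.liftAddHom fun e : Cos g C × Fin (2 * g) =>
    zmultiplesHom (Additive M) (Additive.ofMul (ψ (schreierCocycle e.1 (letterG (e.2, true)))))

lemma period_dartChain (x : Cos g C) (l : Letter g) :
    period ψ (dartChain x l) = Additive.ofMul (ψ (schreierCocycle x (letterG l))) := by
  rcases l with ⟨i, _ | _⟩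
  · have hinv : letterG ((i, true) : Letter g) = (letterG ((i, false) : Letter g))⁻¹ := by
      simp [letterG]
    simp only [dartChain, Bool.false_eq_true, if_false, map_neg, period,
      Finsupp.liftAddHom_apply_single, zmultiplesHom_apply, one_smul]
    rw [← ofMul_inv, EmbeddingLike.apply_eq_iff_eq, inv_eq_iff_mul_eq_one, mul_comm (ψ _), hinv,
      ← map_mul, ← schreierCocycle_mul, mul_inv_cancel, schreierCocycle_one, map_one]
  · simp [dartChain, period]

lemma period_wordChain (x : Cos g C) (w : List (Letter g)) :
    period ψ (wordChain x w) = Additive.ofMul (ψ (schreierCocycle x (wordG w))) := by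
  induction w generalizing x with
  | nil => simp [schreierCocycle_one]
  | cons l w ih =>
    rw [wordChain_cons, map_add, ih, period_dartChain, wordG_cons, schreierCocycle_mul, map_mul,
      ofMul_mul]

lemma period_boundary (n : Cos g C →₀ ℤ) : period ψ (boundary g n) = 0 := by
  induction n using Finsupp.induction_linear with
  | zero => simp
  | add a b ha hb => rw [map_add, map_add, ha, hb, add_zero]
  | single f a =>
    rw [boundary_single, map_zsmul, period_wordChain, wordG_relatorWord, schreierCocycle_one]
    simp

lemma exists_closed_word_of_period_ne_zero {z : Chain g (Cos g C)}
    (hz : ∀ v, divergence v z = 0) (hψ : period ψ z ≠ 0) :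
    ∃ (u : Cos g C) (w : List (Letter g)), u <• wordG w = u ∧ wordG w ≠ 1 ∧
      (w.length : ℤ) ≤ l1Norm z := by
  obtain ⟨ps, hps, hzps, hlen⟩ := exists_closed_decomposition hz
  rw [hzps, map_list_sum, List.map_map] at hψ
  obtain ⟨⟨u, w⟩, hp, hne⟩ : ∃ p ∈ ps, period ψ (wordChain p.1 p.2) ≠ 0 := by
    by_contra! hzero
    exact hψ (List.sum_eq_zero (List.forall_mem_map.2 hzero))
  refine ⟨u, w, hps _ hp, fun h1 => hne ?_, ?_⟩
  · rw [period_wordChain, h1, schreierCocycle_one, map_one, ofMul_one]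
  · rw [← hlen]
    refine List.single_le_sum ?_ _ (List.mem_map.2 ⟨_, hp, rfl⟩)
    simp only [List.mem_map]
    rintro _ ⟨p, -, rfl⟩
    positivity

end Period

namespace IsCyclicallyShortest

variable {X : Type*} [MulAction (Gamma g)ᵐᵒᵖ X]

/-- If `w` were conjugate to a power `b ^ k` with `k ≥ 2`, then `k` loops `b` would be homologous
to a loop of length at most `c`, and Hermite's identity would halve `c`. -/
lemma length_le_of_conj_eq_pow {b w : List (Letter g)} (hb : IsCyclicallyShortest b) {p : X}
    (hp : p <• wordG b = p) {c : ℤ} (hc : ∀ n, c ≤ l1Norm (wordChain p b - boundary g n))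
    {v : Gamma g} {k : ℕ} (hv : v * wordG w * v⁻¹ = wordG b ^ k) (hw : wordG w ≠ 1)
    (hwc : (w.length : ℤ) ≤ c) : (b.length : ℤ) ≤ c := by
  have hk : k ≠ 0 := by
    rintro rfl
    exact hw (by simpa using hv)
  have hpk : p <• wordG (wordPow b k) = p := by
    rw [wordG_wordPow]
    have hstab : MulOpposite.op (wordG b) ∈ MulAction.stabilizer _ p := hp
    exact pow_mem hstab k
  obtain ⟨n, hn⟩ := exists_boundary_eq_sub_of_conj hpk (hv.trans (wordG_wordPow b k).symm)
  have hkc : k * c ≤ w.length := calc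
    k * c ≤ l1Norm ((k : ℤ) • wordChain p b - boundary g n) :=
      mul_le_l1Norm_smul_sub_boundary hk hc n
    _ = l1Norm (wordChain (p <• v) w) := by
      rw [← hn, wordChain_wordPow hp, sub_sub_cancel]
    _ ≤ w.length := l1Norm_wordChain_le _ _
  have hw0 : 0 < w.length := List.length_pos_of_ne_nil (by rintro rfl; exact hw rfl)
  have hk1 : k = 1 := by
    have hle : (k : ℤ) ≤ 1 := le_of_mul_le_mul_right (by omega : (k : ℤ) * c ≤ 1 * c) (by omega)
    omega
  have hbw := hb.2 w v (by rw [hv, hk1, pow_one])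
  omega

lemma length_le_of_conj_eq_zpow {b w : List (Letter g)} (hb : IsCyclicallyShortest b) {p : X}
    (hp : p <• wordG b = p) {c : ℤ} (hc : ∀ n, c ≤ l1Norm (wordChain p b - boundary g n))
    {v : Gamma g} {k : ℤ} (hv : v * wordG w * v⁻¹ = wordG b ^ k) (hw : wordG w ≠ 1)
    (hwc : (w.length : ℤ) ≤ c) : (b.length : ℤ) ≤ c := by
  obtain ⟨j, rfl | rfl⟩ := Int.eq_nat_or_neg k
  · exact hb.length_le_of_conj_eq_pow hp hc (by rw [hv, zpow_natCast]) hw hwc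
  · have hp' : p <• wordG (CS.invWord b) = p := by
      rw [wordG_invWord]
      exact (op_smul_eq_iff.1 hp).symm
    have hchain : wordChain p (CS.invWord b) = -wordChain p b := by
      have := wordChain_invWord p b
      rwa [hp] at this
    have hc' : ∀ n, c ≤ l1Norm (wordChain p (CS.invWord b) - boundary g n) := fun n => by
      rw [hchain, ← l1Norm_neg, neg_sub, sub_neg_eq_add, add_comm, ← sub_neg_eq_add, ← map_neg]
      exact hc (-n)
    simpa using hb.invWord.length_le_of_conj_eq_pow hp' hc'
      (by rw [hv, wordG_invWord, zpow_neg, zpow_natCast, inv_pow]) hw hwc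

variable {a : List (Letter g)} {x h : Gamma g}

lemma op_smul_mkCos_zpowers (hh : x * wordG a * x⁻¹ = h) :
    mkCos g (Subgroup.zpowers h) x <• wordG a = mkCos g (Subgroup.zpowers h) x := by
  rw [op_smul_mkCos, eq_comm, mkCos_eq_mkCos, hh]
  exact Subgroup.mem_zpowers h

theorem length_le_l1Norm_sub_boundary (ha : IsCyclicallyShortest a)
    (hh : x * wordG a * x⁻¹ = h) (m : Cos g (Subgroup.zpowers h) →₀ ℤ) :
    (a.length : ℤ) ≤
      l1Norm (wordChain (mkCos g (Subgroup.zpowers h) x) a - boundary g m) := by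
  let _ : CommGroup (Subgroup.zpowers h) :=
    { (inferInstance : Group (Subgroup.zpowers h)) with mul_comm := mul_comm' }
  have hcl := op_smul_mkCos_zpowers hh
  obtain ⟨n, hn⟩ := exists_isMinimalChain (wordChain (mkCos g (Subgroup.zpowers h) x) a)
  have hmin : ∀ m, l1Norm (wordChain (mkCos g (Subgroup.zpowers h) x) a - boundary g n) ≤
      l1Norm (wordChain (mkCos g (Subgroup.zpowers h) x) a - boundary g m) := fun m => by
    simpa [sub_sub, ← map_add] using hn (m - n)
  refine le_trans ?_ (hmin m)
  obtain ⟨u, w, hu, hw, hlen⟩ := exists_closed_word_of_period_ne_zero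
    (MonoidHom.id (Subgroup.zpowers h)) (z := wordChain (mkCos g _ x) a - boundary g n)
    (fun v => by
      rw [Finsupp.coe_sub, map_sub, divergence_boundary, divergence_wordChain_eq_zero hcl,
        sub_zero])
    (by
      rw [map_sub, period_boundary, sub_zero, period_wordChain]
      exact fun h0 => ha.1 ((schreierCocycle_eq_one_iff hcl).1 h0))
  obtain ⟨k, hk⟩ := Subgroup.mem_zpowers_iff.1 (schreierCocycle u (wordG w)).2
  rw [coe_schreierCocycle_of_op_smul_eq hu] at hk
  have ha' : wordG a = x⁻¹ * h * x⁻¹⁻¹ := by rw [← hh]; group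
  refine ha.length_le_of_conj_eq_zpow hcl hmin (v := x⁻¹ * cosetRep u) (k := k) ?_ hw hlen
  calc x⁻¹ * cosetRep u * wordG w * (x⁻¹ * cosetRep u)⁻¹
      = x⁻¹ * (cosetRep u * wordG w * (cosetRep u)⁻¹) * x := by group
    _ = wordG a ^ k := by rw [← hk, ha', conj_zpow, inv_inv]

lemma l1Norm_wordChain (ha : IsCyclicallyShortest a) (hh : x * wordG a * x⁻¹ = h) :
    l1Norm (wordChain (mkCos g (Subgroup.zpowers h) x) a) = a.length :=
  (l1Norm_wordChain_le _ _).antisymm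
    (by simpa using ha.length_le_l1Norm_sub_boundary hh 0)

/-- The line covering a shortest loop of the annulus is locally `ℓ¹`-minimal in the universal
cover. A compactly supported variation is pushed down to an `N`-fold multiple of the loop, with
`N` so large that the `ℓ¹`-norm is linear along it. -/
theorem l1Variation_boundary_nonneg (ha : IsCyclicallyShortest a)
    (hh : x * wordG a * x⁻¹ = h) (n : Gamma g →₀ ℤ) :
    0 ≤ l1Variation (wordChain (mkCos g (Subgroup.zpowers h) x) a ∘
      Prod.map (mkCos g (Subgroup.zpowers h)) id) (boundary g n) := by
  obtain ⟨N, hN⟩ := Int.eq_ofNat_of_zero_le (l1Norm_nonneg (boundary g n))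
  have hslope := l1Norm_smul_add_mapDomain_le
    (Prod.map (mkCos g (Subgroup.zpowers h)) (id : Fin (2 * g) → Fin (2 * g)))
    (wordChain (mkCos g (Subgroup.zpowers h) x) a) (boundary g n) (N := N + 1) (by omega)
  have hpush := pushChain_boundary (cosetHom (Subgroup.zpowers h)) n
  have hmin := mul_le_l1Norm_smul_sub_boundary N.succ_ne_zero
    (ha.length_le_l1Norm_sub_boundary hh)
    (-n.mapDomain (mkCos g (Subgroup.zpowers h)))
  rw [map_neg, sub_neg_eq_add] at hmin
  rw [ha.l1Norm_wordChain hh] at hslope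
  have hle := hmin.trans ((congrArg (fun t => l1Norm (_ + t)) hpush.symm).le.trans hslope)
  linarith

end IsCyclicallyShortest

end Stable

/-! ### Duality: potentials on the faces -/

section Potential

variable {g : ℕ}

/-- The sum of a function on darts along the path reading a word. -/
def wordSum (F : Gamma g → Letter g → ℤ) : Gamma g → List (Letter g) → ℤ
  | _, [] => 0
  | v, l :: w => F v l + wordSum F (v <• letterG l) w

lemma wordSum_append (F : Gamma g → Letter g → ℤ) (v : Gamma g) (a b : List (Letter g)) :
    wordSum F v (a ++ b) = wordSum F v a + wordSum F (v <• wordG a) b := by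
  induction a generalizing v with
  | nil => simp [wordSum]
  | cons l a ih => simp [wordSum, ih, mul_assoc, add_assoc]

lemma exists_wordSum_eq_sub (F : Gamma g → Letter g → ℤ)
    (hinv : ∀ v l, F v l + F (v <• letterG l) (invLetter l) = 0)
    (hrel : ∀ v, wordSum F v (relatorWord g) = 0) :
    ∃ t : Gamma g → ℤ, ∀ v w, wordSum F v w = t (v <• wordG w) - t v := by
  have hwell : ∀ {w w' : List (Letter g)}, wordG w = wordG w' →
      wordSum F 1 w = wordSum F 1 w' := by
    refine apply_eq_of_wordG_eq (wordSum F 1) (fun a b l => ?_) fun a b => ?_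
    · have hl := hinv (1 <• wordG a) l
      simp only [wordSum_append, wordSum, op_smul_letterG_invLetter]
      linarith
    · simp [wordSum_append, hrel, wordG_relatorWord]
  choose word hword using exists_wordG_eq (g := g)
  refine ⟨fun v => wordSum F 1 (word v), fun v w => ?_⟩
  have hsum : wordSum F 1 (word (v <• wordG w)) = wordSum F 1 (word v ++ w) :=
    hwell (by simp [hword])
  change wordSum F v w = wordSum F 1 (word (v <• wordG w)) - wordSum F 1 (word v)
  rw [hsum, wordSum_append, hword, op_smul_eq_mul, one_mul, add_sub_cancel_left]

lemma exists_cornerPotential {X : Type*} [MulAction (Gamma g)ᵐᵒᵖ X] (k : X × Fin (2 * g) → ℤ)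
    (hk : ∀ v, divergence v k = 0) :
    ∃ U : X → Letter g → ℤ, ∀ v l, U v (nextLetter (invLetter l)) = U v l + dartVal v l k := by
  classical
  refine ⟨fun v l => ∑ m with posLv m < posLv l, dartVal v m k, fun v l => ?_⟩
  have hsucc : ∑ m with posLv m < posLv l, dartVal v m k + dartVal v l k =
      ∑ m with posLv m < posLv l + 1, dartVal v m k := by
    have hfilter : Finset.univ.filter (fun m : Letter g => posLv m < posLv l + 1) =
        insert l (Finset.univ.filter fun m => posLv m < posLv l) := by
      ext m
      simp only [Finset.mem_filter_univ, Finset.mem_insert, Nat.lt_succ_iff_lt_or_eq,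
        posLv_injective.eq_iff, or_comm]
    rw [hfilter, Finset.sum_insert (by simp), add_comm]
  simp only [hsucc, posLv_nextLetter, posArr_eq_posLv_invLetter, invLetter_invLetter]
  rcases (Nat.succ_le_of_lt (posLv_lt l)).lt_or_eq with h | h
  · rw [Nat.mod_eq_of_lt h]
  · have hfull := hk v
    rw [divergence_apply] at hfull
    simpa [← Nat.succ_eq_add_one, h, posLv_lt] using hfull.symm

lemma wordSum_take_relatorWord (U : Gamma g → Letter g → ℤ) (hg : 0 < g) (f : Gamma g) {i : ℕ}
    (hi : i ≤ 4 * g) :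
    wordSum (fun v l => U (v <• letterG l) (nextLetter l) - U v l) f ((relatorWord g).take i) =
      U (f <• relPrefix g i) (relLetter (i % (4 * g)) (Nat.mod_lt _ (by omega))) -
        U f (relLetter 0 (by omega)) := by
  induction i with
  | zero => simp [wordSum, relPrefix_zero]
  | succ i ih =>
    have hi' : i < 4 * g := hi
    rw [take_succ_relatorWord i hi', wordSum_append, ih hi'.le, relPrefix_succ i hi']
    simp only [wordSum, nextLetter, relIndex_relLetter, Nat.mod_eq_of_lt hi', op_smul_op_smul]
    rw [relPrefix]
    ring

theorem exists_facePotential (hg : 0 < g) (k : Gamma g × Fin (2 * g) → ℤ)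
    (hk : ∀ v, divergence v k = 0) :
    ∃ χ : Gamma g → ℤ, ∀ v l, dartVal v l k = χ (leftFace v l) - χ (rightFace v l) := by
  obtain ⟨U, hU⟩ := exists_cornerPotential k hk
  obtain ⟨t, ht⟩ := exists_wordSum_eq_sub
    (fun v l => U (v <• letterG l) (nextLetter l) - U v l)
    (fun v l => by
      have h1 := hU v l
      have h2 := hU (v <• letterG l) (invLetter l)
      rw [invLetter_invLetter, dartVal_invLetter] at h2
      simp only [op_smul_letterG_invLetter]
      linarith)
    (fun f => by
      have hrel := wordSum_take_relatorWord U hg f le_rfl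
      rw [List.take_of_length_le (by simp)] at hrel
      simp only [hrel, relPrefix_last, Nat.mod_self, MulOpposite.op_one, one_smul, sub_self])
  have hcorner : ∀ v l, t (leftFace v l) - U (leftFace v l) (relLetter 0 (by omega)) =
      t v - U v l := fun v l => by
    have hsum := wordSum_take_relatorWord U hg (leftFace v l) (relIndex_lt l).le
    have hv : leftFace v l <• relPrefix g (relIndex l) = v := by simp [leftFace]
    simp only [hv, Nat.mod_eq_of_lt (relIndex_lt l), relLetter_relIndex] at hsum
    rw [ht, ← relPrefix, hv] at hsum
    linarith
  refine ⟨fun f => t f - U f (relLetter 0 (by omega)), fun v l => ?_⟩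
  have hright : rightFace v l = leftFace v (nextLetter (invLetter l)) := by
    rw [rightFace, ← leftFace_nextLetter, op_smul_letterG_invLetter]
  simp only [hright, hcorner, hU]
  ring

end Potential

section Filling

variable {g : ℕ} {X : Type*} [MulAction (Gamma g)ᵐᵒᵖ X]

/-- The total mass of the negative part of a `2`-chain. -/
def negMass {α : Type*} (n : α →₀ ℤ) : ℕ := n.sum fun _ a => (-a).toNat

lemma negMass_eq_sum {α : Type*} {n : α →₀ ℤ} {S : Finset α} (h : n.support ⊆ S) :
    negMass n = ∑ e ∈ S, (-(n e)).toNat :=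
  Finsupp.sum_of_support_subset _ h _ (by simp)

/-- The `2`-chain `n` fills `u` down to a chain of minimal `ℓ¹`-norm, and has the least negative
mass among such fillings. -/
structure IsOptimalFilling (u : Chain g X) (n : X →₀ ℤ) : Prop where
  isMinimalChain : IsMinimalChain (u - boundary g n)
  negMass_le : ∀ m, l1Norm (u - boundary g m) ≤ l1Norm (u - boundary g n) → negMass n ≤ negMass m

lemma exists_isOptimalFilling (u : Chain g X) : ∃ n, IsOptimalFilling u n := by
  obtain ⟨n, hn, hneg⟩ := (measure (negMass (α := X))).wf.has_min
    {n | IsMinimalChain (u - boundary g n)} (exists_isMinimalChain u)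
  refine ⟨n, hn, fun m hm => not_lt.1 (hneg m fun q => hm.trans ?_)⟩
  simpa [sub_sub, ← map_add] using hn (m + q - n)

/-- Raising the coefficient of one or both faces adjacent to an edge, where it is negative and the
potential nonpositive, does not increase the norm plus the first variation on that edge. -/
lemma abs_sub_add_variation_le {w a b p q : ℤ} (ha : 0 < w → 1 ≤ a) (hb : 0 < -w → 1 ≤ b) :
    |w - (p - q + ((if p < 0 ∧ a ≤ 0 then 1 else 0) - (if q < 0 ∧ b ≤ 0 then 1 else 0)))| +
      (|a - b + ((if p < 0 ∧ a ≤ 0 then 1 else 0) - (if q < 0 ∧ b ≤ 0 then 1 else 0))| -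
        |a - b|) ≤ |w - (p - q)| := by
  split_ifs with hp hq hq
  all_goals
    simp only [abs_eq_max_neg]
    omega

lemma negMass_add_lt {α : Type*} {n o : α →₀ ℤ} {P : α → Prop} [DecidablePred P]
    (ho : ∀ t, o t = if n t < 0 ∧ P t then 1 else 0) {t : α} (ht : P t) (hn : n t < 0) :
    negMass (n + o) < negMass n := by
  have hsupp : (n + o).support ⊆ n.support := fun s hs => by
    rw [Finsupp.mem_support_iff] at hs ⊢
    intro h0
    simp [ho, h0] at hs
  rw [negMass_eq_sum hsupp, negMass_eq_sum subset_rfl]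
  refine Finset.sum_lt_sum (fun s _ => ?_) ⟨t, by simp [hn.ne], ?_⟩
  · rw [Finsupp.add_apply, ho]
    split_ifs <;> omega
  · rw [Finsupp.add_apply, ho, if_pos ⟨hn, ht⟩]
    omega

/-- Otherwise raising all negative coefficients on faces of nonpositive potential would give
another optimal filling, with less negative mass. -/
theorem IsOptimalFilling.nonneg {u : Chain g X} {n : X →₀ ℤ} (hn : IsOptimalFilling u n)
    {k : X × Fin (2 * g) → ℤ} {χ : X → ℤ}
    (hχ : ∀ v l, dartVal v l k = χ (leftFace v l) - χ (rightFace v l))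
    (hvar : ∀ m, 0 ≤ l1Variation k (boundary g m))
    (hu : ∀ v l, 0 < dartVal v l u → 1 ≤ χ (leftFace v l)) {t : X} (ht : χ t ≤ 0) : 0 ≤ n t := by
  by_contra! hneg
  let o : X →₀ ℤ := Finsupp.onFinset n.support (fun t => if n t < 0 ∧ χ t ≤ 0 then 1 else 0)
    fun t h => by
      rw [Finsupp.mem_support_iff]
      intro h0
      simp [h0] at h
  have ho : ∀ t, o t = if n t < 0 ∧ χ t ≤ 0 then 1 else 0 := fun _ => rfl
  refine (hn.negMass_le (n + o) ?_).not_gt (negMass_add_lt (P := fun t => χ t ≤ 0) ho ht hneg)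
  have hvo := hvar o
  classical
  let S := (u - boundary g (n + o)).support ∪ (u - boundary g n).support ∪ (boundary g o).support
  rw [l1Variation_eq_sum k (S := S) Finset.subset_union_right] at hvo
  rw [l1Norm_eq_sum (z := u - boundary g (n + o)) (S := S)
      (Finset.subset_union_left.trans Finset.subset_union_left),
    l1Norm_eq_sum (z := u - boundary g n) (S := S)
      (Finset.subset_union_right.trans Finset.subset_union_left)]
  refine (le_add_of_nonneg_right hvo).trans ?_
  rw [← Finset.sum_add_distrib]
  refine Finset.sum_le_sum ?_
  rintro ⟨x, i⟩ -
  have hright := hu (x <• letterG (i, true)) (invLetter (i, true))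
  rw [dartVal_invLetter, ← rightFace, dartVal_true] at hright
  have hleft := hu x (i, true)
  rw [dartVal_true] at hleft
  have hedge := abs_sub_add_variation_le hleft hright (p := n (leftFace x (i, true)))
    (q := n (rightFace x (i, true)))
  have hk := hχ x (i, true)
  have hbn := dartVal_boundary n x (i, true)
  have hbo := dartVal_boundary o x (i, true)
  rw [dartVal_true] at hk hbn hbo
  simp only [map_add, Finsupp.coe_sub, Finsupp.coe_add, Pi.sub_apply, Pi.add_apply, hbn, hbo, hk,
    ho]
  exact hedge

end Filling

/-! ### Walks and infinite paths -/

section Paths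

variable {g : ℕ} {X Y : Type*} [MulAction (Gamma g)ᵐᵒᵖ X] [MulAction (Gamma g)ᵐᵒᵖ Y]

/-- The walk from `x` reading `w` passes along the dart leaving `y` along `m`. -/
def Traverses (x : X) (w : List (Letter g)) (y : X) (m : Letter g) : Prop :=
  ∃ a b, w = a ++ m :: b ∧ y = x <• wordG a

lemma not_traverses_nil (x y : X) (m : Letter g) : ¬ Traverses x [] y m := by
  rintro ⟨a, b, hab, -⟩
  simp at hab

lemma traverses_cons {x y : X} {l m : Letter g} {w : List (Letter g)} :
    Traverses x (l :: w) y m ↔ (y = x ∧ m = l) ∨ Traverses (x <• letterG l) w y m := by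
  constructor
  · rintro ⟨_ | ⟨l', a⟩, b, hab, rfl⟩
    · rw [List.nil_append, List.cons.injEq] at hab
      exact Or.inl ⟨by simp, hab.1.symm⟩
    · rw [List.cons_append, List.cons.injEq] at hab
      obtain ⟨rfl, rfl⟩ := hab
      exact Or.inr ⟨a, b, rfl, by rw [wordG_cons, op_smul_op_smul]⟩
  · rintro (⟨rfl, rfl⟩ | ⟨a, b, rfl, rfl⟩)
    · exact ⟨[], w, rfl, by simp⟩
    · exact ⟨l :: a, b, rfl, by rw [wordG_cons, op_smul_op_smul]⟩

lemma traverses_append {x y : X} {m : Letter g} {w w' : List (Letter g)} :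
    Traverses x (w ++ w') y m ↔ Traverses x w y m ∨ Traverses (x <• wordG w) w' y m := by
  induction w generalizing x with
  | nil => simp [not_traverses_nil]
  | cons l w ih =>
    rw [List.cons_append, traverses_cons, traverses_cons, ih, or_assoc, wordG_cons,
      op_smul_op_smul]

lemma Traverses.map (φ : X →[(Gamma g)ᵐᵒᵖ] Y) {x y : X} {w : List (Letter g)} {m : Letter g}
    (h : Traverses x w y m) : Traverses (φ x) w (φ y) m := by
  obtain ⟨a, b, rfl, rfl⟩ := h
  exact ⟨a, b, rfl, map_smul _ _ _⟩

lemma IsCoreDart.of_traverses {x y : X} {w : List (Letter g)} {m : Letter g}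
    (hw : IsCyclicallyShortest w) (hx : x <• wordG w = x) (h : Traverses x w y m) :
    IsCoreDart y m := by
  obtain ⟨a, b, rfl, rfl⟩ := h
  exact hw.isCoreDart hx

lemma traverses_of_dartVal_pos {x y : X} {w : List (Letter g)} {m : Letter g}
    (h : 0 < dartVal y m (wordChain x w)) : Traverses x w y m := by
  classical
  induction w generalizing x with
  | nil => simp at h
  | cons l w ih =>
    rw [wordChain_cons, Finsupp.coe_add, map_add, dartVal_dartChain] at h
    rw [traverses_cons]
    refine or_iff_not_imp_left.2 fun hne => ih ?_
    rw [if_neg hne] at h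
    split_ifs at h <;> omega

lemma traverses_of_dartVal_ne_zero {x y : X} {w : List (Letter g)} {m : Letter g}
    (h : dartVal y m (wordChain x w) ≠ 0) :
    Traverses x w y m ∨ Traverses x w (y <• letterG m) (invLetter m) := by
  rcases h.lt_or_gt with hneg | hpos
  · exact Or.inr (traverses_of_dartVal_pos (by rw [dartVal_invLetter]; omega))
  · exact Or.inl (traverses_of_dartVal_pos hpos)

lemma Traverses.one_le_dartVal {x y : X} {w : List (Letter g)} {m : Letter g}
    (h : Traverses x w y m) (hw : l1Norm (wordChain x w) = w.length) :
    1 ≤ dartVal y m (wordChain x w) := by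
  obtain ⟨a, b, rfl, rfl⟩ := h
  exact one_le_dartVal_wordChain hw

lemma l1Norm_wordChain_eq_length {x : X} {w : List (Letter g)}
    (h : ∀ y m, Traverses x w y m → ¬ Traverses x w (y <• letterG m) (invLetter m)) :
    l1Norm (wordChain x w) = w.length := by
  induction w generalizing x with
  | nil => simp
  | cons l w ih =>
    have hflip : wordChain x (l :: w) =
        wordChain (x <• letterG l) w - dartChain (x <• letterG l) (invLetter l) := by
      rw [wordChain_cons, dartChain_invLetter, sub_neg_eq_add, add_comm]
    have hnot := h x l (traverses_cons.2 (Or.inl ⟨rfl, rfl⟩))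
    rw [traverses_cons, not_or] at hnot
    rw [hflip, l1Norm_sub_dartChain_of_nonpos
      (not_lt.1 fun hpos => hnot.2 (traverses_of_dartVal_pos hpos)), ih fun y m hm hm' =>
      h y m (traverses_cons.2 (Or.inr hm)) (traverses_cons.2 (Or.inr hm'))]
    simp

/-- The word read by the first `n` steps of an infinite path with letters `ℓ`. -/
def pathWord (ℓ : ℕ → Letter g) (n : ℕ) : List (Letter g) := (List.range n).map ℓ

/-- The vertex reached after `n` steps by the infinite path from `x` with letters `ℓ`. -/
def pathVertex (x : X) (ℓ : ℕ → Letter g) (n : ℕ) : X := x <• wordG (pathWord ℓ n)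

@[simp] lemma length_pathWord (ℓ : ℕ → Letter g) (n : ℕ) : (pathWord ℓ n).length = n := by
  simp [pathWord]

lemma pathWord_succ (ℓ : ℕ → Letter g) (n : ℕ) : pathWord ℓ (n + 1) = pathWord ℓ n ++ [ℓ n] := by
  simp [pathWord, List.range_succ]

lemma pathWord_add (ℓ : ℕ → Letter g) (m n : ℕ) :
    pathWord ℓ (m + n) = pathWord ℓ m ++ pathWord (fun i => ℓ (m + i)) n := by
  simp [pathWord, List.range_add, Function.comp_def]

@[simp] lemma pathVertex_zero (x : X) (ℓ : ℕ → Letter g) : pathVertex x ℓ 0 = x := by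
  simp [pathVertex, pathWord]

lemma pathVertex_succ (x : X) (ℓ : ℕ → Letter g) (n : ℕ) :
    pathVertex x ℓ (n + 1) = pathVertex x ℓ n <• letterG (ℓ n) := by
  rw [pathVertex, pathWord_succ, wordG_append, pathVertex, op_smul_op_smul]
  simp

lemma map_pathVertex (φ : X →[(Gamma g)ᵐᵒᵖ] Y) (x : X) (ℓ : ℕ → Letter g) (n : ℕ) :
    φ (pathVertex x ℓ n) = pathVertex (φ x) ℓ n := map_smul _ _ _

lemma traverses_pathWord {x y : X} {m : Letter g} {ℓ : ℕ → Letter g} {n : ℕ} :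
    Traverses x (pathWord ℓ n) y m ↔ ∃ i < n, y = pathVertex x ℓ i ∧ m = ℓ i := by
  induction n with
  | zero => simp [pathWord, not_traverses_nil]
  | succ n ih =>
    rw [pathWord_succ, traverses_append, ih, traverses_cons, Nat.exists_lt_succ_right]
    simp [not_traverses_nil, pathVertex]

end Paths

/-! ### Extremal paths -/

section Extremal

variable {g : ℕ} {X : Type*} [MulAction (Gamma g)ᵐᵒᵖ X]

/-- An infinite path inside a system `K` of darts that turns as far as possible towards its left
faces, and each of whose darts lies on a closed walk inside `K` reading a cyclically shortest
word. -/
structure IsExtremalPath (K : X → Letter g → Prop) (x : X) (ℓ : ℕ → Letter g) : Prop where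
  not_mem_of_gapN_lt : ∀ i m, gapN (ℓ i) m < gapN (ℓ i) (ℓ (i + 1)) →
    ¬ K (pathVertex x ℓ (i + 1)) m
  exists_loop : ∀ i, ∃ a, IsCyclicallyShortest (ℓ i :: a) ∧
    pathVertex x ℓ i <• wordG (ℓ i :: a) = pathVertex x ℓ i ∧
    ∀ y m, Traverses (pathVertex x ℓ i) (ℓ i :: a) y m → K y m

lemma leftFace_potential_eq {χ : X → ℤ} {k : X × Fin (2 * g) → ℤ}
    (hχ : ∀ v l, dartVal v l k = χ (leftFace v l) - χ (rightFace v l)) {v : X} {s t : Letter g}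
    (h : ∀ m, gapN s m < gapN s t → dartVal (v <• letterG s) m k = 0) :
    χ (leftFace (v <• letterG s) t) = χ (leftFace v s) := by
  have hg : 0 < g := genus_pos s
  have hrot : ∀ j ≤ gapN s t,
      χ (leftFace (v <• letterG s) (letterAt hg (posArr s + 1 + j))) = χ (leftFace v s) := by
    intro j hj
    induction j with
    | zero => rw [add_zero, ← nextLetter_eq_letterAt, leftFace_nextLetter]
    | succ j ih =>
      have hzero := h (letterAt hg (posArr s + 1 + j))
        (by rw [gapN_letterAt hg s (by have := gapN_lt s t; omega)]; omega)
      rw [← ih (by omega), ← add_assoc, ← rightFace_letterAt]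
      rw [hχ] at hzero
      exact (sub_eq_zero.1 hzero).symm
  rw [eq_letterAt_gapN hg s t]
  exact hrot _ le_rfl

/-- The potential is dual to the line covering the loop. -/
lemma IsCyclicallyShortest.exists_potential {J : Subgroup (Gamma g)} (hg : 0 < g)
    {w : List (Letter g)} (hw : IsCyclicallyShortest w) {y : Gamma g}
    (hy : mkCos g J y <• wordG w = mkCos g J y) :
    ∃ (k : Gamma g × Fin (2 * g) → ℤ) (χ : Gamma g → ℤ),
      (∀ v l, dartVal v l k = χ (leftFace v l) - χ (rightFace v l)) ∧
      (∀ n, 0 ≤ l1Variation k (boundary g n)) ∧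
      (∀ m, Traverses y w y m → 1 ≤ dartVal y m k) ∧
      ∀ v m, dartVal v m k ≠ 0 → Traverses (mkCos g J y) w (mkCos g J v) m ∨
        Traverses (mkCos g J y) w (mkCos g J v <• letterG m) (invLetter m) := by
  obtain ⟨h, hh⟩ : ∃ h, y * wordG w * y⁻¹ = h := ⟨_, rfl⟩
  have hJ : Subgroup.zpowers h ≤ J := by
    rwa [Subgroup.zpowers_le, ← hh, ← mkCos_eq_mkCos, eq_comm, ← op_smul_mkCos]
  let z := wordChain (mkCos g (Subgroup.zpowers h) y) w
  have hval : ∀ v l, dartVal v l (z ∘ Prod.map (mkCos g (Subgroup.zpowers h)) id) =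
      dartVal (mkCos g (Subgroup.zpowers h) v) l z := dartVal_comp (cosetHom _) z
  obtain ⟨χ, hχ⟩ := exists_facePotential hg (z ∘ Prod.map (mkCos g (Subgroup.zpowers h)) id)
    fun v => by
      have hdiv := divergence_wordChain_eq_zero (IsCyclicallyShortest.op_smul_mkCos_zpowers hh)
        (mkCos g (Subgroup.zpowers h) v)
      simp only [divergence_apply, hval]
      simpa only [divergence_apply] using hdiv
  refine ⟨_, χ, hχ, hw.l1Variation_boundary_nonneg hh, fun m hm => ?_, fun v m hv => ?_⟩
  · rw [hval]
    exact (hm.map (cosetHom _)).one_le_dartVal (hw.l1Norm_wordChain hh)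
  · rw [hval] at hv
    exact (traverses_of_dartVal_ne_zero hv).imp (Traverses.map (coverHom hJ))
      (Traverses.map (coverHom hJ))

namespace IsExtremalPath

variable {J : Subgroup (Gamma g)} {K : Cos g J → Letter g → Prop} {x : Gamma g}
  {ℓ : ℕ → Letter g}

lemma exists_potential (hK : ∀ v l, K v l → K (v <• letterG l) (invLetter l))
    (hP : IsExtremalPath K (mkCos g J x) ℓ) (i : ℕ) :
    ∃ (k : Gamma g × Fin (2 * g) → ℤ) (χ : Gamma g → ℤ),
      (∀ v l, dartVal v l k = χ (leftFace v l) - χ (rightFace v l)) ∧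
      (∀ n, 0 ≤ l1Variation k (boundary g n)) ∧
      (∀ j, χ (leftFace (pathVertex x ℓ j) (ℓ j)) = 1) ∧
      χ (rightFace (pathVertex x ℓ i) (ℓ i)) ≤ 0 := by
  obtain ⟨a, ha, hcl, haK⟩ := hP.exists_loop i
  obtain ⟨k, χ, hχ, hvar, hpos, hsupp⟩ := ha.exists_potential (genus_pos (ℓ 0))
    (y := pathVertex x ℓ i) hcl
  have hk : ∀ v m, dartVal v m k ≠ 0 → K (mkCos g J v) m := fun v m hv =>
    (hsupp v m hv).elim (haK _ _) fun h => by simpa using hK _ _ (haK _ _ h)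
  have hconst : ∀ j, χ (leftFace (pathVertex x ℓ j) (ℓ j)) = χ (leftFace x (ℓ 0)) := by
    intro j
    induction j with
    | zero => rw [pathVertex_zero]
    | succ j ih =>
      rw [← ih, pathVertex_succ]
      refine leftFace_potential_eq hχ fun m hm => ?_
      rw [← pathVertex_succ]
      exact not_not.1 fun hne => hP.not_mem_of_gapN_lt j m hm (hk _ _ hne)
  refine ⟨k, fun t => χ t - χ (leftFace x (ℓ 0)) + 1, fun v l => by rw [hχ]; ring, hvar,
    fun j => by simp [hconst], ?_⟩
  have hi := hpos (ℓ i) (traverses_cons.2 (Or.inl ⟨rfl, rfl⟩))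
  rw [hχ, hconst] at hi
  linarith

lemma not_reverse (hK : ∀ v l, K v l → K (v <• letterG l) (invLetter l))
    (hP : IsExtremalPath K (mkCos g J x) ℓ) {i j : ℕ}
    (hv : pathVertex x ℓ j = pathVertex x ℓ i <• letterG (ℓ i)) : ℓ j ≠ invLetter (ℓ i) := by
  obtain ⟨k, χ, -, -, hleft, hright⟩ := hP.exists_potential hK i
  intro hl
  have hj := hleft j
  rw [hv, hl, ← rightFace] at hj
  omega

lemma filling_nonneg (hK : ∀ v l, K v l → K (v <• letterG l) (invLetter l))
    (hP : IsExtremalPath K (mkCos g J x) ℓ) {u : Chain g (Gamma g)} {n : Gamma g →₀ ℤ}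
    (hn : IsOptimalFilling u n)
    (hu : ∀ v l, 0 < dartVal v l u → ∃ i, v = pathVertex x ℓ i ∧ l = ℓ i) (i : ℕ) :
    0 ≤ n (rightFace (pathVertex x ℓ i) (ℓ i)) := by
  obtain ⟨k, χ, hχ, hvar, hleft, hright⟩ := hP.exists_potential hK i
  refine hn.nonneg hχ hvar (fun v l hv => ?_) hright
  obtain ⟨j, rfl, rfl⟩ := hu v l hv
  exact (hleft j).ge

end IsExtremalPath

end Extremal

/-! ### Periodic extremal paths -/

section ConjLen

variable {g : ℕ} {X : Type*} [MulAction (Gamma g)ᵐᵒᵖ X]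

lemma exists_length_eq_conjLen (γ : Gamma g) :
    ∃ w : List (Letter g), w.length = conjLen γ ∧ ∃ y, y * wordG w * y⁻¹ = γ := by
  obtain ⟨w, hw⟩ := exists_wordG_eq γ
  exact Nat.sInf_mem (s := {n | ∃ w : List (Letter g), w.length = n ∧
    ∃ x : Gamma g, x * wordG w * x⁻¹ = γ}) ⟨w.length, w, rfl, 1, by simp [hw]⟩

lemma conjLen_le {γ y : Gamma g} {w : List (Letter g)} (h : y * wordG w * y⁻¹ = γ) :
    conjLen γ ≤ w.length := Nat.sInf_le ⟨w, rfl, y, h⟩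

lemma isCyclicallyShortest_of_length_eq_conjLen {w : List (Letter g)} {γ y : Gamma g} (hγ : γ ≠ 1)
    (hw : w.length = conjLen γ) (h : y * wordG w * y⁻¹ = γ) : IsCyclicallyShortest w := by
  refine ⟨fun h1 => hγ (by rw [← h, h1]; simp), fun w' y' h' => hw.trans_le ?_⟩
  exact conjLen_le (y := y * y') (by rw [← h, ← h']; group)

lemma conjLen_le_l1Norm_sub_boundary {w : List (Letter g)} {x h : Gamma g}
    (hh : x * wordG w * x⁻¹ = h) (m : Cos g (Subgroup.zpowers h) →₀ ℤ) :
    (conjLen (wordG w) : ℤ) ≤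
      l1Norm (wordChain (mkCos g (Subgroup.zpowers h) x) w - boundary g m) := by
  by_cases hw : wordG w = 1
  · have hle : conjLen (wordG w) ≤ 0 := conjLen_le (w := []) (y := 1) (by simp [hw])
    have hnonneg := l1Norm_nonneg
      (wordChain (mkCos g (Subgroup.zpowers h) x) w - boundary g m)
    omega
  obtain ⟨c, hc, y, hy⟩ := exists_length_eq_conjLen (wordG w)
  obtain ⟨n, hn⟩ :=
    exists_boundary_eq_sub_of_conj (IsCyclicallyShortest.op_smul_mkCos_zpowers hh) hy
  have hle := (isCyclicallyShortest_of_length_eq_conjLen hw hc hy).length_le_l1Norm_sub_boundary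
    (x := x * y) (h := h) (by rw [← hh, ← hy]; group) (m - n)
  rw [← hc]
  convert hle using 2
  rw [map_sub, ← hn, ← op_smul_mkCos]
  abel

lemma exists_l1Norm_wordPow_sub_boundary_le (w : List (Letter g)) :
    ∃ d : ℕ, ∀ (x : X) (N : ℕ), ∃ m,
      l1Norm (wordChain x (wordPow w N) - boundary g m) ≤ d + N * conjLen (wordG w) := by
  obtain ⟨c, hc, y, hy⟩ := exists_length_eq_conjLen (wordG w)
  obtain ⟨q, rfl⟩ := exists_wordG_eq y
  refine ⟨2 * q.length, fun x N => ?_⟩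
  obtain ⟨m, hm⟩ := exists_boundary_eq_sub x (w := wordPow w N)
    (w' := q ++ wordPow c N ++ invWord q) (by rw [wordG_wordPow, ← hy, conj_pow]; simp [mul_assoc])
  refine ⟨m, ?_⟩
  rw [← hm, sub_sub_cancel]
  refine (l1Norm_wordChain_le _ _).trans_eq ?_
  simp only [List.length_append, length_wordPow, length_invWord, hc]
  push_cast
  ring

lemma IsMinimalChain.l1Norm_smul_sub_boundary_mapDomain_le {Y : Type*}
    [MulAction (Gamma g)ᵐᵒᵖ Y] (φ : X →[(Gamma g)ᵐᵒᵖ] Y) {x : X} {w : List (Letter g)} {N : ℕ}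
    {n : X →₀ ℤ} (hn : IsMinimalChain (wordChain x (wordPow w N) - boundary g n))
    (hx : φ x <• wordG w = φ x) (m : X →₀ ℤ) :
    l1Norm ((N : ℤ) • wordChain (φ x) w - boundary g (n.mapDomain φ)) ≤
      l1Norm (wordChain x (wordPow w N) - boundary g m) := by
  have hpush : pushChain g φ (wordChain x (wordPow w N) - boundary g n) =
      (N : ℤ) • wordChain (φ x) w - boundary g (n.mapDomain φ) := by
    rw [map_sub, pushChain_wordChain, pushChain_boundary, wordChain_wordPow hx]
  rw [← hpush]
  refine (l1Norm_mapDomain_le _ _).trans ((hn (m - n)).trans_eq ?_)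
  rw [sub_sub, ← map_add, add_sub_cancel]

end ConjLen

section Periodic

variable {g : ℕ} {X : Type*} [MulAction (Gamma g)ᵐᵒᵖ X] {ℓ : ℕ → Letter g} {p : ℕ}

lemma apply_add_mul_of_periodic (hper : Function.Periodic ℓ p) (i k : ℕ) : ℓ (i + k * p) = ℓ i :=
  hper.nsmul k i

lemma pathWord_mul (hper : Function.Periodic ℓ p) (N : ℕ) :
    pathWord ℓ (N * p) = wordPow (pathWord ℓ p) N := by
  induction N with
  | zero => simp [pathWord]
  | succ N ih =>
    have hshift : (fun i => ℓ (p + i)) = ℓ := funext fun i => by rw [add_comm, hper]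
    rw [add_mul, one_mul, add_comm, pathWord_add, hshift, ih, wordPow_succ]

lemma mul_pathVertex (a x : Gamma g) (i : ℕ) : pathVertex (a * x) ℓ i = a * pathVertex x ℓ i :=
  mul_assoc _ _ _

lemma leftFace_mul (a x : Gamma g) (l : Letter g) : leftFace (a * x) l = a * leftFace x l :=
  mul_assoc _ _ _

lemma rightFace_mul (a x : Gamma g) (l : Letter g) : rightFace (a * x) l = a * rightFace x l := by
  simp only [rightFace, ← leftFace_mul, op_smul_eq_mul, mul_assoc]

lemma pathVertex_add_mul (hper : Function.Periodic ℓ p) {x h : Gamma g}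
    (hh : x * wordG (pathWord ℓ p) * x⁻¹ = h) (i k : ℕ) :
    pathVertex x ℓ (i + k * p) = h ^ k * pathVertex x ℓ i := by
  have hshift : (fun j => ℓ (k * p + j)) = ℓ := funext fun j => by
    rw [add_comm, apply_add_mul_of_periodic hper]
  simp only [pathVertex, op_smul_eq_mul]
  rw [add_comm, pathWord_add, hshift, pathWord_mul hper, wordG_append, wordG_wordPow, ← hh,
    conj_pow]
  group

lemma exists_pow_mul_eq_of_mkCos_zpowers {h v v' : Gamma g}
    (hv : mkCos g (Subgroup.zpowers h) v = mkCos g (Subgroup.zpowers h) v') :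
    ∃ k k' : ℕ, h ^ k * v = h ^ k' * v' := by
  obtain ⟨j, hj⟩ := Subgroup.mem_zpowers_iff.1 (mkCos_eq_mkCos.1 hv)
  obtain ⟨k, rfl | rfl⟩ := Int.eq_nat_or_neg j
  · exact ⟨k, 0, by rw [← zpow_natCast, hj]; group⟩
  · refine ⟨0, k, ?_⟩
    rw [zpow_neg, inv_eq_iff_eq_inv, zpow_natCast] at hj
    rw [hj]
    group

namespace IsExtremalPath

variable {J : Subgroup (Gamma g)} {K : Cos g J → Letter g → Prop} {x h : Gamma g}

lemma l1Norm_wordChain (hK : ∀ v l, K v l → K (v <• letterG l) (invLetter l))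
    (hP : IsExtremalPath K (mkCos g J x) ℓ) (hper : Function.Periodic ℓ p)
    (hh : x * wordG (pathWord ℓ p) * x⁻¹ = h) :
    l1Norm (wordChain (mkCos g (Subgroup.zpowers h) x) (pathWord ℓ p)) = p := by
  rw [l1Norm_wordChain_eq_length, length_pathWord]
  simp only [traverses_pathWord]
  rintro _ _ ⟨i, -, rfl, rfl⟩ ⟨j, -, hv, hl⟩
  obtain ⟨k, k', hk⟩ := exists_pow_mul_eq_of_mkCos_zpowers (v := pathVertex x ℓ (i + 1))
    (v' := pathVertex x ℓ j) (by rw [pathVertex_succ]; exact hv)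
  rw [← pathVertex_add_mul hper hh, ← pathVertex_add_mul hper hh, add_right_comm,
    pathVertex_succ] at hk
  refine hP.not_reverse hK hk.symm ?_
  rw [apply_add_mul_of_periodic hper, apply_add_mul_of_periodic hper, hl]

lemma mapDomain_filling_nonneg (hK : ∀ v l, K v l → K (v <• letterG l) (invLetter l))
    (hP : IsExtremalPath K (mkCos g J x) ℓ) (hper : Function.Periodic ℓ p)
    (hh : x * wordG (pathWord ℓ p) * x⁻¹ = h) (hJ : h ∈ J) {N : ℕ} {n : Gamma g →₀ ℤ}
    (hn : IsOptimalFilling (wordChain x (pathWord ℓ (N * p))) n) (i : ℕ) :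
    0 ≤ n.mapDomain (mkCos g (Subgroup.zpowers h))
      (rightFace (pathVertex (mkCos g (Subgroup.zpowers h) x) ℓ i) (ℓ i)) := by
  classical
  rw [Finsupp.mapDomain, Finsupp.sum_apply]
  refine Finset.sum_nonneg fun t _ => ?_
  simp only [Finsupp.single_apply]
  split_ifs with ht
  swap
  · rfl
  obtain ⟨k, k', hk⟩ := exists_pow_mul_eq_of_mkCos_zpowers
    (ht.trans (map_rightFace (cosetHom (Subgroup.zpowers h)) (pathVertex x ℓ i) (ℓ i)).symm)
  obtain ⟨x', hx'⟩ : ∃ x', x = h ^ k * x' := ⟨(h ^ k)⁻¹ * x, by group⟩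
  have hh' : x' * wordG (pathWord ℓ p) * x'⁻¹ = h := by
    have hconj : h = h ^ k * (x' * wordG (pathWord ℓ p) * x'⁻¹) * (h ^ k)⁻¹ := by
      conv_lhs => rw [← hh, hx']
      group
    rw [eq_mul_inv_iff_mul_eq, ← pow_succ', pow_succ] at hconj
    exact (mul_left_cancel hconj).symm
  have hP' : IsExtremalPath K (mkCos g J x') ℓ := by
    rwa [← mkCos_eq_mkCos.2 (show x * x'⁻¹ ∈ J by simpa [hx'] using J.pow_mem hJ k)] at hP
  have ht' : t = rightFace (pathVertex x' ℓ (i + k' * p)) (ℓ (i + k' * p)) := by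
    rw [apply_add_mul_of_periodic hper, pathVertex_add_mul hper hh', rightFace_mul]
    refine mul_left_cancel (hk.trans ?_)
    rw [hx', mul_pathVertex, rightFace_mul, ← mul_assoc, ← mul_assoc, ← pow_add, ← pow_add,
      add_comm]
  rw [ht']
  refine hP'.filling_nonneg hK hn (fun v l hv => ?_) _
  obtain ⟨j, -, rfl, rfl⟩ := traverses_pathWord.1 (traverses_of_dartVal_pos hv)
  exact ⟨j + k * p, by rw [pathVertex_add_mul hper hh', hx', mul_pathVertex],
    (apply_add_mul_of_periodic hper j k).symm⟩

/-- An optimal filling of a long multiple of the closed path, pushed down to the annulus, is cut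
into fillings of the path itself by Hermite's identity; one of them attains the conjugacy length. -/
theorem exists_filling (hK : ∀ v l, K v l → K (v <• letterG l) (invLetter l))
    (hP : IsExtremalPath K (mkCos g J x) ℓ) (hper : Function.Periodic ℓ p)
    (hh : x * wordG (pathWord ℓ p) * x⁻¹ = h) (hJ : h ∈ J) :
    ∃ n, l1Norm (wordChain (mkCos g (Subgroup.zpowers h) x) (pathWord ℓ p) - boundary g n) =
        conjLen (wordG (pathWord ℓ p)) ∧
      IsMinimalChain
        (wordChain (mkCos g (Subgroup.zpowers h) x) (pathWord ℓ p) - boundary g n) ∧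
      ∀ i, 0 ≤ n (rightFace (pathVertex (mkCos g (Subgroup.zpowers h) x) ℓ i) (ℓ i)) := by
  obtain ⟨d, hd⟩ := exists_l1Norm_wordPow_sub_boundary_le (X := Gamma g) (pathWord ℓ p)
  have hlow := conjLen_le_l1Norm_sub_boundary hh
  set z := wordChain (mkCos g (Subgroup.zpowers h) x) (pathWord ℓ p)
  obtain ⟨n, hn⟩ := exists_isOptimalFilling (wordChain x (pathWord ℓ ((d + 1) * p)))
  obtain ⟨n', hn'⟩ : ∃ n', n' = n.mapDomain (mkCos g (Subgroup.zpowers h)) := ⟨_, rfl⟩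
  have hsum : ∑ i : Fin (d + 1), l1Norm (z - boundary g (hermitePart n' (d + 1) i)) ≤
      d + (d + 1 : ℕ) * conjLen (wordG (pathWord ℓ p)) := by
    obtain ⟨m, hm⟩ := hd x (d + 1)
    rw [sum_l1Norm_sub_boundary_hermitePart d.succ_ne_zero, hn']
    rw [pathWord_mul hper] at hn
    exact (hn.isMinimalChain.l1Norm_smul_sub_boundary_mapDomain_le (cosetHom _)
      (IsCyclicallyShortest.op_smul_mkCos_zpowers hh) m).trans hm
  obtain ⟨i, hi⟩ : ∃ i : Fin (d + 1),
      l1Norm (z - boundary g (hermitePart n' (d + 1) i)) ≤ conjLen (wordG (pathWord ℓ p)) := by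
    by_contra! hcon
    have hlt := Finset.sum_le_sum fun i (_ : i ∈ Finset.univ) => Int.add_one_le_of_lt (hcon i)
    rw [Finset.sum_const, Finset.card_univ, Fintype.card_fin, nsmul_eq_mul] at hlt
    push_cast at hlt hsum
    linarith
  refine ⟨hermitePart n' (d + 1) i, hi.antisymm (hlow _), fun m => ?_, fun j => ?_⟩
  · rw [sub_sub, ← map_add]
    exact hi.trans (hlow _)
  · have hnonneg := hP.mapDomain_filling_nonneg hK hper hh hJ hn j
    rw [← hn'] at hnonneg
    exact Int.ediv_nonneg (by positivity) (by positivity)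

end IsExtremalPath

end Periodic

/-! ### The covering space as a Schreier graph -/

section Words

variable {g : ℕ} {Y : Complex g}

lemma Complex.wordOf_append (c c' : List Y.D) : Y.wordOf (c ++ c') = Y.wordOf c ++ Y.wordOf c' :=
  List.map_append

lemma Complex.wordOf_revW (c : List Y.D) : Y.wordOf (Y.revW c) = invWord (Y.wordOf c) := by
  simp only [Complex.wordOf, Complex.revW, invWord, List.map_reverse, List.map_map]
  rfl

lemma Complex.faceLoop.wordG_wordOf (hY : ∀ f, Y.wordOf (Y.bdry f) = relatorWord g)
    {sF : Set Y.F} {c : List Y.D} (hc : Y.faceLoop sF c) : wordG (Y.wordOf c) = 1 := by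
  obtain ⟨f, -, n, hc⟩ := hc
  have hrot : wordG (Y.wordOf ((Y.bdry f).rotate n)) = 1 := by
    rw [Complex.wordOf, List.map_rotate, ← Complex.wordOf, hY,
      List.rotate_eq_drop_append_take_mod, wordG_append, mul_eq_one_comm, ← wordG_append,
      List.take_append_drop, wordG_relatorWord]
  rcases hc with rfl | rfl
  · exact hrot
  · rw [Complex.wordOf_revW, wordG_invWord, hrot, inv_one]

lemma Complex.elemMove.wordG_wordOf_eq (hY : ∀ f, Y.wordOf (Y.bdry f) = relatorWord g)
    {sE : Set Y.E} {sF : Set Y.F} {c c' : List Y.D} (hc : Y.elemMove sE sF c c') :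
    wordG (Y.wordOf c) = wordG (Y.wordOf c') := by
  rcases hc with ⟨a, b, d, -, rfl, rfl⟩ | ⟨a, b, l, hl, rfl, rfl⟩
  · have hback : Y.wordOf (d :: Y.dRev d :: b) = Y.dLet d :: invLetter (Y.dLet d) :: Y.wordOf b :=
      rfl
    rw [Complex.wordOf_append, Complex.wordOf_append, hback]
    simp
  · simp only [Complex.wordOf_append, wordG_append, hl.wordG_wordOf hY, mul_one]

lemma Complex.Homotopic.wordG_wordOf_eq (hY : ∀ f, Y.wordOf (Y.bdry f) = relatorWord g)
    {sE : Set Y.E} {sF : Set Y.F} {u v : Y.V} {c c' : List Y.D}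
    (hc : Y.Homotopic sE sF u v c c') : wordG (Y.wordOf c) = wordG (Y.wordOf c') := by
  induction hc with
  | rel a b h =>
    rcases h.2.2.2.2 with h | h
    exacts [h.wordG_wordOf_eq hY, (h.wordG_wordOf_eq hY).symm]
  | refl => rfl
  | symm _ _ _ ih => exact ih.symm
  | trans _ _ _ _ _ h₁ h₂ => exact h₁.trans h₂

end Words

section Cover

variable {g : ℕ} {J : Subgroup (Gamma g)}

/-- The dart of `J\~Σ_g` leaving the vertex `v` along the letter `l`. -/
def dart (v : Cos g J) (l : Letter g) : (cover g J).D :=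
  if l.2 then ((v, l.1), true) else ((v <• letterG l, l.1), false)

@[simp] lemma dLet_dart (v : Cos g J) (l : Letter g) : (cover g J).dLet (dart v l) = l := by
  rcases l with ⟨i, _ | _⟩ <;> rfl

@[simp] lemma dHead_dart (v : Cos g J) (l : Letter g) :
    (cover g J).dHead (dart v l) = v <• letterG l := by
  rcases l with ⟨i, _ | _⟩ <;> rfl

@[simp] lemma dTail_dart (v : Cos g J) (l : Letter g) : (cover g J).dTail (dart v l) = v := by
  rcases l with ⟨i, _ | _⟩
  · exact op_smul_letterG_invLetter v (i, false)
  · rfl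

lemma exists_eq_dart (d : (cover g J).D) : ∃ (v : Cos g J) (l : Letter g), d = dart v l := by
  rcases d with ⟨⟨v, i⟩, _ | _⟩
  · exact ⟨v <• letterG (i, true), (i, false), congrArg (fun u : Cos g J => ((u, i), false))
      (op_smul_letterG_invLetter v (i, true)).symm⟩
  · exact ⟨v, (i, true), rfl⟩

lemma dart_inj {v v' : Cos g J} {l l' : Letter g} : dart v l = dart v' l' ↔ v = v' ∧ l = l' := by
  refine ⟨fun h => ?_, by rintro ⟨rfl, rfl⟩; rfl⟩
  have hv := congrArg (cover g J).dTail h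
  have hl := congrArg (cover g J).dLet h
  rw [dTail_dart, dTail_dart] at hv
  rw [dLet_dart, dLet_dart] at hl
  exact ⟨hv, hl⟩

lemma dRev_dart (v : Cos g J) (l : Letter g) :
    (cover g J).dRev (dart v l) = dart (v <• letterG l) (invLetter l) := by
  rcases l with ⟨i, _ | _⟩
  · rfl
  · exact congrArg (fun u : Cos g J => ((u, i), false))
      (op_smul_letterG_invLetter v (i, true)).symm

lemma adj_dart {v v' : Cos g J} {l l' : Letter g} :
    (cover g J).adj (dart v l) (dart v' l') ↔ v' = v <• letterG l := by
  rw [Complex.adj, dHead_dart, dTail_dart]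
  exact eq_comm

lemma dart_fst_eq {v v' : Cos g J} {l l' : Letter g} (h : (dart v l).1 = (dart v' l').1) :
    (v' = v ∧ l' = l) ∨ (v' = v <• letterG l ∧ l' = invLetter l) := by
  have hrev : ∀ d d' : (cover g J).D, d.1 = d'.1 → d' = d ∨ d' = (cover g J).dRev d := by
    rintro ⟨e, b⟩ ⟨e', b'⟩ rfl
    cases b <;> cases b' <;> simp [Complex.dRev]
  have := hrev _ _ h
  rwa [dRev_dart, dart_inj, dart_inj] at this

/-- The walk of `J\~Σ_g` from `u` reading `w`. -/
def coverWalk (u : Cos g J) (w : List (Letter g)) : List (cover g J).D := relWalk g J u w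

@[simp] lemma coverWalk_nil (u : Cos g J) : coverWalk u [] = [] := rfl

lemma coverWalk_cons (u : Cos g J) (l : Letter g) (w : List (Letter g)) :
    coverWalk u (l :: w) = dart u l :: coverWalk (u <• letterG l) w := by
  rcases l with ⟨i, _ | _⟩ <;> rfl

lemma bdry_cover (f : Cos g J) : (cover g J).bdry f = coverWalk f (relatorWord g) := rfl

lemma coverWalk_append (u : Cos g J) (w w' : List (Letter g)) :
    coverWalk u (w ++ w') = coverWalk u w ++ coverWalk (u <• wordG w) w' := by
  induction w generalizing u with
  | nil => simp
  | cons l w ih =>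
    rw [List.cons_append, coverWalk_cons, ih, coverWalk_cons, wordG_cons, op_smul_op_smul,
      List.cons_append]

@[simp] lemma wordOf_coverWalk (u : Cos g J) (w : List (Letter g)) :
    (cover g J).wordOf (coverWalk u w) = w := by
  induction w generalizing u with
  | nil => rfl
  | cons l w ih =>
    rw [coverWalk_cons]
    exact congrArg₂ List.cons (dLet_dart u l) (ih _)

lemma wordOf_bdry_cover (f : (cover g J).F) :
    (cover g J).wordOf ((cover g J).bdry f) = relatorWord g :=
  wordOf_coverWalk (J := J) f (relatorWord g)

@[simp] lemma length_coverWalk (u : Cos g J) (w : List (Letter g)) :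
    (coverWalk u w).length = w.length := by
  conv_rhs => rw [← wordOf_coverWalk u w, Complex.wordOf, List.length_map]

lemma mem_coverWalk {u : Cos g J} {w : List (Letter g)} {d : (cover g J).D} :
    d ∈ coverWalk u w ↔ ∃ y m, Traverses u w y m ∧ d = dart y m := by
  induction w generalizing u with
  | nil => simp [not_traverses_nil]
  | cons l w ih =>
    simp only [coverWalk_cons, List.mem_cons, ih, traverses_cons, or_and_right, exists_or]
    refine or_congr_left ⟨fun h => ⟨u, l, ⟨rfl, rfl⟩, h⟩, ?_⟩
    rintro ⟨_, _, ⟨rfl, rfl⟩, h⟩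
    exact h

lemma revW_coverWalk (u : Cos g J) (w : List (Letter g)) :
    (cover g J).revW (coverWalk u w) = coverWalk (u <• wordG w) (invWord w) := by
  induction w generalizing u with
  | nil => rfl
  | cons l w ih =>
    have hstep : (cover g J).revW (dart u l :: coverWalk (u <• letterG l) w) =
        (cover g J).revW (coverWalk (u <• letterG l) w) ++ [(cover g J).dRev (dart u l)] := by
      simp [Complex.revW]
    have hback : u <• wordG (l :: w) <• wordG (invWord w) = u <• letterG l := by
      rw [op_smul_op_smul, wordG_cons, wordG_invWord, mul_inv_cancel_right]
    rw [coverWalk_cons, hstep, ih, invWord_cons, coverWalk_append, hback, dRev_dart,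
      coverWalk_cons, coverWalk_nil, wordG_cons, op_smul_op_smul]

lemma walkFrom_coverWalk (u : Cos g J) (w : List (Letter g)) :
    (cover g J).WalkFrom u (u <• wordG w : Cos g J) (coverWalk u w) := by
  induction w generalizing u with
  | nil =>
    rw [wordG_nil, MulOpposite.op_one, one_smul]
    exact .nil (Y := cover g J) u
  | cons l w ih =>
    have hcons := Complex.WalkFrom.cons (Y := cover g J) (dart u l)
      (v := (u <• wordG (l :: w) : Cos g J)) (l := coverWalk (u <• letterG l) w)
    rw [dTail_dart, dHead_dart] at hcons
    rw [coverWalk_cons]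
    refine hcons ?_
    rw [wordG_cons, ← op_smul_op_smul]
    exact ih _

lemma Complex.WalkFrom.exists_eq_coverWalk {u v : Cos g J} {c : List (cover g J).D}
    (h : (cover g J).WalkFrom u v c) : ∃ w, c = coverWalk u w ∧ v = u <• wordG w := by
  suffices hY : ∀ u v : (cover g J).V, (cover g J).WalkFrom u v c → ∃ w,
      c = coverWalk (J := J) u w ∧ v = (fun x : Cos g J => x <• wordG w) u from hY u v h
  clear h
  intro u v h
  induction h with
  | nil v => exact ⟨[], rfl, (one_smul (Gamma g)ᵐᵒᵖ (show Cos g J from v)).symm⟩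
  | cons d _ ih =>
    obtain ⟨x, l, rfl⟩ := exists_eq_dart d
    obtain ⟨w, rfl, rfl⟩ := ih
    rw [dHead_dart, dTail_dart]
    refine ⟨l :: w, (coverWalk_cons _ _ _).symm, ?_⟩
    simp only [wordG_cons, op_smul_op_smul]
    rfl

lemma homotopic_coverWalk (u : Cos g J) {w w' : List (Letter g)} (h : wordG w = wordG w') :
    (cover g J).Homotopic Set.univ Set.univ u (u <• wordG w : Cos g J)
      (coverWalk u w) (coverWalk u w') := by
  let homotopyClass (w : List (Letter g)) : Set (List (cover g J).D) :=
    {c | (cover g J).Homotopic Set.univ Set.univ u (u <• wordG w : Cos g J) (coverWalk u w) c}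
  have class_eq {w w' : List (Letter g)} (h : wordG w = wordG w')
      (hm : (cover g J).elemMove Set.univ Set.univ (coverWalk u w') (coverWalk u w)) :
      homotopyClass w = homotopyClass w' := by
    have hstep : (cover g J).Homotopic Set.univ Set.univ u (u <• wordG w : Cos g J)
        (coverWalk u w) (coverWalk u w') :=
      .rel _ _ ⟨walkFrom_coverWalk u w, h ▸ walkFrom_coverWalk u w', fun _ _ => Set.mem_univ _,
        fun _ _ => Set.mem_univ _, Or.inr hm⟩
    ext c
    simp only [homotopyClass, Set.mem_ofPred_eq, ← h]
    exact ⟨fun hc => .trans _ _ _ (.symm _ _ hstep) hc, fun hc => .trans _ _ _ hstep hc⟩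
  have hclass : homotopyClass w = homotopyClass w' := by
    refine apply_eq_of_wordG_eq homotopyClass (fun a b l => class_eq (by simp) (Or.inl ?_))
      (fun a b => class_eq (by simp [wordG_relatorWord]) (Or.inr ?_)) h
    · refine ⟨coverWalk u a, coverWalk (u <• wordG a) b, dart (u <• wordG a) l, Set.mem_univ _,
        coverWalk_append _ _ _, ?_⟩
      rw [coverWalk_append, coverWalk_cons, coverWalk_cons, op_smul_letterG_invLetter, dRev_dart]
    · refine ⟨coverWalk u a, coverWalk (u <• wordG a) b, coverWalk (u <• wordG a) (relatorWord g),
        ⟨(u <• wordG a : Cos g J), Set.mem_univ _, 0, Or.inl (List.rotate_zero _).symm⟩,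
        coverWalk_append _ _ _, ?_⟩
      rw [coverWalk_append, coverWalk_append, wordG_append, wordG_relatorWord, mul_one]
  have hmem : coverWalk u w' ∈ homotopyClass w' := .refl _
  rwa [← hclass] at hmem

lemma isCyclicallyShortest_of_goodCycle {u : Cos g J} {w : List (Letter g)}
    (hu : u <• wordG w = u) (h : (cover g J).GoodCycle (coverWalk u w)) :
    IsCyclicallyShortest w := by
  obtain ⟨-, ⟨-, -, hess⟩, hmin⟩ := h
  have hwalk := walkFrom_coverWalk u w
  rw [hu] at hwalk
  refine ⟨fun h1 => hess ⟨u, hwalk, ?_⟩, fun w' y hy => ?_⟩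
  · have hnull := homotopic_coverWalk u (w := w) (w' := []) h1
    rwa [hu] at hnull
  · obtain ⟨q, rfl⟩ := exists_wordG_eq y
    have hq : u <• wordG q <• wordG w' = u <• wordG q := by
      conv_rhs => rw [← hu, ← hy]
      simp only [op_smul_op_smul, inv_mul_cancel_right]
    have hwalk' := walkFrom_coverWalk (u <• wordG q) w'
    rw [hq] at hwalk'
    have hhom := homotopic_coverWalk u (w := w) (w' := q ++ w' ++ invWord q)
      (by simp [← hy, mul_assoc])
    rw [hu, coverWalk_append, coverWalk_append, wordG_append, ← op_smul_op_smul, hq,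
      ← revW_coverWalk] at hhom
    simpa using hmin (coverWalk (u <• wordG q) w') ⟨u, (u <• wordG q : Cos g J), coverWalk u q,
      hwalk, hwalk', walkFrom_coverWalk u q, fun _ _ => Set.mem_univ _, fun _ _ => Set.mem_univ _,
      fun _ _ => Set.mem_univ _, hhom⟩

lemma IsCyclicallyShortest.essential_coverWalk {u : Cos g J} {w : List (Letter g)}
    (hw : IsCyclicallyShortest w) (hu : u <• wordG w = u) :
    (cover g J).Essential Set.univ Set.univ (coverWalk u w) := by
  have hwalk := walkFrom_coverWalk u w
  rw [hu] at hwalk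
  refine ⟨⟨fun hnil => hw.ne_nil ?_, u, hwalk⟩, fun _ _ => Set.mem_univ _, ?_⟩
  · rw [← List.length_eq_zero_iff, ← length_coverWalk u w, hnil, List.length_nil]
  · rintro ⟨v, -, hnull⟩
    have hone := hnull.wordG_wordOf_eq wordOf_bdry_cover
    rw [wordOf_coverWalk] at hone
    exact hw.1 hone

lemma IsCyclicallyShortest.goodCycle_coverWalk {u : Cos g J} {w : List (Letter g)}
    (hw : IsCyclicallyShortest w) (hu : u <• wordG w = u) :
    (cover g J).GoodCycle (coverWalk u w) := by
  have hess := hw.essential_coverWalk hu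
  refine ⟨hess.1, hess, ?_⟩
  rintro c ⟨u', v', q, -, -, -, -, -, -, hhom⟩
  have hconj := hhom.wordG_wordOf_eq wordOf_bdry_cover
  rw [wordOf_coverWalk, Complex.wordOf_append, Complex.wordOf_append, Complex.wordOf_revW,
    wordG_append, wordG_append, wordG_invWord] at hconj
  have hle := hw.2 _ _ hconj.symm
  rwa [Complex.wordOf, List.length_map, ← length_coverWalk u w] at hle

lemma dart_fst_mem_coreE1_iff {v : Cos g J} {l : Letter g} :
    (dart v l).1 ∈ coreE1 g J ↔ IsCoreDart v l := by
  constructor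
  · rintro ⟨c, hc, b, hb⟩
    obtain ⟨u, hwalk⟩ := hc.1.2
    obtain ⟨w, rfl, hu⟩ := hwalk.exists_eq_coverWalk
    obtain ⟨y, m, hym, hd⟩ := mem_coverWalk.1 hb
    have hcore := IsCoreDart.of_traverses
      (isCyclicallyShortest_of_goodCycle (u := u) hu.symm hc) (Eq.symm hu) hym
    rcases dart_fst_eq (congrArg Prod.fst hd).symm with ⟨rfl, rfl⟩ | ⟨rfl, rfl⟩
    · exact hcore
    · simpa using hcore.inv
  · rintro ⟨w, hw, hv⟩
    refine ⟨coverWalk v (l :: w), hw.goodCycle_coverWalk hv, (dart v l).2, ?_⟩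
    rw [coverWalk_cons]
    exact List.mem_cons_self

end Cover

/-! ### Faces outside the core surface -/

section OuterFaces

variable {g : ℕ} {X : Type*} [MulAction (Gamma g)ᵐᵒᵖ X]

lemma leftFace_op_smul_relPrefix (f : X) (l : Letter g) :
    leftFace (f <• relPrefix g (relIndex l)) l = f := by
  rw [leftFace, op_smul_op_smul, mul_inv_cancel, MulOpposite.op_one, one_smul]

lemma leftFace_op_smul (x : X) (l : Letter g) : leftFace x l <• relPrefix g (relIndex l) = x := by
  rw [leftFace, op_smul_op_smul, inv_mul_cancel, MulOpposite.op_one, one_smul]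

lemma relIndex_eq_length {a b : List (Letter g)} {l : Letter g}
    (h : relatorWord g = a ++ l :: b) : relIndex l = a.length := by
  have hlt : a.length < (relatorWord g).length := by simp [h]
  have hl : l = (relatorWord g)[a.length] := by simp [h]
  rw [hl, getElem_relatorWord, relIndex_relLetter]

lemma traverses_relatorWord_iff {f x : X} {l : Letter g} :
    Traverses f (relatorWord g) x l ↔ leftFace x l = f := by
  constructor
  · rintro ⟨a, b, hab, rfl⟩
    have ha : wordG a = relPrefix g (relIndex l) := by
      rw [relPrefix, relIndex_eq_length hab, hab, List.take_left']
      rfl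
    rw [ha, leftFace_op_smul_relPrefix]
  · rintro rfl
    have hlt : relIndex l < (relatorWord g).length := by simpa using relIndex_lt l
    refine ⟨(relatorWord g).take (relIndex l), (relatorWord g).drop (relIndex l + 1), ?_,
      (leftFace_op_smul x l).symm⟩
    conv_lhs => rw [← List.take_append_drop (relIndex l) (relatorWord g),
      List.drop_eq_getElem_cons hlt, getElem_relatorWord, relLetter_relIndex]

lemma apply_leftFace_eq_of_rightFace {α : Type*} (n : X → α) {x : X}
    (h : ∀ l : Letter g, n (leftFace x l) = n (rightFace x l)) (l m : Letter g) :
    n (leftFace x l) = n (leftFace x m) := by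
  have hg := genus_pos l
  have hconst (p : ℕ) : n (leftFace x (letterAt hg p)) = n (leftFace x (letterAt hg 0)) := by
    induction p with
    | zero => rfl
    | succ p ih => rw [← rightFace_letterAt, ← h, ih]
  rw [← letterAt_posLv hg l, ← letterAt_posLv hg m, hconst (posLv l), hconst (posLv m)]

variable {C J : Subgroup (Gamma g)}

lemma dart_mem_bdry_iff {f v : Cos g J} {l : Letter g} :
    dart v l ∈ (cover g J).bdry f ↔ leftFace v l = f := by
  rw [bdry_cover, mem_coverWalk, ← traverses_relatorWord_iff]
  refine ⟨?_, fun h => ⟨v, l, h, rfl⟩⟩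
  rintro ⟨y, m, h, hd⟩
  obtain ⟨rfl, rfl⟩ := dart_inj.1 hd
  exact h

/-- The corner of `J\~Σ_g` at `v` immediately to the left of the dart leaving along `l` is met by
exactly three cells: its vertex, the edge of that dart and the face on the left of that dart. -/
def MeetsCorner (v : Cos g J) (l : Letter g) : (cover g J).Cell → Prop
  | Sum.inl u => u = v
  | Sum.inr (Sum.inl e) => e = (dart v l).1
  | Sum.inr (Sum.inr f) => f = leftFace v l

lemma exists_meetsCorner_of_inc0 {a b : (cover g J).Cell} (h : (cover g J).inc0 a b) :
    ∃ v l, MeetsCorner v l a ∧ MeetsCorner v l b := by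
  match a, b, h with
  | Sum.inl v, Sum.inr (Sum.inl e), h =>
    rcases h with rfl | rfl
    · exact ⟨_, (e.2, true), rfl, rfl⟩
    · exact ⟨_, (e.2, false), rfl, Prod.ext (op_smul_letterG_invLetter e.1 (e.2, true)).symm rfl⟩
  | Sum.inl v, Sum.inr (Sum.inr f), h =>
    obtain ⟨d, hd, rfl⟩ := h
    obtain ⟨x, l, rfl⟩ := exists_eq_dart d
    exact ⟨x, l, dTail_dart x l, (dart_mem_bdry_iff.1 hd).symm⟩
  | Sum.inr (Sum.inl e), Sum.inr (Sum.inr f), h =>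
    obtain ⟨b, hb⟩ := h
    obtain ⟨x, l, hx⟩ := exists_eq_dart (J := J) (e, b)
    exact ⟨x, l, congrArg Prod.fst hx, (dart_mem_bdry_iff.1 (hx ▸ hb)).symm⟩

lemma exists_meetsCorner_of_incid {a b : (cover g J).Cell} (h : (cover g J).incid a b) :
    ∃ v l, MeetsCorner v l a ∧ MeetsCorner v l b := by
  rcases h with h | h
  · exact exists_meetsCorner_of_inc0 h
  · obtain ⟨v, l, hb, ha⟩ := exists_meetsCorner_of_inc0 h
    exact ⟨v, l, ha, hb⟩

lemma IsCoreDart.mem_coreV1 {v : Cos g J} {l : Letter g} (h : IsCoreDart v l) :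
    v ∈ coreV1 g J := by
  refine ⟨(dart v l).1, dart_fst_mem_coreE1_iff.2 h, ?_⟩
  rcases l with ⟨i, _ | _⟩
  · exact Or.inr (dTail_dart v (i, false))
  · exact Or.inl rfl

/-- The corner of `J\~Σ_g` at `v` and `l` lifts along `φ` to a corner of a face on which `n`
takes the value `t`. -/
def HasLiftOfValue (φ : Cos g C →[(Gamma g)ᵐᵒᵖ] Cos g J) (n : Cos g C →₀ ℤ) (t : ℤ)
    (v : Cos g J) (l : Letter g) : Prop :=
  ∃ x, φ x = v ∧ n (leftFace x l) = t

variable {φ : Cos g C →[(Gamma g)ᵐᵒᵖ] Cos g J} {n : Cos g C →₀ ℤ} {t : ℤ}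

lemma HasLiftOfValue.of_meetsCorner
    (hn : ∀ x l, dartVal x l (boundary g n) ≠ 0 → IsCoreDart (φ x) l)
    {v v' : Cos g J} {l l' : Letter g} (h : HasLiftOfValue φ n t v l) {b : (cover g J).Cell}
    (hb : ¬ (cover g J).inSub (coreS1 g J) b) (hv : MeetsCorner v l b)
    (hv' : MeetsCorner v' l' b) : HasLiftOfValue φ n t v' l' := by
  obtain ⟨x, rfl, ht⟩ := h
  have hside (m : Letter g) (hm : ¬ IsCoreDart (φ x) m) :
      n (leftFace x m) = n (rightFace x m) := by
    by_contra hne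
    exact hm (hn x m (by rwa [dartVal_boundary, sub_ne_zero]))
  match b, hb, hv, hv' with
  | Sum.inl u, hb, hv, hv' =>
    subst hv hv'
    refine ⟨x, rfl, ?_⟩
    rw [← ht]
    exact apply_leftFace_eq_of_rightFace n (fun m => hside m fun hm => hb hm.mem_coreV1) l' l
  | Sum.inr (Sum.inl e), hb, hv, hv' =>
    rcases dart_fst_eq (hv.symm.trans hv') with ⟨rfl, rfl⟩ | ⟨rfl, rfl⟩
    · exact ⟨x, rfl, ht⟩
    · refine ⟨x <• letterG l, map_smul _ _ _, ?_⟩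
      rw [← ht, hside l fun hl => hb ?_, rightFace]
      rw [hv]
      exact dart_fst_mem_coreE1_iff.2 hl
  | Sum.inr (Sum.inr f), _, hv, hv' =>
    refine ⟨leftFace x l <• relPrefix g (relIndex l'), ?_, ?_⟩
    · rw [map_smul, map_leftFace, ← (hv : f = _), (hv' : f = _), leftFace_op_smul]
    · rw [leftFace_op_smul_relPrefix, ht]

/-- The face `f` of `J\~Σ_g` does not belong to the core surface. -/
def IsOuterFace (f : Cos g J) : Prop := ¬ coreFin g J ((cover g J).fCell f)

lemma apply_eq_zero_of_isOuterFace (hg : 0 < g)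
    (hn : ∀ x l, dartVal x l (boundary g n) ≠ 0 → IsCoreDart (φ x) l)
    {f : Cos g C} (hf : IsOuterFace (φ f)) : n f = 0 := by
  by_contra hne
  have hlift : ∀ c, (cover g J).reachS (coreS1 g J) ((cover g J).fCell (φ f)) c →
      ∀ v l, MeetsCorner v l c → HasLiftOfValue φ n (n f) v l := by
    intro c hc
    induction hc with
    | refl =>
      intro v l (hv : φ f = leftFace v l)
      refine ⟨f <• relPrefix g (relIndex l), ?_, by rw [leftFace_op_smul_relPrefix]⟩
      rw [map_smul, hv, leftFace_op_smul]
    | tail _ hstep ih =>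
      intro v' l' hv'
      obtain ⟨v, l, ha, hb⟩ := exists_meetsCorner_of_incid hstep.1
      exact (ih v l ha).of_meetsCorner hn hstep.2.2 hb hv'
  refine hf ⟨fun h => h, (n.support.finite_toSet.image φ).subset fun (f' : Cos g J) hf' => ?_⟩
  obtain ⟨x, hx, hval⟩ := hlift _ hf' (f' <• relPrefix g (relIndex (letterAt hg 0)))
    (letterAt hg 0) (leftFace_op_smul_relPrefix f' _).symm
  have hface : φ (leftFace x (letterAt hg 0)) = f' :=
    (map_leftFace φ x _).trans (hx ▸ leftFace_op_smul_relPrefix f' _)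
  exact ⟨_, by simp [hval, hne], hface⟩

end OuterFaces

/-! ### Boundary cycles of the core surface -/

section BoundaryPaths

variable {g : ℕ} {J : Subgroup (Gamma g)}

lemma coreFin_eCell_iff {v : Cos g J} {l : Letter g} (h : ¬ IsCoreDart v l) :
    coreFin g J ((cover g J).eCell (dart v l).1) ↔ ¬ IsOuterFace (leftFace v l) := by
  have he : ¬ (cover g J).inSub (coreS1 g J) ((cover g J).eCell (dart v l).1) :=
    fun hmem => h (dart_fst_mem_coreE1_iff.1 hmem)
  have hf : ¬ (cover g J).inSub (coreS1 g J) ((cover g J).fCell (leftFace v l : Cos g J)) :=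
    fun hmem => hmem
  have hinc : (cover g J).inc0 ((cover g J).eCell (dart v l).1)
      ((cover g J).fCell (leftFace v l : Cos g J)) :=
    ⟨(dart v l).2, dart_mem_bdry_iff.2 rfl⟩
  rw [IsOuterFace, not_not]
  constructor
  · rintro ⟨-, hfin⟩
    exact ⟨hf, hfin.subset fun f hreach => .head ⟨Or.inl hinc, he, hf⟩ hreach⟩
  · rintro ⟨-, hfin⟩
    exact ⟨he, hfin.subset fun f hreach => .head ⟨Or.inr hinc, hf, he⟩ hreach⟩

lemma dart_fst_mem_coreSub_sE_iff (hJ : J ≠ ⊥) {v : Cos g J} {l : Letter g} :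
    (dart v l).1 ∈ (coreSub g J).sE ↔ IsCoreDart v l ∨ ¬ IsOuterFace (leftFace v l) := by
  rw [coreSub, if_neg hJ, ← dart_fst_mem_coreE1_iff, Set.mem_union]
  refine or_congr_right' fun h => ?_
  exact coreFin_eCell_iff fun hcore => h (dart_fst_mem_coreE1_iff.2 hcore)

lemma mem_coreSub_sF_iff (hJ : J ≠ ⊥) {f : Cos g J} :
    f ∈ (coreSub g J).sF ↔ ¬ IsOuterFace f := by
  rw [coreSub, if_neg hJ, IsOuterFace, not_not]
  rfl

lemma exists_relatorWord_append_relatorWord_eq (l : Letter g) :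
    ∃ b, relatorWord g ++ relatorWord g =
      (relatorWord g).take (relIndex l) ++ l :: nextLetter l :: b := by
  have hl := relIndex_lt l
  have hlen := length_relatorWord g
  have hsplit := List.take_append_drop (relIndex l) (relatorWord g ++ relatorWord g)
  have hnext : (relatorWord g ++ relatorWord g)[relIndex l + 1]'(by simp; omega) =
      nextLetter l := by
    rw [List.getElem_append]
    split_ifs with h
    all_goals
      rw [getElem_relatorWord]
      refine relIndex_injective ?_
      rw [relIndex_relLetter, relIndex_nextLetter]
    · rw [Nat.mod_eq_of_lt (by omega)]
    · rw [show relIndex l + 1 = 4 * g by omega]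
      simp
  rw [List.drop_eq_getElem_cons (by simp; omega), List.drop_eq_getElem_cons (by simp; omega),
    hnext, List.getElem_append_left (by omega), getElem_relatorWord, relLetter_relIndex,
    List.take_append_of_le_length (by omega)] at hsplit
  exact ⟨_, hsplit.symm⟩

lemma corner_infix_bdry (v : Cos g J) (l : Letter g) :
    [dart v l, dart (v <• letterG l) (nextLetter l)] <:+:
      (cover g J).bdry (leftFace v l : Cos g J) ++ (cover g J).bdry (leftFace v l : Cos g J) := by
  obtain ⟨b, hb⟩ := exists_relatorWord_append_relatorWord_eq l
  have hdouble : coverWalk (leftFace v l) (relatorWord g ++ relatorWord g) =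
      coverWalk (leftFace v l) (relatorWord g) ++ coverWalk (leftFace v l) (relatorWord g) := by
    rw [coverWalk_append, wordG_relatorWord, MulOpposite.op_one, one_smul]
  rw [bdry_cover, ← hdouble, hb, coverWalk_append]
  change _ <:+: _ ++ coverWalk (leftFace v l <• relPrefix g (relIndex l)) _
  rw [leftFace_op_smul, coverWalk_cons, coverWalk_cons]
  exact ⟨_, _, List.append_assoc _ _ _⟩

lemma bStep_coreSub (hJ : J ≠ ⊥) {v v' : Cos g J} {l l' : Letter g}
    (h : (cover g J).bStep (coreSub g J).sE (coreSub g J).sF (dart v l) (dart v' l')) :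
    IsCoreDart v l ∧ IsOuterFace (leftFace v l) ∧
      ∀ m, gapN l m < gapN l l' → ¬ IsCoreDart v' m := by
  obtain ⟨hmem, ⟨-, hadj, hmin⟩, hcorner⟩ := h
  obtain rfl := adj_dart.1 hadj
  have hgap (m : Letter g) (hm : (dart (v <• letterG l) m).1 ∈ (coreSub g J).sE) :
      gapN l l' ≤ gapN l m := by
    simpa using hmin _ hm (adj_dart.2 rfl)
  have houter : IsOuterFace (leftFace v l) := by
    by_contra hf
    have hzero := hgap (nextLetter l)
      ((dart_fst_mem_coreSub_sE_iff hJ).2 (Or.inr (by rwa [leftFace_nextLetter])))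
    rw [gapN_nextLetter, Nat.le_zero] at hzero
    rw [eq_nextLetter_of_gapN_eq_zero hzero] at hcorner
    exact hcorner ⟨(leftFace v l : Cos g J), (mem_coreSub_sF_iff hJ).2 hf, corner_infix_bdry v l⟩
  refine ⟨((dart_fst_mem_coreSub_sE_iff hJ).1 hmem).resolve_right (not_not.2 houter), houter, ?_⟩
  intro m hm hcore
  have hle := hgap m ((dart_fst_mem_coreSub_sE_iff hJ).2 (Or.inl hcore))
  omega

/-- An infinite path of `J\~Σ_g` running along the boundary of the core surface: it follows darts
of shortest cycles, has outer faces to its left, and turns at each vertex into the first dart of a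
shortest cycle. -/
structure IsBoundaryPath (x : Cos g J) (ℓ : ℕ → Letter g) : Prop where
  isCoreDart : ∀ i, IsCoreDart (pathVertex x ℓ i) (ℓ i)
  isOuterFace : ∀ i, IsOuterFace (leftFace (pathVertex x ℓ i) (ℓ i))
  not_isCoreDart : ∀ i m, gapN (ℓ i) m < gapN (ℓ i) (ℓ (i + 1)) →
    ¬ IsCoreDart (pathVertex x ℓ (i + 1)) m

lemma exists_periodic_of_isChain {α : Type*} {R : α → α → Prop} {L : List α} {a b : α}
    (hL : L.IsChain R) (ha : L.getLast? = some a) (hb : L.head? = some b) (hab : R a b) :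
    ∃ d : ℕ → α, Function.Periodic d L.length ∧ L = (List.range L.length).map d ∧
      ∀ i, R (d i) (d (i + 1)) := by
  have hne : L ≠ [] := by rintro rfl; simp at hb
  have hpos := List.length_pos_iff.2 hne
  rw [List.getLast?_eq_some_getLast hne, Option.some.injEq, List.getLast_eq_getElem] at ha
  rw [List.head?_eq_some_head hne, Option.some.injEq, List.head_eq_getElem] at hb
  refine ⟨fun i => L[i % L.length]'(Nat.mod_lt _ hpos), fun i => ?_, ?_, fun i => ?_⟩
  · simp
  · refine List.ext_getElem (by simp) fun i hi _ => ?_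
    simp [Nat.mod_eq_of_lt hi]
  · rcases (Nat.succ_le_of_lt (Nat.mod_lt i hpos)).lt_or_eq with hlt | heq
    · have hsucc : (i + 1) % L.length = i % L.length + 1 := by
        rw [← Nat.mod_add_mod, Nat.mod_eq_of_lt hlt]
      simp only [hsucc]
      exact List.isChain_iff_getElem.1 hL _ hlt
    · have hsucc : (i + 1) % L.length = 0 := by
        rw [← Nat.mod_add_mod, ← Nat.succ_eq_add_one, heq, Nat.mod_self]
      have hlast : i % L.length = L.length - 1 := by omega
      simp only [hsucc, hlast, ha, hb, hab]

lemma coverWalk_pathWord (x : Cos g J) (ℓ : ℕ → Letter g) (n : ℕ) :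
    coverWalk x (pathWord ℓ n) =
      (List.range n).map fun i => dart (pathVertex x ℓ i) (ℓ i) := by
  induction n with
  | zero => rfl
  | succ n ih =>
    rw [pathWord_succ, coverWalk_append, ih, List.range_succ, List.map_append, coverWalk_cons]
    rfl

lemma eq_dart_pathVertex {d : ℕ → (cover g J).D} {x : Cos g J}
    (h : ∀ i, (cover g J).adj (d i) (d (i + 1))) (hx : d 0 = dart x ((cover g J).dLet (d 0)))
    (i : ℕ) :
    d i = dart (pathVertex x (fun j => (cover g J).dLet (d j)) i) ((cover g J).dLet (d i)) := by
  induction i with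
  | zero => rwa [pathVertex_zero]
  | succ i ih =>
    obtain ⟨y, m, hy⟩ := exists_eq_dart (d (i + 1))
    have hadj := h i
    rw [ih, hy, adj_dart] at hadj
    rw [pathVertex_succ, ← hadj, hy, dLet_dart]

theorem exists_isBoundaryPath (hJ : J ≠ ⊥) {δ : List (cover g J).D}
    (h : (cover g J).BCycle (coreSub g J).sE (coreSub g J).sF δ) :
    ∃ (x : Cos g J) (ℓ : ℕ → Letter g), Function.Periodic ℓ δ.length ∧
      δ = coverWalk x (pathWord ℓ δ.length) ∧ x <• wordG (pathWord ℓ δ.length) = x ∧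
      IsBoundaryPath x ℓ := by
  obtain ⟨⟨-, -, hchain⟩, a, b, ha, hb, hab⟩ := h
  obtain ⟨d, hper, hδ, hd⟩ := exists_periodic_of_isChain hchain ha hb hab
  obtain ⟨x, l, hx⟩ := exists_eq_dart (d 0)
  have hdart := eq_dart_pathVertex (fun i => (hd i).2.1.2.1) (x := x) (by rw [hx, dLet_dart])
  have hstep := fun i => bStep_coreSub hJ (hdart i ▸ hdart (i + 1) ▸ hd i)
  refine ⟨x, fun i => (cover g J).dLet (d i), fun i => congrArg _ (hper i), ?_, ?_,
    fun i => (hstep i).1, fun i => (hstep i).2.1, fun i => (hstep i).2.2⟩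
  · rw [coverWalk_pathWord, ← funext hdart]
    exact hδ
  · have hclosed := (hdart δ.length).symm.trans ((hper.eq).trans hx)
    exact (dart_inj.1 hclosed).1

end BoundaryPaths

/-! ### Boundary cycles are cyclically shortest -/

section BoundaryCycles

variable {g : ℕ} {C J : Subgroup (Gamma g)}

lemma l1Norm_mono {α : Type*} {z z' : α →₀ ℤ} (h : ∀ e, |z e| ≤ |z' e|) :
    l1Norm z ≤ l1Norm z' := by
  classical
  rw [l1Norm_eq_sum (S := z.support ∪ z'.support) Finset.subset_union_left,
    l1Norm_eq_sum (S := z.support ∪ z'.support) Finset.subset_union_right]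
  exact Finset.sum_le_sum fun e _ => h e

lemma l1Norm_le_of_dartVal_le {X : Type*} [MulAction (Gamma g)ᵐᵒᵖ X] {z z' : Chain g X}
    (h : ∀ v l, 0 < dartVal v l z → dartVal v l z ≤ dartVal v l z') : l1Norm z ≤ l1Norm z' := by
  have habs (v : X) (l : Letter g) (hpos : 0 < dartVal v l z) :
      |dartVal v l z| ≤ |dartVal v l z'| :=
    abs_le_abs_of_nonneg hpos.le (h v l hpos)
  refine l1Norm_mono fun ⟨v, i⟩ => ?_
  rcases lt_trichotomy 0 (dartVal v (i, true) z) with hv | hv | hv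
  · exact habs v (i, true) hv
  · exact (abs_eq_zero.2 hv.symm).trans_le (abs_nonneg _)
  · have hrev := habs (v <• letterG (i, true)) (invLetter (i, true))
      (by rw [dartVal_invLetter]; omega)
    rwa [dartVal_invLetter, dartVal_invLetter, abs_neg, abs_neg] at hrev

lemma IsMinimalChain.apply_eq_zero_of_isOuterFace (hg : 0 < g)
    (φ : Cos g C →[(Gamma g)ᵐᵒᵖ] Cos g J) {x : Cos g C} {w : List (Letter g)}
    {n : Cos g C →₀ ℤ} (hm : IsMinimalChain (wordChain x w - boundary g n))
    (hx : x <• wordG w = x) (hw : ∀ y l, Traverses x w y l → IsCoreDart (φ y) l)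
    {f : Cos g C} (hf : IsOuterFace (φ f)) : n f = 0 := by
  refine CS.apply_eq_zero_of_isOuterFace hg (fun y l hne => ?_) hf
  by_cases hzero : dartVal y l (wordChain x w) = 0
  · refine (hm.isCoreDart (fun v => ?_) (x := y) (l := l) ?_).map φ
    · rw [Finsupp.coe_sub, map_sub, divergence_wordChain_eq_zero hx, divergence_boundary, sub_zero]
    · rwa [Finsupp.coe_sub, map_sub, hzero, zero_sub, neg_ne_zero]
  · rcases traverses_of_dartVal_ne_zero hzero with h | h
    · exact hw _ _ h
    · simpa using (hw _ _ h).inv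

lemma IsBoundaryPath.isExtremalPath {x : Cos g J} {ℓ : ℕ → Letter g} (h : IsBoundaryPath x ℓ) :
    IsExtremalPath IsCoreDart x ℓ where
  not_mem_of_gapN_lt := h.not_isCoreDart
  exists_loop i := by
    obtain ⟨a, ha, hclosed⟩ := h.isCoreDart i
    exact ⟨a, ha, hclosed, fun _ _ hm => .of_traverses ha hclosed hm⟩

theorem IsExtremalPath.exists_lift_filling {K : Cos g J → Letter g → Prop} {x : Cos g J}
    {ℓ : ℕ → Letter g} (hK : ∀ v l, K v l → K (v <• letterG l) (invLetter l))
    (hP : IsExtremalPath K x ℓ) {p : ℕ} (hper : Function.Periodic ℓ p)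
    (hx : x <• wordG (pathWord ℓ p) = x) :
    ∃ (C : Subgroup (Gamma g)) (φ : Cos g C →[(Gamma g)ᵐᵒᵖ] Cos g J) (u : Cos g C)
      (n : Cos g C →₀ ℤ), φ u = x ∧ l1Norm (wordChain u (pathWord ℓ p)) = p ∧
      l1Norm (wordChain u (pathWord ℓ p) - boundary g n) = conjLen (wordG (pathWord ℓ p)) ∧
      IsMinimalChain (wordChain u (pathWord ℓ p) - boundary g n) ∧
      (∀ i, 0 ≤ n (rightFace (pathVertex u ℓ i) (ℓ i))) ∧
      ∀ n', IsMinimalChain (wordChain u (pathWord ℓ p) - boundary g n') →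
        ∀ f, IsOuterFace (φ f) → n' f = 0 := by
  obtain ⟨y, rfl⟩ : ∃ y, mkCos g J y = x := Quotient.exists_rep x
  obtain ⟨γ, hγ⟩ : ∃ γ, y * wordG (pathWord ℓ p) * y⁻¹ = γ := ⟨_, rfl⟩
  have hJ : γ ∈ J := by
    rwa [op_smul_mkCos, eq_comm, mkCos_eq_mkCos, hγ] at hx
  have hclosed : mkCos g (Subgroup.zpowers γ) y <• wordG (pathWord ℓ p) =
      mkCos g (Subgroup.zpowers γ) y := by
    rw [op_smul_mkCos, eq_comm, mkCos_eq_mkCos, hγ]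
    exact Subgroup.mem_zpowers γ
  obtain ⟨n, hlen, hmin, hright⟩ := hP.exists_filling hK hper hγ hJ
  refine ⟨Subgroup.zpowers γ, coverHom ((Subgroup.zpowers_le (g := γ)).2 hJ), _, n, rfl,
    hP.l1Norm_wordChain hK hper hγ, hlen, hmin, hright, fun n' hmin' f hf =>
    hmin'.apply_eq_zero_of_isOuterFace (genus_pos (ℓ 0)) _ hclosed (fun v l hv => ?_) hf⟩
  obtain ⟨j, -, rfl, rfl⟩ := traverses_pathWord.1 hv
  rw [map_pathVertex]
  obtain ⟨a, ha, hloop, -⟩ := hP.exists_loop j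
  exact ⟨a, ha, hloop⟩

/-- A minimal filling vanishes on the outer faces to the left of the path and is nonnegative to its
right, so subtracting its boundary does not shorten the path. -/
theorem IsBoundaryPath.conjLen_eq {x : Cos g J} {ℓ : ℕ → Letter g}
    (h : IsBoundaryPath x ℓ) {p : ℕ} (hper : Function.Periodic ℓ p)
    (hx : x <• wordG (pathWord ℓ p) = x) : conjLen (wordG (pathWord ℓ p)) = p := by
  obtain ⟨C, φ, u, n, rfl, hnorm, hlen, hmin, hright, houter⟩ :=
    h.isExtremalPath.exists_lift_filling (fun v l (hv : IsCoreDart v l) => hv.inv) hper hx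
  have hleft (i : ℕ) : n (leftFace (pathVertex u ℓ i) (ℓ i)) = 0 := by
    refine houter n hmin _ ?_
    rw [map_leftFace, map_pathVertex]
    exact h.isOuterFace i
  have hle : l1Norm (wordChain u (pathWord ℓ p)) ≤
      l1Norm (wordChain u (pathWord ℓ p) - boundary g n) := by
    refine l1Norm_le_of_dartVal_le fun v l hpos => ?_
    obtain ⟨i, -, rfl, rfl⟩ := traverses_pathWord.1 (traverses_of_dartVal_pos hpos)
    rw [Finsupp.coe_sub, map_sub, dartVal_boundary, hleft i]
    linarith [hright i]
  have hub := conjLen_le (w := pathWord ℓ p) (y := 1) (γ := wordG (pathWord ℓ p)) (by simp)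
  rw [length_pathWord] at hub
  omega

theorem IsBoundaryPath.isCyclicallyShortest {x : Cos g J} {ℓ : ℕ → Letter g}
    (h : IsBoundaryPath x ℓ) {p : ℕ} (hp : 0 < p) (hper : Function.Periodic ℓ p)
    (hx : x <• wordG (pathWord ℓ p) = x) : IsCyclicallyShortest (pathWord ℓ p) := by
  have hlen := h.conjLen_eq hper hx
  refine isCyclicallyShortest_of_length_eq_conjLen (y := 1) (fun hone => ?_)
    (by rw [length_pathWord, hlen]) (by simp)
  have hzero := conjLen_le (w := []) (y := 1) (γ := wordG (pathWord ℓ p)) (by simp [hone])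
  rw [hlen, List.length_nil] at hzero
  omega

end BoundaryCycles

/-! ### Half-chains -/

section RelatorArcs

variable {g : ℕ} {X : Type*} [MulAction (Gamma g)ᵐᵒᵖ X]

/-- The word of `n` consecutive letters of the cyclic relator, starting at the letter `l`: the word
read by a block. -/
def relatorArc (l : Letter g) (n : ℕ) : List (Letter g) := pathWord (fun k => nextLetter^[k] l) n

@[simp] lemma length_relatorArc (l : Letter g) (n : ℕ) : (relatorArc l n).length = n :=
  length_pathWord _ n

lemma relatorArc_succ (l : Letter g) (n : ℕ) :
    relatorArc l (n + 1) = relatorArc l n ++ [nextLetter^[n] l] := pathWord_succ _ n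

lemma relatorArc_add (l : Letter g) (m n : ℕ) :
    relatorArc l (m + n) = relatorArc l m ++ relatorArc (nextLetter^[m] l) n := by
  simp only [relatorArc, pathWord_add, ← Function.iterate_add_apply, add_comm]

lemma relIndex_iterate_nextLetter (l : Letter g) (k : ℕ) :
    relIndex (nextLetter^[k] l) = (relIndex l + k) % (4 * g) := by
  induction k with
  | zero => exact (Nat.mod_eq_of_lt (relIndex_lt l)).symm
  | succ k ih => rw [Function.iterate_succ_apply', relIndex_nextLetter, ih, Nat.mod_add_mod,
      add_assoc]

lemma iterate_nextLetter_four_mul (l : Letter g) : nextLetter^[4 * g] l = l :=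
  relIndex_injective <| by
    rw [relIndex_iterate_nextLetter, Nat.add_mod_right, Nat.mod_eq_of_lt (relIndex_lt l)]

lemma nextLetter_bijective : Function.Bijective (nextLetter (g := g)) := by
  refine Function.Injective.bijective_of_finite fun l m h => ?_
  have hg := genus_pos l
  have hiter := congrArg (nextLetter^[4 * g - 1]) h
  rwa [← Function.iterate_succ_apply, ← Function.iterate_succ_apply,
    show (4 * g - 1).succ = 4 * g by omega, iterate_nextLetter_four_mul,
    iterate_nextLetter_four_mul] at hiter

lemma relatorArc_four_mul (l : Letter g) : relatorArc l (4 * g) =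
    (relatorWord g).drop (relIndex l) ++ (relatorWord g).take (relIndex l) := by
  rw [← List.rotate_eq_drop_append_take (by simpa using (relIndex_lt l).le)]
  refine List.ext_getElem (by simp) fun k hk _ => relIndex_injective ?_
  rw [List.getElem_rotate, getElem_relatorWord, relIndex_relLetter, length_relatorWord, add_comm]
  simp [relatorArc, pathWord, relIndex_iterate_nextLetter]

lemma wordG_relatorArc_four_mul (l : Letter g) : wordG (relatorArc l (4 * g)) = 1 := by
  rw [relatorArc_four_mul, wordG_append, mul_eq_one_comm, ← wordG_append, List.take_append_drop,
    wordG_relatorWord]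

lemma wordChain_relatorArc_four_mul (x : X) (l : Letter g) :
    wordChain x (relatorArc l (4 * g)) = boundary g (Finsupp.single (leftFace x l) 1) := by
  have hx : leftFace x l <• wordG ((relatorWord g).take (relIndex l)) = x :=
    leftFace_op_smul x l
  have hsplit := List.take_append_drop (relIndex l) (relatorWord g)
  have hclosed : x <• wordG ((relatorWord g).drop (relIndex l)) = leftFace x l := by
    conv_lhs => rw [← hx, op_smul_op_smul, ← wordG_append, hsplit, wordG_relatorWord]
    exact one_smul _ _
  rw [boundary_single, one_smul, relatorArc_four_mul, wordChain_append, hclosed, ← hsplit,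
    wordChain_append, hx, hsplit, add_comm]

lemma eq_of_gapN_eq_one {s t : Letter g} (h : gapN s t = 1) :
    t = nextLetter (invLetter (nextLetter s)) := by
  have hg := genus_pos s
  rw [nextLetter_eq_letterAt hg s, nextLetter_invLetter_letterAt]
  exact h ▸ eq_letterAt_gapN hg s t

lemma eq_relatorArc_of_isChain (l : Letter g) (w : List (Letter g))
    (h : (l :: w).IsChain fun s t => gapN s t = 0) : l :: w = relatorArc l (w.length + 1) := by
  refine List.ext_getElem (by simp) fun k hk _ => ?_
  simp only [relatorArc, pathWord, List.getElem_map, List.getElem_range]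
  induction k with
  | zero => rfl
  | succ k ih =>
    rw [Function.iterate_succ_apply', ← ih (by omega) (by simp at hk ⊢; omega)]
    exact eq_nextLetter_of_gapN_eq_zero (List.isChain_iff_getElem.1 h k hk)

end RelatorArcs

section HalfChains

variable {g : ℕ} {X : Type*} [MulAction (Gamma g)ᵐᵒᵖ X]

/-- The word read by the block of a half-chain that follows the half-edge `q`, where `q` is the
single half-edge separating this block from the preceding one. -/
def halfChainBlock (q : Letter g) : List (Letter g) :=
  relatorArc (nextLetter (invLetter q)) (2 * g - 1)

/-- The half-edge separating the block that follows the half-edge `q` from the next one. -/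
def nextSpoke (q : Letter g) : Letter g := nextLetter^[2 * g] (invLetter q)

/-- The word read by `k` consecutive blocks of a half-chain, the first of which follows `q`. -/
def halfChainWord (q : Letter g) (k : ℕ) : List (Letter g) :=
  ((List.range k).map fun i => halfChainBlock (nextSpoke^[i] q)).flatten

lemma head?_halfChainBlock (q : Letter g) :
    (halfChainBlock q).head? = some (nextLetter (invLetter q)) := by
  have hg := genus_pos q
  rw [halfChainBlock, show 2 * g - 1 = 1 + (2 * g - 2) by omega, relatorArc_add]
  rfl

@[simp] lemma halfChainWord_zero (q : Letter g) : halfChainWord q 0 = [] := rfl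

lemma halfChainWord_succ (q : Letter g) (k : ℕ) :
    halfChainWord q (k + 1) = halfChainBlock q ++ halfChainWord (nextSpoke q) k := by
  simp only [halfChainWord, List.range_succ_eq_map, List.map_cons, List.map_map,
    List.flatten_cons, Function.comp_def, Function.iterate_succ_apply]
  rfl

lemma head?_halfChainWord (q : Letter g) {k : ℕ} (hk : 0 < k) :
    (halfChainWord q k).head? = some (nextLetter (invLetter q)) := by
  obtain ⟨k, rfl⟩ := Nat.exists_eq_add_of_lt hk
  rw [zero_add, halfChainWord_succ, List.head?_append, head?_halfChainBlock, Option.some_or]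

lemma relatorArc_eq_halfChainBlock_append (q : Letter g) :
    relatorArc (nextLetter (invLetter q)) (4 * g) = halfChainBlock q ++ [nextSpoke q] ++
      relatorArc (nextLetter (nextSpoke q)) (2 * g - 1) ++ [invLetter q] := by
  have hg := genus_pos q
  rw [show 4 * g = 2 * g - 1 + 1 + (2 * g - 1) + 1 by omega, relatorArc_succ, relatorArc_add,
    relatorArc_succ]
  simp only [← Function.iterate_succ_apply]
  rw [show (2 * g - 1 + 1 + (2 * g - 1)).succ = 4 * g by omega, iterate_nextLetter_four_mul,
    show (2 * g - 1).succ = 2 * g by omega, show (2 * g - 1 + 1).succ = (2 * g).succ by omega,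
    Function.iterate_succ_apply' nextLetter (2 * g)]
  rfl

lemma exists_halfChainBlock_filling (q : Letter g) :
    ∃ D : List (Letter g), D.length = (halfChainBlock q).length ∧
      wordG (halfChainBlock q) * letterG (nextSpoke q) = letterG q * wordG D ∧
      ∀ x : X, wordChain x (halfChainBlock q) +
          dartChain (x <• wordG (halfChainBlock q)) (nextSpoke q) =
        dartChain x q + wordChain (x <• letterG q) D +
          boundary g (Finsupp.single (leftFace x (nextLetter (invLetter q))) 1) := by
  obtain ⟨T, hT⟩ : ∃ T, T = relatorArc (nextLetter (nextSpoke q)) (2 * g - 1) := ⟨_, rfl⟩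
  have hsplit := relatorArc_eq_halfChainBlock_append q
  have hone := wordG_relatorArc_four_mul (nextLetter (invLetter q))
  rw [← hT] at hsplit
  rw [hsplit] at hone
  simp only [wordG_append, wordG_cons, wordG_nil, mul_one, letterG_invLetter, mul_inv_eq_one]
    at hone
  refine ⟨invWord T, by rw [length_invWord, hT]; simp [halfChainBlock], ?_, fun x => ?_⟩
  · rw [wordG_invWord, eq_mul_inv_iff_mul_eq, hone]
  · have hinv := wordChain_invWord (x <• (wordG (halfChainBlock q) * letterG (nextSpoke q))) T
    rw [op_smul_op_smul, hone] at hinv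
    rw [← wordChain_relatorArc_four_mul, hsplit, hinv]
    simp only [wordChain_append, wordChain_cons, wordChain_nil, add_zero, wordG_append, wordG_cons,
      wordG_nil, mul_one, hone, dartChain_invLetter]
    abel

lemma exists_halfChainWord_filling (q : Letter g) (k : ℕ) (x : X) :
    ∃ (D : List (Letter g)) (n : X →₀ ℤ), D.length = (halfChainWord q k).length ∧
      wordG (halfChainWord q k) * letterG (nextSpoke^[k] q) = letterG q * wordG D ∧
      wordChain x (halfChainWord q k) +
          dartChain (x <• wordG (halfChainWord q k)) (nextSpoke^[k] q) =
        dartChain x q + wordChain (x <• letterG q) D + boundary g n ∧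
      0 ≤ n ∧ (0 < k → 0 < n (leftFace x (nextLetter (invLetter q)))) := by
  induction k generalizing q x with
  | zero => exact ⟨[], 0, by simp⟩
  | succ k ih =>
    obtain ⟨D, hlen, hword, hchain⟩ := exists_halfChainBlock_filling (X := X) q
    obtain ⟨D', n, hlen', hword', hchain', hn, -⟩ :=
      ih (nextSpoke q) (x <• wordG (halfChainBlock q))
    have hsingle : 0 ≤ Finsupp.single (leftFace x (nextLetter (invLetter q))) (1 : ℤ) :=
      Finsupp.single_nonneg.2 zero_le_one
    refine ⟨D ++ D', Finsupp.single (leftFace x (nextLetter (invLetter q))) 1 + n, ?_, ?_, ?_,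
      add_nonneg hsingle hn, fun _ => ?_⟩
    · rw [halfChainWord_succ, List.length_append, List.length_append, hlen, hlen']
    · rw [halfChainWord_succ, wordG_append, wordG_append, Function.iterate_succ_apply, mul_assoc,
        hword', ← mul_assoc, hword, mul_assoc]
    · rw [halfChainWord_succ, wordG_append, wordChain_append, wordChain_append,
        Function.iterate_succ_apply, ← op_smul_op_smul, add_assoc, hchain', map_add,
        op_smul_op_smul x (letterG q), ← hword, ← op_smul_op_smul x, ← add_assoc, ← add_assoc,
        hchain]
      abel
    · rw [Finsupp.add_apply, Finsupp.single_eq_same]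
      have := hn (leftFace x (nextLetter (invLetter q)))
      rw [Finsupp.coe_zero, Pi.zero_apply] at this
      omega

variable {J : Subgroup (Gamma g)}

/-- The half-chain and its push-off are both shortest, so they run along core darts, and the filling
between them would have to vanish on the outer face next to the half-chain. -/
theorem not_isOuterFace_of_isCyclicallyShortest_halfChainWord {q : Letter g} {k : ℕ} (hk : 0 < k)
    (hq : nextSpoke^[k] q = q) {x : Cos g J} (hw : IsCyclicallyShortest (halfChainWord q k))
    (hx : x <• wordG (halfChainWord q k) = x) :
    ¬ IsOuterFace (leftFace x (nextLetter (invLetter q))) := by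
  intro hface
  obtain ⟨D, n, hlen, hword, hchain, -, hn⟩ := exists_halfChainWord_filling q k x
  rw [hq] at hword hchain
  have hD : IsCyclicallyShortest D :=
    hw.of_conj (y := letterG q) (by rw [← hword, mul_inv_cancel_right]) hlen.le
  have hxD : (x <• letterG q) <• wordG D = x <• letterG q := by
    rw [op_smul_op_smul, ← hword, ← op_smul_op_smul, hx]
  have hboundary :
      boundary g n = wordChain x (halfChainWord q k) - wordChain (x <• letterG q) D := by
    rw [hx, add_comm] at hchain
    rw [eq_sub_iff_add_eq, ← add_left_cancel_iff (a := dartChain x q), hchain]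
    abel
  refine (hn hk).ne' (apply_eq_zero_of_isOuterFace (genus_pos q)
    (φ := MulActionHom.id (Gamma g)ᵐᵒᵖ) (fun y l hy => ?_) hface)
  have hcore {z : Cos g J} {w : List (Letter g)} (hw : IsCyclicallyShortest w)
      (hz : z <• wordG w = z) (h : dartVal y l (wordChain z w) ≠ 0) : IsCoreDart y l := by
    rcases traverses_of_dartVal_ne_zero h with h | h
    · exact .of_traverses hw hz h
    · simpa using (IsCoreDart.of_traverses hw hz h).inv
  rw [hboundary, Finsupp.coe_sub, map_sub] at hy
  by_cases hzero : dartVal y l (wordChain x (halfChainWord q k)) = 0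
  · exact hcore hD hxD fun h => hy (by rw [hzero, h, sub_zero])
  · exact hcore hw hx hzero

lemma dart_cons_eq_coverWalk_of_isChain_adj {v : Cos g J} {l : Letter g} {L : List (cover g J).D}
    (h : (dart v l :: L).IsChain (cover g J).adj) :
    dart v l :: L = coverWalk v ((cover g J).wordOf (dart v l :: L)) := by
  induction L generalizing v l with
  | nil => rw [Complex.wordOf, List.map_singleton, dLet_dart, coverWalk_cons, coverWalk_nil]
  | cons d L ih =>
    obtain ⟨v', l', rfl⟩ := exists_eq_dart d
    obtain ⟨hadj, htail⟩ := List.isChain_cons_cons.1 h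
    obtain rfl := adj_dart.1 hadj
    rw [Complex.wordOf, List.map_cons, dLet_dart, coverWalk_cons]
    exact congrArg _ (ih htail)

lemma exists_eq_coverWalk_relatorArc_of_isBlock {b : List (cover g J).D}
    (hb : (cover g J).IsBlock b) : ∃ (v : Cos g J) (l : Letter g),
      b = coverWalk v (relatorArc l b.length) := by
  obtain ⟨hne, -, hchain⟩ := hb
  obtain ⟨d, L, rfl⟩ := List.exists_cons_of_ne_nil hne
  obtain ⟨v, l, rfl⟩ := exists_eq_dart d
  have hword := eq_relatorArc_of_isChain _ _
    ((List.isChain_map (cover g J).dLet (l := dart v l :: L)).2 (hchain.imp fun _ _ h => h.2))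
  rw [dLet_dart, List.length_map] at hword
  refine ⟨v, l, (dart_cons_eq_coverWalk_of_isChain_adj (hchain.imp fun _ _ h => h.1)).trans ?_⟩
  rw [Complex.wordOf, List.map_cons, dLet_dart, List.length_cons, ← hword]

lemma exists_wordOf_eq_halfChainBlock {b : List (cover g J).D} (h : (cover g J).IsBlock b)
    (hlen : b.length = 2 * g - 1) : ∃ q, (cover g J).wordOf b = halfChainBlock q := by
  obtain ⟨v, l, hwalk⟩ := exists_eq_coverWalk_relatorArc_of_isBlock h
  obtain ⟨m, rfl⟩ := nextLetter_bijective.surjective l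
  refine ⟨invLetter m, ?_⟩
  rw [hwalk, wordOf_coverWalk, hlen, halfChainBlock, invLetter_invLetter]

lemma eq_nextSpoke_of_chainStep {b b' : List (cover g J).D} (h : (cover g J).chainStep b b')
    {q q' : Letter g} (hq : (cover g J).wordOf b = halfChainBlock q)
    (hq' : (cover g J).wordOf b' = halfChainBlock q') : q' = nextSpoke q := by
  obtain ⟨d, d', hd, hd', -, hgap⟩ := h
  have hg := genus_pos q
  have hlast := congrArg List.getLast? hq
  have hhead := congrArg List.head? hq'
  rw [Complex.wordOf, List.getLast?_map, hd, halfChainBlock,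
    show 2 * g - 1 = 2 * g - 2 + 1 by omega, relatorArc_succ,
    List.getLast?_concat, ← Function.iterate_succ_apply, Option.map_some, Option.some.injEq]
    at hlast
  rw [Complex.wordOf, List.head?_map, hd', head?_halfChainBlock, Option.map_some,
    Option.some.injEq] at hhead
  have hspoke : nextLetter ((cover g J).dLet d) = nextSpoke q := by
    rw [nextSpoke, hlast, ← Function.iterate_succ_apply' nextLetter,
      show (2 * g - 2).succ.succ = 2 * g by omega]
  rw [eq_of_gapN_eq_one hgap, hspoke] at hhead
  have hinv := nextLetter_bijective.injective hhead
  exact (Function.LeftInverse.injective invLetter_invLetter hinv).symm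

lemma exists_wordOf_flatten_eq_halfChainWord {bs : List (List (cover g J).D)}
    (h : (cover g J).IsHalfChain bs) : ∃ q, nextSpoke^[bs.length] q = q ∧
      (cover g J).wordOf bs.flatten = halfChainWord q bs.length := by
  obtain ⟨⟨⟨hne, hblock, hchain⟩, b, b', hb, hb', hstep⟩, hlen⟩ := h
  obtain ⟨B, hper, hbs, hB⟩ := exists_periodic_of_isChain hchain hb hb' hstep
  have hmem (i : ℕ) : B i ∈ bs := by
    rw [← hper.map_mod_nat i, hbs, List.length_map, List.length_range]
    exact List.mem_map_of_mem (List.mem_range.2 (Nat.mod_lt _ (List.length_pos_iff.2 hne)))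
  have : Nonempty (Letter g) :=
    (exists_wordOf_eq_halfChainBlock (hblock _ (hmem 0)) (hlen _ (hmem 0))).nonempty
  choose! q hq using fun b hb => exists_wordOf_eq_halfChainBlock (hblock b hb) (hlen b hb)
  have hiter (i : ℕ) : q (B i) = nextSpoke^[i] (q (B 0)) := by
    induction i with
    | zero => rfl
    | succ i ih =>
      rw [Function.iterate_succ_apply', ← ih]
      exact eq_nextSpoke_of_chainStep (hB i) (hq _ (hmem i)) (hq _ (hmem (i + 1)))
  refine ⟨q (B 0), ?_, ?_⟩
  · rw [← hiter, hper.eq]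
  · conv_lhs => rw [hbs]
    simp only [Complex.wordOf, halfChainWord, List.map_flatten, List.map_map, ← hiter]
    exact congrArg List.flatten (List.map_congr_left fun i _ => hq _ (hmem i))

theorem not_bCycle_flatten_of_isHalfChain (hJ : J ≠ ⊥) {bs : List (List (cover g J).D)}
    (h : (cover g J).IsHalfChain bs) :
    ¬ (cover g J).BCycle (coreSub g J).sE (coreSub g J).sF bs.flatten := by
  intro hδ
  obtain ⟨x, ℓ, hper, hwalk, hx, hpath⟩ := exists_isBoundaryPath hJ hδ
  obtain ⟨q, hq, hword⟩ := exists_wordOf_flatten_eq_halfChainWord h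
  have hpos : 0 < bs.length := List.length_pos_iff.2 h.1.1.1
  have hδpos : 0 < bs.flatten.length := List.length_pos_iff.2 hδ.1.1
  have hpathWord : pathWord ℓ bs.flatten.length = halfChainWord q bs.length := by
    rw [← hword, hwalk, wordOf_coverWalk, ← hwalk]
  have hzero : ℓ 0 = nextLetter (invLetter q) := by
    rw [← Option.some.injEq, ← head?_halfChainWord q hpos, ← hpathWord,
      ← Nat.sub_add_cancel hδpos, add_comm, pathWord_add]
    rfl
  have hshort := hpath.isCyclicallyShortest hδpos hper hx
  rw [hpathWord] at hshort hx
  refine not_isOuterFace_of_isCyclicallyShortest_halfChainWord hpos hq hshort hx ?_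
  rw [← hzero, ← pathVertex_zero x ℓ]
  exact hpath.isOuterFace 0

end HalfChains

/-! ### Loop systems -/

section LoopSystems

lemma exists_periodic_orbit {α : Type*} {S : Set α} (hS : S.Finite) {R : α → α → Prop}
    (hex : ∀ s ∈ S, ∃ t ∈ S, R s t) (huniq : ∀ s ∈ S, ∀ s' ∈ S, ∀ t, R s t → R s' t → s = s')
    {a : α} (ha : a ∈ S) :
    ∃ (d : ℕ → α) (p : ℕ), 0 < p ∧ Function.Periodic d p ∧ d 0 = a ∧
      ∀ i, d i ∈ S ∧ R (d i) (d (i + 1)) := by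
  have : Finite S := hS
  have hex' : ∀ s : S, ∃ t : S, R s t := fun s =>
    have ⟨t, ht, hst⟩ := hex s s.2
    ⟨⟨t, ht⟩, hst⟩
  choose next hnext using hex'
  have hinj : Function.Injective next := fun s t h =>
    Subtype.ext (huniq s s.2 t t.2 _ (hnext s) (h ▸ hnext t))
  obtain ⟨p, hp, hper⟩ := Function.mem_periodicPts.1 (hinj.mem_periodicPts ⟨a, ha⟩)
  refine ⟨fun i => next^[i] ⟨a, ha⟩, p, hp, fun i => ?_, rfl, fun i => ⟨Subtype.coe_prop _, ?_⟩⟩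
  · simp only [Function.iterate_add_apply, hper.eq]
  · simp only [Function.iterate_succ_apply']
    exact hnext _

variable {g : ℕ}

lemma gapN_eq_ite (s t : Letter g) : gapN s t =
    if posArr s < posLv t then posLv t - posArr s - 1 else posLv t + 4 * g - posArr s - 1 := by
  have hs := posArr_lt s
  have ht := posLv_lt t
  rw [gapN]
  split_ifs with h
  · rw [show posLv t + 4 * g - (posArr s + 1) = posLv t - posArr s - 1 + 4 * g by omega,
      Nat.add_mod_right, Nat.mod_eq_of_lt (by omega)]
  · rw [Nat.mod_eq_of_lt (by omega)]
    omega

lemma eq_of_gapN_le {s s' t : Letter g} (h : gapN s t ≤ gapN s (invLetter s'))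
    (h' : gapN s' t ≤ gapN s' (invLetter s)) : s = s' := by
  refine Function.LeftInverse.injective invLetter_invLetter (posLv_injective ?_)
  have hs := posArr_lt s
  have hs' := posArr_lt s'
  rw [gapN_eq_ite, gapN_eq_ite] at h h'
  rw [← posArr_eq_posLv_invLetter] at h h' ⊢
  rw [← posArr_eq_posLv_invLetter]
  split_ifs at h h' <;> omega

variable {X : Type*} [MulAction (Gamma g)ᵐᵒᵖ X] {x y : X} {w : List (Letter g)} {l m : Letter g}

lemma finite_setOf_traverses (x : X) (w : List (Letter g)) :
    {d : X × Letter g | Traverses x w d.1 d.2}.Finite := by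
  induction w generalizing x with
  | nil => simp [not_traverses_nil]
  | cons l w ih =>
    refine ((ih (x <• letterG l)).insert (x, l)).subset fun d hd => ?_
    exact (traverses_cons.1 hd).imp_left fun h => Prod.ext h.1 h.2

lemma Traverses.invWord (hx : x <• wordG w = x) (h : Traverses x w y m) :
    Traverses x (invWord w) (y <• letterG m) (invLetter m) := by
  obtain ⟨a, b, rfl, rfl⟩ := h
  refine ⟨CS.invWord b, CS.invWord a, by simp [invWord_append, invWord_cons], ?_⟩
  conv_rhs => rw [← hx]
  simp only [op_smul_op_smul]
  congr 2
  simp [mul_assoc]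

lemma Traverses.exists_rotation (hw : IsCyclicallyShortest w) (hx : x <• wordG w = x)
    (h : Traverses x w y m) :
    ∃ a, IsCyclicallyShortest (m :: a) ∧ y <• wordG (m :: a) = y ∧
      ∀ z l, Traverses y (m :: a) z l → Traverses x w z l := by
  obtain ⟨a, b, rfl, rfl⟩ := h
  have hback : x <• wordG a <• wordG (m :: b) = x := by
    rwa [op_smul_op_smul, ← wordG_append]
  refine ⟨b ++ a, hw.append_comm, ?_, fun z l hz => ?_⟩
  · rw [← List.cons_append, wordG_append, ← op_smul_op_smul, hback]
  · rw [← List.cons_append, traverses_append, hback] at hz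
    exact traverses_append.2 hz.symm

/-- A finite set of darts, closed under reversal and covered by closed walks inside it that read
cyclically shortest words. Replacing the core darts by such a set makes the extremal paths
periodic. -/
structure IsLoopSystem (S : Set (X × Letter g)) : Prop where
  finite : S.Finite
  inv_mem : ∀ y m, (y, m) ∈ S → (y <• letterG m, invLetter m) ∈ S
  exists_loop : ∀ y m, (y, m) ∈ S → ∃ a, IsCyclicallyShortest (m :: a) ∧ y <• wordG (m :: a) = y ∧
    ∀ z l, Traverses y (m :: a) z l → (z, l) ∈ S

lemma IsCoreDart.exists_isLoopSystem (h : IsCoreDart x l) :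
    ∃ S : Set (X × Letter g), IsLoopSystem S ∧ (x, l) ∈ S := by
  obtain ⟨a, hw, hx⟩ := h
  obtain ⟨w, hla⟩ : ∃ w, w = l :: a := ⟨_, rfl⟩
  rw [← hla] at hw hx
  have hx' : x <• wordG (invWord w) = x := by rw [wordG_invWord, ← op_smul_eq_iff.1 hx]
  have hinv : invWord (invWord w) = w := by simp [invWord, Function.comp_def]
  refine ⟨{d | Traverses x w d.1 d.2} ∪ {d | Traverses x (invWord w) d.1 d.2},
    ⟨(finite_setOf_traverses x w).union (finite_setOf_traverses x _), fun y m => ?_, fun y m => ?_⟩,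
    Or.inl ⟨[], a, hla, by simp⟩⟩
  · rintro (h | h)
    · exact Or.inr (Traverses.invWord hx h)
    · exact Or.inl (hinv ▸ Traverses.invWord hx' h)
  · rintro (h | h)
    · obtain ⟨b, hb, hy, hsub⟩ := h.exists_rotation hw hx
      exact ⟨b, hb, hy, fun z l hz => Or.inl (hsub z l hz)⟩
    · obtain ⟨b, hb, hy, hsub⟩ := h.exists_rotation hw.invWord hx'
      exact ⟨b, hb, hy, fun z l hz => Or.inr (hsub z l hz)⟩

namespace IsLoopSystem

lemma iUnion {ι : Type*} [Finite ι] {S : ι → Set (X × Letter g)} (h : ∀ i, IsLoopSystem (S i)) :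
    IsLoopSystem (⋃ i, S i) where
  finite := Set.finite_iUnion fun i => (h i).finite
  inv_mem y m hm := by
    obtain ⟨i, hi⟩ := Set.mem_iUnion.1 hm
    exact Set.mem_iUnion_of_mem i ((h i).inv_mem y m hi)
  exists_loop y m hm := by
    obtain ⟨i, hi⟩ := Set.mem_iUnion.1 hm
    obtain ⟨a, ha, hy, hsub⟩ := (h i).exists_loop y m hi
    exact ⟨a, ha, hy, fun z l hz => Set.mem_iUnion_of_mem i (hsub z l hz)⟩

variable {S : Set (X × Letter g)}

/-- The turn at each vertex is invertible, so its orbits on the finite set `S` are cycles. -/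
lemma exists_isExtremalPath (hS : IsLoopSystem S) (h : (x, l) ∈ S) :
    ∃ (ℓ : ℕ → Letter g) (p : ℕ), 0 < p ∧ Function.Periodic ℓ p ∧
      Function.Periodic (pathVertex x ℓ) p ∧ ℓ 0 = l ∧
      IsExtremalPath (fun v m => (v, m) ∈ S) x ℓ := by
  obtain ⟨d, p, hp, hper, hd, hstep⟩ := exists_periodic_orbit hS.finite
    (R := fun s t => t.1 = s.1 <• letterG s.2 ∧
      ∀ m, (s.1 <• letterG s.2, m) ∈ S → gapN s.2 t.2 ≤ gapN s.2 m)
    (fun s hs => by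
      obtain ⟨t, ht, hmin⟩ := Set.exists_min_image {t ∈ S | t.1 = s.1 <• letterG s.2}
        (fun t => gapN s.2 t.2) (hS.finite.subset (Set.sep_subset _ _))
        ⟨_, hS.inv_mem s.1 s.2 hs, rfl⟩
      exact ⟨t, ht.1, ht.2, fun m hm => hmin _ ⟨hm, rfl⟩⟩)
    (fun s hs s' hs' t ht ht' => by
      have hv : s.1 <• letterG s.2 = s'.1 <• letterG s'.2 := ht.1.symm.trans ht'.1
      have hl : s.2 = s'.2 := eq_of_gapN_le
        (ht.2 _ (by rw [hv]; exact hS.inv_mem s'.1 s'.2 hs'))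
        (ht'.2 _ (by rw [← hv]; exact hS.inv_mem s.1 s.2 hs))
      rw [hl] at hv
      exact Prod.ext (MulAction.injective _ hv) hl) h
  have hvertex (i : ℕ) : (d i).1 = pathVertex x (fun j => (d j).2) i := by
    induction i with
    | zero => rw [hd, pathVertex_zero]
    | succ i ih => rw [pathVertex_succ, ← ih, (hstep i).2.1]
  refine ⟨fun i => (d i).2, p, hp, fun i => congrArg Prod.snd (hper i), fun i => ?_,
    congrArg Prod.snd hd, fun i m hlt hm => ?_, fun i => ?_⟩
  · rw [← hvertex, ← hvertex, hper]
  · rw [← hvertex, (hstep i).2.1] at hm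
    exact hlt.not_ge ((hstep i).2.2 m hm)
  · rw [← hvertex]
    exact hS.exists_loop _ _ (hstep i).1

end IsLoopSystem

lemma IsExtremalPath.eq_iterate_nextLetter {K : X → Letter g → Prop} {ℓ : ℕ → Letter g}
    (hP : IsExtremalPath K x ℓ) {n : ℕ}
    (h : ∀ k < n, K (pathVertex x (fun i => nextLetter^[i] (ℓ 0)) k) (nextLetter^[k] (ℓ 0))) :
    ∀ k < n, ℓ k = nextLetter^[k] (ℓ 0) := by
  intro k hk
  induction k using Nat.strong_induction_on with | _ k ih =>
  rcases k with _ | k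
  · rfl
  have hvertex : pathVertex x ℓ (k + 1) =
      pathVertex x (fun i => nextLetter^[i] (ℓ 0)) (k + 1) := by
    refine congrArg (fun w => x <• wordG w) (List.map_congr_left fun i hi => ?_)
    exact ih i (List.mem_range.1 hi) ((List.mem_range.1 hi).trans hk)
  have hmem := h (k + 1) hk
  rw [← hvertex, Function.iterate_succ_apply', ← ih k (by omega) (by omega)] at hmem
  rw [Function.iterate_succ_apply', ← ih k (by omega) (by omega)]
  refine eq_nextLetter_of_gapN_eq_zero (not_not.1 fun hne => hP.not_mem_of_gapN_lt k _ ?_ hmem)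
  rw [gapN_nextLetter]
  exact Nat.pos_of_ne_zero hne

end LoopSystems

/-! ### Half-blocks -/

section HalfBlocks

variable {g : ℕ} {X : Type*} [MulAction (Gamma g)ᵐᵒᵖ X] {x : X} {l : Letter g}

lemma op_smul_wordG_relatorArc_succ (x : X) (l : Letter g) (k : ℕ) :
    x <• wordG (relatorArc l (k + 1)) = x <• wordG (relatorArc l k) <• letterG (nextLetter^[k] l) :=
  pathVertex_succ x _ k

lemma leftFace_op_smul_relatorArc (x : X) (l : Letter g) (k : ℕ) :
    leftFace (x <• wordG (relatorArc l k)) (nextLetter^[k] l) = leftFace x l := by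
  induction k with
  | zero => exact congrArg (leftFace · l) (one_smul _ x)
  | succ k ih =>
    rw [op_smul_wordG_relatorArc_succ, Function.iterate_succ_apply', leftFace_nextLetter, ih]

lemma traverses_relatorArc {y : X} {m : Letter g} {n : ℕ} :
    Traverses x (relatorArc l n) y m ↔
      ∃ i < n, y = x <• wordG (relatorArc l i) ∧ m = nextLetter^[i] l :=
  traverses_pathWord

lemma dartVal_wordChain_relatorArc_nonpos {n : ℕ} (hn : n < 4 * g) (y : X) :
    dartVal y (nextLetter^[n] l) (wordChain x (relatorArc l n)) ≤ 0 := by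
  by_contra! hpos
  obtain ⟨i, hi, -, heq⟩ := traverses_relatorArc.1 (traverses_of_dartVal_pos hpos)
  have hmod := congrArg relIndex heq
  rw [relIndex_iterate_nextLetter, relIndex_iterate_nextLetter] at hmod
  have hcancel : n ≡ i [MOD 4 * g] := Nat.ModEq.add_left_cancel' _ hmod
  exact hi.ne' (hcancel.eq_of_lt_of_lt hn (hi.trans hn))

lemma l1Norm_sub_wordChain_relatorArc {z : Chain g X} {n : ℕ} (hn : n ≤ 4 * g)
    (h : ∀ k < n, 1 ≤ dartVal (x <• wordG (relatorArc l k)) (nextLetter^[k] l) z) :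
    l1Norm (z - wordChain x (relatorArc l n)) = l1Norm z - n := by
  induction n with
  | zero => simp [relatorArc, pathWord]
  | succ n ih =>
    have hval := h n n.lt_succ_self
    have harc := dartVal_wordChain_relatorArc_nonpos (x := x) (l := l) (Nat.lt_of_succ_le hn)
      (x <• wordG (relatorArc l n))
    rw [relatorArc_succ, wordChain_append, wordChain_cons, wordChain_nil, add_zero, ← sub_sub,
      l1Norm_sub_dartChain_of_pos, ih (by omega) fun k hk => h k (by omega)]
    · push_cast
      ring
    · rw [Finsupp.coe_sub, map_sub]
      omega

/-- Replacing the half of the `4g`-gon contained in the chain by the other half. -/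
lemma IsMinimalChain.sub_boundary_single {z : Chain g X} (hz : IsMinimalChain z)
    (h : ∀ k < 2 * g, 1 ≤ dartVal (x <• wordG (relatorArc l k)) (nextLetter^[k] l) z) :
    IsMinimalChain (z - boundary g (Finsupp.single (leftFace x l) 1)) := by
  have hle : l1Norm (z - boundary g (Finsupp.single (leftFace x l) 1)) ≤ l1Norm z := by
    have hhalf := l1Norm_sub_wordChain_relatorArc (by omega) h
    have hother := l1Norm_wordChain_le (x <• wordG (relatorArc l (2 * g)))
      (relatorArc (nextLetter^[2 * g] l) (2 * g))
    rw [← l1Norm_neg, length_relatorArc] at hother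
    rw [← wordChain_relatorArc_four_mul, show 4 * g = 2 * g + 2 * g by omega, relatorArc_add,
      wordChain_append, ← sub_sub, sub_eq_add_neg]
    exact (l1Norm_add_le _ _).trans (by omega)
  intro n
  rw [sub_sub, ← map_add]
  exact hle.trans (hz _)

variable {J : Subgroup (Gamma g)}

/-- A finite union of loops through the given darts carries a periodic extremal path, which follows
all of them because it turns by the smallest gap available. -/
lemma exists_isExtremalPath_of_isCoreDart_relatorArc {x : Cos g J} {l : Letter g}
    (h : ∀ k < 2 * g, IsCoreDart (x <• wordG (relatorArc l k)) (nextLetter^[k] l)) :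
    ∃ (K : Cos g J → Letter g → Prop) (ℓ : ℕ → Letter g) (p : ℕ),
      (∀ v m, K v m → K (v <• letterG m) (invLetter m)) ∧ IsExtremalPath K x ℓ ∧ 2 * g ≤ p ∧
      Function.Periodic ℓ p ∧ x <• wordG (pathWord ℓ p) = x ∧
      ∀ k < 2 * g, ℓ k = nextLetter^[k] l := by
  have hg := genus_pos l
  choose S hS hmem using fun k : Fin (2 * g) => (h k k.2).exists_isLoopSystem
  have hSU := IsLoopSystem.iUnion hS
  have hmemU (k : ℕ) (hk : k < 2 * g) :
      (x <• wordG (relatorArc l k), nextLetter^[k] l) ∈ ⋃ k, S k :=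
    Set.mem_iUnion_of_mem ⟨k, hk⟩ (hmem ⟨k, hk⟩)
  have hzero : x <• wordG (relatorArc l 0) = x := one_smul _ x
  obtain ⟨ℓ, p, hp, hper, hvertex, rfl, hP⟩ :=
    hSU.exists_isExtremalPath (hzero ▸ hmemU 0 (by omega))
  refine ⟨_, ℓ, 2 * g * p, fun v m hv => hSU.inv_mem v m hv, hP, Nat.le_mul_of_pos_right _ hp, ?_,
    ?_, hP.eq_iterate_nextLetter hmemU⟩
  · exact_mod_cast hper.nat_mul (2 * g)
  · have hclosed := (hvertex.nat_mul (2 * g)).eq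
    rw [pathVertex_zero] at hclosed
    exact_mod_cast hclosed

/-- Otherwise the extremal path through the arc has two shortest homologous chains in the annular
cover, differing by the `4g`-gon on the arc, and both fillings vanish on that `4g`-gon. -/
theorem not_isOuterFace_of_isCoreDart_relatorArc {x : Cos g J} {l : Letter g}
    (h : ∀ k < 2 * g, IsCoreDart (x <• wordG (relatorArc l k)) (nextLetter^[k] l)) :
    ¬ IsOuterFace (leftFace x l) := by
  intro hface
  obtain ⟨K, ℓ, p, hK, hP, hgp, hper, hx, hℓ⟩ := exists_isExtremalPath_of_isCoreDart_relatorArc h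
  obtain ⟨C, φ, u, n, rfl, hnorm, -, hmin, hright, houter⟩ := hP.exists_lift_filling hK hper hx
  have hzero (n' : Cos g C →₀ ℤ)
      (hn' : IsMinimalChain (wordChain u (pathWord ℓ p) - boundary g n')) :
      n' (leftFace u l) = 0 := houter n' hn' _ (by rwa [map_leftFace])
  have hval (k : ℕ) (hk : k < 2 * g) : 1 ≤ dartVal (u <• wordG (relatorArc l k)) (nextLetter^[k] l)
      (wordChain u (pathWord ℓ p) - boundary g n : Chain g (Cos g C)) := by
    have hleft := leftFace_op_smul_relatorArc u l k
    have hvertex : u <• wordG (relatorArc l k) = pathVertex u ℓ k :=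
      congrArg (fun w => u <• wordG w) (List.map_congr_left fun i hi =>
        (hℓ i ((List.mem_range.1 hi).trans hk)).symm)
    rw [hvertex, ← hℓ k hk] at hleft ⊢
    have hpath := Traverses.one_le_dartVal
      (traverses_pathWord.2 ⟨k, hk.trans_le hgp, rfl, rfl⟩) (by rwa [length_pathWord])
    rw [Finsupp.coe_sub, map_sub, dartVal_boundary, hleft, hzero n hmin]
    linarith [hright k]
  have hmin' := hmin.sub_boundary_single hval
  rw [sub_sub, ← map_add] at hmin'
  have hone := hzero _ hmin'
  rw [Finsupp.add_apply, hzero n hmin, Finsupp.single_eq_same] at hone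
  omega

theorem length_ne_of_isBlock (hJ : J ≠ ⊥) {b : List (cover g J).D}
    (h : (cover g J).BPath (coreSub g J).sE (coreSub g J).sF b) (hb : (cover g J).IsBlock b) :
    b.length ≠ 2 * g := by
  intro hlen
  obtain ⟨-, hmem, hchain⟩ := h
  obtain ⟨v, l, hwalk⟩ := exists_eq_coverWalk_relatorArc_of_isBlock hb
  rw [hlen] at hwalk
  have hg := genus_pos l
  have hstep := List.isChain_iff_getElem.1 hchain 0 (by omega)
  have hface : IsOuterFace (leftFace v l) := by
    simp only [hwalk, relatorArc, coverWalk_pathWord, List.getElem_map, List.getElem_range]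
      at hstep
    simpa using (bStep_coreSub hJ hstep).2.1
  refine not_isOuterFace_of_isCoreDart_relatorArc (fun k hk => ?_) hface
  have hdart := hmem (dart (v <• wordG (relatorArc l k)) (nextLetter^[k] l))
    (hwalk ▸ mem_coverWalk.2 ⟨_, _, traverses_relatorArc.2 ⟨k, hk, rfl, rfl⟩, rfl⟩)
  rw [dart_fst_mem_coreSub_sE_iff hJ, leftFace_op_smul_relatorArc] at hdart
  exact hdart.resolve_right (not_not.2 hface)

end HalfBlocks

end

theorem statement_11_general {g : ℕ} {J : Subgroup (Gamma g)} (hJ : J ≠ ⊥) :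
    (∀ δ : List ((cover g J).D),
      (cover g J).BCycle (coreSub g J).sE (coreSub g J).sF δ →
        (cover g J).Essential Set.univ Set.univ δ ∧
        conjLen (wordG ((cover g J).wordOf δ)) = δ.length) ∧
    (cover g J).StronglyBoundaryReduced (coreSub g J).sE (coreSub g J).sF := by
  refine ⟨fun δ hδ => ?_, fun b hb hblock => length_ne_of_isBlock hJ hb hblock.1 hblock.2,
    fun bs hbs => not_bCycle_flatten_of_isHalfChain hJ hbs⟩
  obtain ⟨x, ℓ, hper, hwalk, hx, hpath⟩ := exists_isBoundaryPath hJ hδ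
  have hshort := hpath.isCyclicallyShortest (List.length_pos_iff.2 hδ.1.1) hper hx
  constructor
  · rw [hwalk]
    exact hshort.essential_coverWalk hx
  · conv_lhs => rw [hwalk, wordOf_coverWalk]
    exact hpath.conjLen_eq hper hx

/-- For a nontrivial subgroup `J ≤ Γ_g` and `Υ = J\~Σ_g`:
(1) every boundary cycle `δ` of `Core(J)` is an essential closed curve of `Υ`;
(2) the word read by every boundary cycle of `Core(J)` is cyclically shortest
(its length equals the minimal word-length in its `Γ_g`-conjugacy class); and
(3) `Core(J)` is strongly boundary reduced. -/
theorem statement_11 (g : ℕ) (hg : 2 ≤ g) (J : Subgroup (Gamma g)) (hJ : J ≠ ⊥) :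
    (∀ δ : List ((cover g J).D),
      (cover g J).BCycle (coreSub g J).sE (coreSub g J).sF δ →
        (cover g J).Essential Set.univ Set.univ δ ∧
        conjLen (wordG ((cover g J).wordOf δ)) = δ.length) ∧
    (cover g J).StronglyBoundaryReduced (coreSub g J).sE (coreSub g J).sF :=
  statement_11_general hJ

end CS

end
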